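/- arXiv:2211.06920 — 2 statements merged into one kernel-verified Lean document; each statement's English description precedes it below -/
import Mathlib

section
/- For every integer k ≥ 2 and all reals ε > 0 and δ > 0 there exists n_0 such that for all n ≥ n_0, every n-vertex undirected graph G with nonnegative, polynomially bounded edge weights, and every S ⊆ V with |S| = σ, there exists a subgraph G* ⊆ G with at most n^δ·(n + σ·n^{1/k}) edges such that dist_{G*}(s,v) ≤ (4k−5+ε)·dist_G(s,v) for every s ∈ S and v ∈ V. -/
/-!
The spanner is a near-exact preserver of a sparse set `P` of pairs through which every source can
route to every vertex with stretch `4 k - 5`.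

*The pairs* (`exists_pairs`). These follow Thorup–Zwick routing. Take about `n ^ (1 - 1 / k)`
centres `A 0` such that each source `s` has a cluster `{v | d v s < d v (A 0)}` of about
`n ^ (1 / k)` vertices (`exists_centres`), and refine them to a hierarchy
`A 0 ⊇ A 1 ⊇ … ⊇ A (k - 1) = ∅` in which all bunches `{u ∈ A i | d s u < d s (A (i + 1))}` have
size about `n ^ (1 / k)` (`exists_hierarchy`). The set `P` joins each source to its cluster and its
bunches, and each vertex to its nearest point (pivot) in every `A i`. If `v` lies outside the cluster
of `s`, its first pivot is within `d s v`, and whenever its pivot is not in the bunch of `s`, the next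
pivot is farther by at most `2 d s v`. So some pivot at distance at most `(2 k - 3) d s v` lies in a
bunch of `s`, which gives a two-step route of length `(1 + 2 (2 k - 3)) d s v`.
All samples are obtained deterministically from greedy hitting sets (`exists_hitting`).

*The preserver* (`exists_preserver`). For constant `κ`, a hierarchy on the full vertex set with
bunches of size about `n ^ (1 / κ)` has the property that shortest-path trees of all its clusters
together form a graph `F` with few edges that contains an exact shortest path from each vertex to
each point of its bunches (`exists_walk_in_tree`). Moreover, every connected pair is joined by a walk of
stretch `1 + 8 κ / N` with a number of edges outside `F` that depends on `κ` and `N` only. This is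
the hopset property of Thorup–Zwick emulators, proved by induction on the level (`miss_or_near`):
cut a walk into about `N` segments; either all of them are good, or the two extreme bad
ones lead to points of the next level, which either are joined inside `F` or lead to the level after
that. Adding the missing edges for the pairs of `P` costs a constant factor times `|P|`. The argument
never compares weights with an absolute scale, so that arbitrarily small positive weights and zero
weights need no special treatment.

In `n ^ δ` there is room for the factor `n ^ (1 / κ)`, the logarithms and all constants.
-/

open scoped ENNReal

namespace Hopsets

/-- A weighted directed graph on vertex type `V`: a finite edge set together
with a weight function. -/
structure WDigraph (V : Type) where
  edges : Finset (V × V)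
  w : V × V → ℝ

variable {V : Type}

/-- All edge weights are nonnegative. -/
def WDigraph.Nonneg (G : WDigraph V) : Prop := ∀ e, 0 ≤ G.w e

/-- Edge weights are polynomially bounded (degree `q`) in the number of vertices. -/
def WDigraph.PolyBounded [Fintype V] (G : WDigraph V) (q : ℕ) : Prop :=
  ∀ e ∈ G.edges, G.w e ≤ (Fintype.card V : ℝ) ^ q

/-- `G` encodes an undirected graph: edges come in symmetric pairs of equal weight. -/
def WDigraph.Symmetric (G : WDigraph V) : Prop :=
  ∀ e ∈ G.edges, (e.2, e.1) ∈ G.edges ∧ G.w (e.2, e.1) = G.w e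

/-- `G` is unweighted: every edge has weight `1`. -/
def WDigraph.Unweighted (G : WDigraph V) : Prop := ∀ e, G.w e = 1

/-- `IsWalkFrom G u v l` : the list of edges `l` forms a walk from `u` to `v` in `G`. -/
def IsWalkFrom (G : WDigraph V) : V → V → List (V × V) → Prop
  | u, v, [] => u = v
  | u, v, e :: l => e ∈ G.edges ∧ e.1 = u ∧ IsWalkFrom G e.2 v l

/-- The total weight of a walk, as an extended nonnegative real. -/
noncomputable def walkWeight (G : WDigraph V) (l : List (V × V)) : ℝ≥0∞ :=
  ENNReal.ofReal ((l.map G.w).sum)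

/-- `β`-hop-bounded distance: the infimum weight of a `u`-`v` walk with at most `β` edges. -/
noncomputable def WDigraph.hopDist (G : WDigraph V) (β : ℕ) (u v : V) : ℝ≥0∞ :=
  ⨅ l ∈ {l : List (V × V) | IsWalkFrom G u v l ∧ l.length ≤ β}, walkWeight G l

/-- Distance: infimum weight of a `u`-`v` walk (`∞` if there is none). -/
noncomputable def WDigraph.dist (G : WDigraph V) (u v : V) : ℝ≥0∞ :=
  ⨅ l ∈ {l : List (V × V) | IsWalkFrom G u v l}, walkWeight G l

/-- `v` is reachable from `u` in `G`. -/
def WDigraph.Reachable (G : WDigraph V) (u v : V) : Prop :=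
  ∃ l, IsWalkFrom G u v l

/-- The graph `G ∪ H` obtained by adding the edge set `H`, each added edge `(x,y)`
weighted by `dist_G(x,y)`. -/
noncomputable def WDigraph.augment [DecidableEq V] (G : WDigraph V) (H : Finset (V × V)) :
    WDigraph V where
  edges := G.edges ∪ H
  w := fun e => if e ∈ H then (G.dist e.1 e.2).toReal else G.w e

/-- `H` is a `(β,ε)`-hopset for `G`:
`dist_G(u,v) ≤ dist^{(β)}_{G∪H}(u,v) ≤ (1+ε)·dist_G(u,v)` for all `u, v`. -/
def IsHopset [DecidableEq V] (G : WDigraph V) (β : ℕ) (ε : ℝ) (H : Finset (V × V)) : Prop :=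
  ∀ u v, G.dist u v ≤ (G.augment H).hopDist β u v ∧
    (G.augment H).hopDist β u v ≤ ENNReal.ofReal (1 + ε) * G.dist u v

/-- The subgraph of `G` with edge set `E'` (same weights). -/
def WDigraph.sub (G : WDigraph V) (E' : Finset (V × V)) : WDigraph V :=
  ⟨E', G.w⟩

/-- `E'` (a subgraph of `G`) is an `r`-missing `t`-spanner: for every reachable pair
`(u,v)` there is a `u`-`v` walk in `G` of weight at most `t·dist_G(u,v)` with at most
`r` edges outside `E'`. -/
def IsMissingSpanner [DecidableEq V] (G : WDigraph V) (E' : Finset (V × V))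
    (r : ℕ) (t : ℝ) : Prop :=
  ∀ u v, G.Reachable u v → ∃ l, IsWalkFrom G u v l ∧
    walkWeight G l ≤ ENNReal.ofReal t * G.dist u v ∧
    (l.filter (fun e => decide (e ∉ E'))).length ≤ r

end Hopsets

namespace Hopsets

set_option linter.unusedSectionVars false


/-! ### Hitting sets, bunches and clusters -/

section Combinatorics

variable {V : Type} [Fintype V] [DecidableEq V]

/-- Greedy hitting: each newly chosen element of `X` meets at least an average share `m / |X|` of
the sets that have not been hit so far. -/
lemma exists_partial_hitting {ι : Type} (I : Finset ι) (X : Finset V) (f : ι → Finset V)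
    (m : ℕ) (hm : 1 ≤ m) (hf : ∀ i ∈ I, f i ⊆ X ∧ m ≤ (f i).card) (t : ℕ) :
    ∃ T ⊆ X, T.card ≤ t ∧
      ((I.filter (fun i => Disjoint (f i) T)).card : ℝ) ≤ I.card * (1 - m / X.card) ^ t := by
  classical
  induction t with
  | zero => exact ⟨∅, by simp, by simp, by simp⟩
  | succ t ih =>
    obtain ⟨T, hTX, hTc, hT⟩ := ih
    set J := I.filter (fun i => Disjoint (f i) T) with hJ
    rcases I.eq_empty_or_nonempty with rfl | ⟨i0, hi0⟩
    · exact ⟨∅, by simp, by simp, by simp⟩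
    have hmX : m ≤ X.card := (hf i0 hi0).2.trans (Finset.card_le_card (hf i0 hi0).1)
    have hX0 : (0 : ℝ) < X.card := by exact_mod_cast (by omega : 0 < X.card)
    have hXne : X.Nonempty := Finset.card_pos.mp (by omega)
    have hdc : ∑ x ∈ X, (J.filter (fun i => x ∈ f i)).card = ∑ i ∈ J, (f i).card := by
      have := Finset.sum_card_bipartiteAbove_eq_sum_card_bipartiteBelow
        (s := X) (t := J) (fun x i => x ∈ f i)
      simp only [Finset.bipartiteAbove, Finset.bipartiteBelow] at this
      rw [this]
      refine Finset.sum_congr rfl fun i hi => ?_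
      congr 1
      ext x
      simp only [Finset.mem_filter]
      exact ⟨fun h => h.2, fun h => ⟨(hf i (Finset.mem_filter.mp hi).1).1 h, h⟩⟩
    have hge : J.card * m ≤ ∑ i ∈ J, (f i).card := by
      rw [← smul_eq_mul]
      exact Finset.card_nsmul_le_sum _ _ _ fun i hi => (hf i (Finset.mem_filter.mp hi).1).2
    obtain ⟨x, hxX, hx⟩ : ∃ x ∈ X,
        (J.card * m / X.card : ℝ) ≤ ((J.filter (fun i => x ∈ f i)).card : ℝ) := by
      apply Finset.exists_le_of_sum_le hXne
      rw [Finset.sum_const, nsmul_eq_mul, mul_div_cancel₀ _ hX0.ne']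
      rw [← hdc] at hge
      exact_mod_cast hge
    refine ⟨insert x T, Finset.insert_subset hxX hTX, (Finset.card_insert_le _ _).trans (by omega),
      ?_⟩
    have hsub : I.filter (fun i => Disjoint (f i) (insert x T)) =
        J.filter (fun i => ¬ x ∈ f i) := by
      ext i
      simp only [hJ, Finset.mem_filter, Finset.disjoint_insert_right]
      tauto
    have hsplit := Finset.card_filter_add_card_filter_not (s := J) (fun i => x ∈ f i)
    have hsplit' : ((J.filter (fun i => x ∈ f i)).card : ℝ) +
        (J.filter (fun i => ¬ x ∈ f i)).card = J.card := by exact_mod_cast hsplit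
    rw [hsub]
    have h1 : (0 : ℝ) ≤ 1 - m / X.card := by
      rw [sub_nonneg, div_le_one hX0]; exact_mod_cast hmX
    calc ((J.filter (fun i => ¬ x ∈ f i)).card : ℝ) ≤ J.card * (1 - m / X.card) := by
          have : (J.card * m / X.card : ℝ) = J.card * (m / X.card) := by ring
          rw [this] at hx
          linarith
      _ ≤ I.card * (1 - m / X.card) ^ t * (1 - m / X.card) :=
          mul_le_mul_of_nonneg_right hT h1
      _ = _ := by ring

/-- A family of sets of size at least `m` inside `X` has a hitting set of size at most
`|X| (log |I| + 1) / m`. -/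
lemma exists_hitting {ι : Type} (I : Finset ι) (X : Finset V) (f : ι → Finset V)
    (m : ℕ) (hm : 1 ≤ m) (hmX : m ≤ X.card) (hf : ∀ i ∈ I, f i ⊆ X ∧ m ≤ (f i).card) :
    ∃ T ⊆ X, (T.card : ℝ) ≤ X.card * (Real.log I.card + 1) / m ∧
      ∀ i ∈ I, ¬ Disjoint (f i) T := by
  have hm0 : (0 : ℝ) < m := by exact_mod_cast hm
  have hX0 : (0 : ℝ) < X.card := by exact_mod_cast (by omega : 0 < X.card)
  have hlog : 0 ≤ Real.log I.card := Real.log_natCast_nonneg _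
  have hmX' : (m : ℝ) ≤ X.card := by exact_mod_cast hmX
  rcases I.eq_empty_or_nonempty with rfl | hI
  · exact ⟨∅, by simp, by simp; positivity, by simp⟩
  have hI0 : (0 : ℝ) < I.card := by exact_mod_cast hI.card_pos
  set t := ⌊(X.card : ℝ) / m * Real.log I.card⌋₊ + 1 with ht
  obtain ⟨T, hTX, hTc, hT⟩ := exists_partial_hitting I X f m hm hf t
  have ht1 : (X.card : ℝ) / m * Real.log I.card < t := by
    rw [ht]; push_cast; exact Nat.lt_floor_add_one _
  have ht2 : (t : ℝ) ≤ (X.card : ℝ) / m * Real.log I.card + 1 := by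
    rw [ht]; push_cast
    have := Nat.floor_le (a := (X.card : ℝ) / m * Real.log I.card) (by positivity)
    linarith
  refine ⟨T, hTX, ?_, ?_⟩
  · have h1 : (T.card : ℝ) ≤ t := by exact_mod_cast hTc
    have h2 : (1 : ℝ) ≤ X.card / m := by rw [le_div_iff₀ hm0]; linarith
    calc (T.card : ℝ) ≤ (X.card : ℝ) / m * Real.log I.card + X.card / m := by linarith
      _ = _ := by ring
  · have hlt : (I.card : ℝ) * (1 - m / X.card) ^ t < 1 := by
      have h0 : (0 : ℝ) ≤ 1 - m / X.card := by rw [sub_nonneg, div_le_one hX0]; exact hmX'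
      have h1 : (1 - m / X.card : ℝ) ≤ Real.exp (-(m / X.card)) := by
        have := Real.add_one_le_exp (-(m / X.card : ℝ)); linarith
      have h2 : (1 - m / X.card : ℝ) ^ t ≤ Real.exp (-(m / X.card) * t) := by
        calc (1 - m / X.card : ℝ) ^ t ≤ (Real.exp (-(m / X.card))) ^ t :=
              pow_le_pow_left₀ h0 h1 t
          _ = _ := by rw [← Real.exp_nat_mul]; ring_nf
      have h3 : Real.log I.card < m / X.card * t := by
        have := mul_lt_mul_of_pos_left ht1 (show (0 : ℝ) < m / X.card by positivity)
        calc Real.log I.card = m / X.card * (X.card / m * Real.log I.card) := by field_simp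
          _ < _ := this
      calc (I.card : ℝ) * (1 - m / X.card) ^ t ≤ I.card * Real.exp (-(m / X.card) * t) := by
            gcongr
        _ < I.card * Real.exp (-Real.log I.card) := by
            gcongr; linarith
        _ = 1 := by rw [Real.exp_neg, Real.exp_log hI0]; field_simp
    have hc : (I.filter (fun i => Disjoint (f i) T)).card = 0 := by
      have : ((I.filter (fun i => Disjoint (f i) T)).card : ℝ) < 1 := hT.trans_lt hlt
      exact_mod_cast Nat.lt_one_iff.mp (by exact_mod_cast this)
    intro i hi hd
    rw [Finset.card_eq_zero] at hc
    have : i ∈ I.filter (fun i => Disjoint (f i) T) := Finset.mem_filter.mpr ⟨hi, hd⟩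
    simp [hc] at this

/-- The `m` elements of `A` with smallest value of `f`. -/
lemma exists_smallest (A : Finset V) (f : V → ℝ≥0∞) (m : ℕ) (hm : m ≤ A.card) :
    ∃ N ⊆ A, N.card = m ∧ ∀ x ∈ N, ∀ y ∈ A, y ∉ N → f x ≤ f y := by
  induction m with
  | zero => exact ⟨∅, by simp, by simp, by simp⟩
  | succ m ih =>
    obtain ⟨N, hNA, hNc, hN⟩ := ih (by omega)
    have hne : (A \ N).Nonempty := by
      rw [← Finset.card_pos, Finset.card_sdiff_of_subset hNA]; omega
    obtain ⟨z, hz, hzmin⟩ := Finset.exists_min_image (A \ N) f hne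
    rw [Finset.mem_sdiff] at hz
    refine ⟨insert z N, Finset.insert_subset hz.1 hNA, by
      rw [Finset.card_insert_of_notMem hz.2, hNc], ?_⟩
    intro x hx y hy hyn
    rw [Finset.mem_insert, not_or] at hyn
    rcases Finset.mem_insert.mp hx with rfl | hx
    · exact hzmin y (Finset.mem_sdiff.mpr ⟨hy, hyn.2⟩)
    · exact hN x hx y hy hyn.2

open Classical in
/-- The bunch of `v`: the points of `A` that are strictly closer to `v` than every point of `A'`.
For `A' = ∅` this is all of `A`, including points at infinite distance. -/
noncomputable def bunch (d : V → V → ℝ≥0∞) (A A' : Finset V) (v : V) : Finset V :=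
  A.filter (fun u => ∀ a ∈ A', d v u < d v a)

/-- A sample `A'` of `A`, smaller by a factor of about `m`, for which all bunches have size at
most `m`: it hits the `m` points of `A` closest to each vertex. -/
lemma exists_sample (d : V → V → ℝ≥0∞) (A : Finset V) (m : ℕ) (hm : 1 ≤ m) (L : ℝ)
    (hL : Real.log (Fintype.card V) + 1 ≤ L) :
    ∃ A' ⊆ A, (A'.card : ℝ) ≤ A.card * (L / m) ∧ ∀ v, (bunch d A A' v).card ≤ m := by
  have hlog : 0 ≤ Real.log (Fintype.card V) := Real.log_natCast_nonneg _
  have hL0 : 0 ≤ L := by linarith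
  rcases lt_or_ge A.card m with h | h
  · refine ⟨∅, by simp, by simp; positivity, fun v => ?_⟩
    exact (Finset.card_filter_le _ _).trans h.le
  · choose N hNA hNc hN using fun v => exists_smallest A (d v) m h
    obtain ⟨T, hTA, hTc, hT⟩ := exists_hitting Finset.univ A N m hm h
      (fun v _ => ⟨hNA v, (hNc v).ge⟩)
    refine ⟨T, hTA, hTc.trans ?_, fun v => ?_⟩
    · rw [mul_div_assoc, Finset.card_univ]
      gcongr
    · rw [← hNc v]
      apply Finset.card_le_card
      intro u hu
      rw [bunch, Finset.mem_filter] at hu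
      by_contra hun
      obtain ⟨a, haN, haT⟩ := Finset.not_disjoint_iff.mp (hT v (Finset.mem_univ v))
      exact absurd (hN v a haN u hu.1 hun) (not_le.mpr (hu.2 a haT))

/-- The hierarchy `A 0 ⊇ A 1 ⊇ …` of iterated samples. -/
lemma exists_hierarchy (d : V → V → ℝ≥0∞) (A0 : Finset V) (m : ℕ) (hm : 1 ≤ m) (L : ℝ)
    (hL : Real.log (Fintype.card V) + 1 ≤ L) (κ : ℕ) (hκ : A0.card * (L / m) ^ κ < 1) :
    ∃ A : ℕ → Finset V, A 0 = A0 ∧ (∀ i, A (i + 1) ⊆ A i) ∧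
      (∀ i v, (bunch d (A i) (A (i + 1)) v).card ≤ m) ∧ A κ = ∅ := by
  have hlog : 0 ≤ Real.log (Fintype.card V) := Real.log_natCast_nonneg _
  have hL0 : 0 ≤ L := by linarith
  choose next h1 h2 h3 using fun A => exists_sample d A m hm L hL
  have hcard : ∀ i, (((Nat.rec A0 (fun _ A => next A) i : Finset V)).card : ℝ)
      ≤ A0.card * (L / m) ^ i := by
    intro i
    induction i with
    | zero => simp
    | succ i ih =>
      refine (h2 _).trans ?_
      rw [pow_succ, ← mul_assoc]
      exact mul_le_mul_of_nonneg_right ih (by positivity)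
  refine ⟨fun i => Nat.rec A0 (fun _ A => next A) i, rfl, fun i => h1 _, fun i v => h3 _ v, ?_⟩
  rw [← Finset.card_eq_zero]
  have := (hcard κ).trans_lt hκ
  exact Nat.lt_one_iff.mp (by exact_mod_cast this)

open Classical in
/-- The cluster of `s` with respect to `A`: the vertices strictly closer to `s` than to every
point of `A`. -/
noncomputable def cluster (d : V → V → ℝ≥0∞) (A : Finset V) (s : V) : Finset V :=
  Finset.univ.filter (fun v => ∀ a ∈ A, d v s < d v a)

/-- A set `A` of about `t` centres for which every `s ∈ W` has a cluster of size `O(n / t)`.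
One sample bounds the average cluster size over `W`; at most half of `W` has clusters
exceeding twice the average, and these points are treated recursively. -/
lemma exists_centres (d : V → V → ℝ≥0∞) (L t c : ℝ) (ht : 1 ≤ t)
    (hL : Real.log (Fintype.card V) + 1 ≤ L) (hc : 4 * Fintype.card V / t ≤ c) (j : ℕ) :
    ∀ W : Finset V, W.card < 2 ^ j → ∃ A : Finset V, (A.card : ℝ) ≤ j * (L * t) ∧
      ∀ s ∈ W, ((cluster d A s).card : ℝ) ≤ c := by
  classical
  have hlog : 0 ≤ Real.log (Fintype.card V) := Real.log_natCast_nonneg _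
  have hL0 : 1 ≤ L := by linarith
  have ht0 : 0 < t := by linarith
  have hc0 : 0 ≤ c := le_trans (by positivity) hc
  induction j with
  | zero =>
    intro W hW
    have : W = ∅ := by rw [← Finset.card_eq_zero]; omega
    subst this
    exact ⟨∅, by simp, by simp⟩
  | succ j ih =>
    intro W hW
    have hLt : 0 ≤ L * t := by positivity
    rcases le_or_gt (W.card : ℝ) t with h | h
    · refine ⟨W, ?_, fun s hs => ?_⟩
      · push_cast
        have h1 : t ≤ L * t := le_mul_of_one_le_left ht0.le hL0
        have h2 : 0 ≤ (j : ℝ) * (L * t) := by positivity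
        linarith
      · have : cluster d W s = ∅ := by
          rw [cluster, Finset.filter_eq_empty_iff]
          intro v _ hv
          exact absurd (hv s hs) (lt_irrefl _)
        rw [this]; simpa using hc0
    · set m := ⌈(W.card : ℝ) / t⌉₊ with hm
      have hWt : 1 < (W.card : ℝ) / t := by rw [lt_div_iff₀ ht0]; linarith
      have hm1 : (W.card : ℝ) / t ≤ m := Nat.le_ceil _
      have hm2 : (m : ℝ) ≤ 2 * (W.card / t) := by
        have := (Nat.ceil_lt_add_one (a := (W.card : ℝ) / t) (by linarith)).le
        linarith
      have hmpos : 1 ≤ m := by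
        have : (1 : ℝ) < m := by linarith
        exact_mod_cast this.le
      have hm0 : (0 : ℝ) < m := by exact_mod_cast hmpos
      obtain ⟨A', hA'W, hA'c, hA'⟩ := exists_sample d W m hmpos L hL
      set W' := W.filter (fun s => ¬ ((cluster d A' s).card : ℝ) ≤ c) with hW'
      have hWpos : W.Nonempty := by
        rw [← Finset.card_pos]; exact_mod_cast (by linarith : (0 : ℝ) < W.card)
      have hn : (0 : ℝ) < Fintype.card V := by
        obtain ⟨s, _⟩ := hWpos
        exact_mod_cast Fintype.card_pos_iff.mpr ⟨s⟩
      have hdc : ∑ s ∈ W, (cluster d A' s).card = ∑ v, (bunch d W A' v).card := by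
        have := Finset.sum_card_bipartiteAbove_eq_sum_card_bipartiteBelow
          (s := W) (t := (Finset.univ : Finset V)) (fun s v => ∀ a ∈ A', d v s < d v a)
        simpa only [Finset.bipartiteAbove, Finset.bipartiteBelow, cluster, bunch] using this
      have hup : ∑ v, (bunch d W A' v).card ≤ Fintype.card V * m := by
        rw [← smul_eq_mul, ← Finset.card_univ]
        exact Finset.sum_le_card_nsmul _ _ _ fun v _ => hA' v
      have hlow : (W'.card : ℝ) * c ≤ ∑ s ∈ W, ((cluster d A' s).card : ℝ) := by
        calc (W'.card : ℝ) * c ≤ ∑ s ∈ W', ((cluster d A' s).card : ℝ) := by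
              rw [← nsmul_eq_mul]
              exact Finset.card_nsmul_le_sum _ _ _ fun s hs =>
                (not_le.mp (Finset.mem_filter.mp hs).2).le
          _ ≤ _ := Finset.sum_le_sum_of_subset_of_nonneg (Finset.filter_subset _ _)
                (fun _ _ _ => by positivity)
      have hhalf : 2 * W'.card ≤ W.card := by
        have h1 : ∑ s ∈ W, ((cluster d A' s).card : ℝ) ≤ Fintype.card V * m := by
          rw [← hdc] at hup; exact_mod_cast hup
        have h2 : (W'.card : ℝ) * (4 * Fintype.card V / t) ≤
            Fintype.card V * (2 * (W.card / t)) :=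
          calc (W'.card : ℝ) * (4 * Fintype.card V / t) ≤ W'.card * c := by gcongr
            _ ≤ Fintype.card V * m := hlow.trans h1
            _ ≤ _ := by gcongr
        have h3 : (2 * W'.card : ℝ) * (2 * Fintype.card V / t) ≤
            W.card * (2 * Fintype.card V / t) := by
          calc _ = (W'.card : ℝ) * (4 * Fintype.card V / t) := by ring
            _ ≤ _ := h2
            _ = _ := by ring
        have h4 : (2 * W'.card : ℝ) ≤ W.card := le_of_mul_le_mul_right h3 (by positivity)
        exact_mod_cast h4
      obtain ⟨A'', hA''c, hA''⟩ := ih W' (by rw [pow_succ] at hW; omega)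
      refine ⟨A' ∪ A'', ?_, fun s hs => ?_⟩
      · have h1 : ((A' ∪ A'').card : ℝ) ≤ A'.card + A''.card := by
          exact_mod_cast Finset.card_union_le _ _
        have h2 : (W.card : ℝ) * (L / m) ≤ L * t := by
          rw [div_le_iff₀ ht0] at hm1
          rw [← mul_div_assoc, div_le_iff₀ hm0]
          nlinarith
        push_cast
        linarith
      · have hmono : ∀ B, B ⊆ A' ∪ A'' →
            ((cluster d (A' ∪ A'') s).card : ℝ) ≤ (cluster d B s).card := by
          intro B hB
          have : cluster d (A' ∪ A'') s ⊆ cluster d B s := by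
            intro v hv
            rw [cluster, Finset.mem_filter] at hv ⊢
            exact ⟨hv.1, fun a ha => hv.2 a (hB ha)⟩
          exact_mod_cast Finset.card_le_card this
        by_cases hsb : ((cluster d A' s).card : ℝ) ≤ c
        · exact (hmono A' Finset.subset_union_left).trans hsb
        · exact (hmono A'' Finset.subset_union_right).trans
            (hA'' s (Finset.mem_filter.mpr ⟨hs, hsb⟩))

end Combinatorics

/-! ### Walks and distances -/

section Walks

variable {V : Type} [DecidableEq V] {G : WDigraph V}

lemma IsWalkFrom.append {x y z : V} {l₁ l₂ : List (V × V)} (h₁ : IsWalkFrom G x y l₁)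
    (h₂ : IsWalkFrom G y z l₂) : IsWalkFrom G x z (l₁ ++ l₂) := by
  induction l₁ generalizing x with
  | nil => cases h₁; exact h₂
  | cons e l ih => exact ⟨h₁.1, h₁.2.1, ih h₁.2.2⟩

lemma IsWalkFrom.mem_edges {x y : V} {l : List (V × V)} (h : IsWalkFrom G x y l) :
    ∀ e ∈ l, e ∈ G.edges := by
  induction l generalizing x with
  | nil => simp
  | cons e l ih =>
    intro e' he'
    rcases List.mem_cons.mp he' with rfl | he'
    · exact h.1
    · exact ih h.2.2 e' he'

lemma IsWalkFrom.of_mem {G' : WDigraph V} {x y : V} {l : List (V × V)} (h : IsWalkFrom G x y l)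
    (hl : ∀ e ∈ l, e ∈ G'.edges) : IsWalkFrom G' x y l := by
  induction l generalizing x with
  | nil => exact h
  | cons e l ih =>
    exact ⟨hl e (by simp), h.2.1, ih h.2.2 fun e' he' => hl e' (by simp [he'])⟩

lemma IsWalkFrom.reverse (hG : G.Symmetric) {x y : V} {l : List (V × V)}
    (h : IsWalkFrom G x y l) : IsWalkFrom G y x (l.map Prod.swap).reverse := by
  induction l generalizing x with
  | nil => exact Eq.symm h
  | cons e l ih =>
    rw [List.map_cons, List.reverse_cons]
    exact (ih h.2.2).append ⟨(hG e h.1).1, rfl, h.2.1⟩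

lemma sum_reverse (hG : G.Symmetric) {l : List (V × V)} (hl : ∀ e ∈ l, e ∈ G.edges) :
    ((l.map Prod.swap).reverse.map G.w).sum = (l.map G.w).sum := by
  rw [← List.map_reverse, List.map_map, List.map_reverse, List.sum_reverse]
  congr 1
  exact List.map_congr_left fun e he => (hG e (hl e he)).2

lemma sum_nonneg (hG : G.Nonneg) (l : List (V × V)) : 0 ≤ (l.map G.w).sum :=
  List.sum_nonneg fun x hx => by
    obtain ⟨e, _, rfl⟩ := List.mem_map.mp hx
    exact hG e

/-- There is a walk of weight at most `W` from `x` to `y`. -/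
def Within (G : WDigraph V) (x y : V) (W : ℝ) : Prop :=
  ∃ l, IsWalkFrom G x y l ∧ (l.map G.w).sum ≤ W

/-- There is a walk of weight at most `W` from `x` to `y` that uses at most `h` edges
outside `F`. -/
def MissWithin (G : WDigraph V) (F : Finset (V × V)) (h : ℕ) (x y : V) (W : ℝ) : Prop :=
  ∃ l, IsWalkFrom G x y l ∧ (l.map G.w).sum ≤ W ∧ l.countP (fun e => decide (e ∉ F)) ≤ h

lemma Within.nonneg (hG : G.Nonneg) {x y : V} {W : ℝ} (h : Within G x y W) : 0 ≤ W := by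
  obtain ⟨l, _, hl⟩ := h
  exact (sum_nonneg hG l).trans hl

lemma Within.mono {x y : V} {W W' : ℝ} (h : Within G x y W) (hW : W ≤ W') : Within G x y W' := by
  obtain ⟨l, h1, h2⟩ := h
  exact ⟨l, h1, h2.trans hW⟩

lemma Within.trans {x y z : V} {W W' : ℝ} (h : Within G x y W) (h' : Within G y z W') :
    Within G x z (W + W') := by
  obtain ⟨l, h1, h2⟩ := h
  obtain ⟨l', h1', h2'⟩ := h'
  refine ⟨l ++ l', h1.append h1', ?_⟩
  rw [List.map_append, List.sum_append]
  linarith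

lemma Within.symm (hG : G.Symmetric) {x y : V} {W : ℝ} (h : Within G x y W) :
    Within G y x W := by
  obtain ⟨l, h1, h2⟩ := h
  exact ⟨_, h1.reverse hG, (sum_reverse hG h1.mem_edges).trans_le h2⟩

lemma Within.refl (x : V) : Within G x x 0 := ⟨[], rfl, by simp⟩

lemma Within.edge {e : V × V} (he : e ∈ G.edges) : Within G e.1 e.2 (G.w e) :=
  ⟨[e], ⟨he, rfl, rfl⟩, by simp⟩

variable {F : Finset (V × V)}

lemma MissWithin.within {h : ℕ} {x y : V} {W : ℝ} (H : MissWithin G F h x y W) :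
    Within G x y W := by
  obtain ⟨l, h1, h2, _⟩ := H
  exact ⟨l, h1, h2⟩

lemma MissWithin.mono {h h' : ℕ} {x y : V} {W W' : ℝ} (H : MissWithin G F h x y W)
    (hh : h ≤ h') (hW : W ≤ W') : MissWithin G F h' x y W' := by
  obtain ⟨l, h1, h2, h3⟩ := H
  exact ⟨l, h1, h2.trans hW, h3.trans hh⟩

lemma MissWithin.trans {h h' : ℕ} {x y z : V} {W W' : ℝ} (H : MissWithin G F h x y W)
    (H' : MissWithin G F h' y z W') : MissWithin G F (h + h') x z (W + W') := by
  obtain ⟨l, h1, h2, h3⟩ := H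
  obtain ⟨l', h1', h2', h3'⟩ := H'
  refine ⟨l ++ l', h1.append h1', ?_, ?_⟩
  · rw [List.map_append, List.sum_append]; linarith
  · rw [List.countP_append]; omega

lemma MissWithin.symm (hG : G.Symmetric) (hF : ∀ e ∈ F, e.swap ∈ F) {h : ℕ} {x y : V} {W : ℝ}
    (H : MissWithin G F h x y W) : MissWithin G F h y x W := by
  obtain ⟨l, h1, h2, h3⟩ := H
  refine ⟨_, h1.reverse hG, (sum_reverse hG h1.mem_edges).trans_le h2, ?_⟩
  rw [List.countP_reverse, List.countP_map]
  refine le_trans (List.countP_mono_left fun e _ he => ?_) h3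
  simp only [Function.comp_apply, decide_eq_true_eq] at he ⊢
  exact fun h => he (hF e h)

lemma MissWithin.edge {e : V × V} (he : e ∈ G.edges) :
    MissWithin G F 1 e.1 e.2 (G.w e) :=
  ⟨[e], ⟨he, rfl, rfl⟩, by simp, List.countP_le_length⟩

lemma MissWithin.refl (x : V) : MissWithin G F 0 x x 0 := ⟨[], rfl, by simp, by simp⟩

lemma dist_le_walkWeight {x y : V} {l : List (V × V)} (h : IsWalkFrom G x y l) :
    G.dist x y ≤ walkWeight G l := iInf₂_le l h

lemma walkWeight_cons (hG : G.Nonneg) (e : V × V) (l : List (V × V)) :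
    walkWeight G (e :: l) = ENNReal.ofReal (G.w e) + walkWeight G l := by
  rw [walkWeight, List.map_cons, List.sum_cons, ENNReal.ofReal_add (hG e) (sum_nonneg hG l)]
  rfl

/-- The infimum defining the distance is attained: walk weights lie in the additive monoid
generated by finitely many nonnegative reals, which is well-ordered. -/
lemma exists_shortest (hG : G.Nonneg) {x y : V} (h : G.Reachable x y) :
    ∃ l, IsWalkFrom G x y l ∧ walkWeight G l = G.dist x y := by
  set M := AddSubmonoid.closure ((fun e => G.w e) '' (G.edges : Set (V × V))) with hM
  have hpwo : (M : Set ℝ).IsPWO := by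
    apply Set.IsPWO.addSubmonoid_closure
    · rintro _ ⟨e, _, rfl⟩; exact hG e
    · exact (G.edges.finite_toSet.image _).isPWO
  set T : Set ℝ := {r | ∃ l, IsWalkFrom G x y l ∧ (l.map G.w).sum = r} with hT
  have hTM : T ⊆ M := by
    rintro _ ⟨l, hl, rfl⟩
    refine AddSubmonoid.list_sum_mem _ fun r hr => ?_
    obtain ⟨e, he, rfl⟩ := List.mem_map.mp hr
    exact AddSubmonoid.subset_closure ⟨e, hl.mem_edges e he, rfl⟩
  have hwf : T.IsWF := (hpwo.mono hTM).isWF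
  have hne : T.Nonempty := by
    obtain ⟨l, hl⟩ := h
    exact ⟨_, l, hl, rfl⟩
  obtain ⟨l, hl, hmin⟩ := hwf.min_mem hne
  refine ⟨l, hl, le_antisymm (le_iInf₂ fun l' hl' => ?_) (dist_le_walkWeight hl)⟩
  refine ENNReal.ofReal_le_ofReal ?_
  rw [hmin]
  exact hwf.min_le hne ⟨l', hl', rfl⟩

lemma reachable_of_dist_ne_top {x y : V} (h : G.dist x y ≠ ⊤) : G.Reachable x y := by
  by_contra hn
  apply h
  rw [WDigraph.dist, iInf_eq_top]
  intro l
  rw [iInf_eq_top]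
  intro hl
  exact absurd ⟨l, hl⟩ hn

lemma Within.dist_le {x y : V} {W : ℝ} (h : Within G x y W) :
    G.dist x y ≤ ENNReal.ofReal W := by
  obtain ⟨l, h1, h2⟩ := h
  exact (dist_le_walkWeight h1).trans (ENNReal.ofReal_le_ofReal h2)

lemma within_of_dist_le (hG : G.Nonneg) {x y : V} {W : ℝ} (hW : 0 ≤ W)
    (h : G.dist x y ≤ ENNReal.ofReal W) : Within G x y W := by
  obtain ⟨l, h1, h2⟩ := exists_shortest hG
    (reachable_of_dist_ne_top (ne_top_of_le_ne_top ENNReal.ofReal_ne_top h))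
  refine ⟨l, h1, ?_⟩
  rw [← h2, walkWeight] at h
  exact (ENNReal.ofReal_le_ofReal_iff hW).mp h

lemma Within.of_dist_le (hG : G.Nonneg) {x y a b : V} {W : ℝ} (h : Within G x y W)
    (h' : G.dist a b ≤ G.dist x y) : Within G a b W :=
  within_of_dist_le hG (h.nonneg hG) (h'.trans h.dist_le)

lemma Within.reachable {x y : V} {W : ℝ} (h : Within G x y W) : G.Reachable x y := by
  obtain ⟨l, h1, _⟩ := h
  exact ⟨l, h1⟩

end Walks

/-! ### Shortest-path trees of the clusters -/

section Trees

variable {V : Type} [DecidableEq V] {G : WDigraph V}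

/-- Among the shortest walks there is one with fewest edges; ties in weight, which zero-weight
edges produce, are thus broken consistently along the walk. -/
lemma exists_shortest_min_length (hG : G.Nonneg) {x y : V} (h : G.Reachable x y) :
    ∃ l, (IsWalkFrom G x y l ∧ walkWeight G l = G.dist x y) ∧
      ∀ l', IsWalkFrom G x y l' ∧ walkWeight G l' = G.dist x y → l.length ≤ l'.length := by
  classical
  have hex : ∃ n, ∃ l, (IsWalkFrom G x y l ∧ walkWeight G l = G.dist x y) ∧ l.length = n := by
    obtain ⟨l, hl⟩ := exists_shortest hG h
    exact ⟨_, l, hl, rfl⟩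
  obtain ⟨l, hl, hn⟩ := Nat.find_spec hex
  exact ⟨l, hl, fun l' hl' => hn.trans_le (Nat.find_min' hex ⟨l', hl', rfl⟩)⟩

open Classical in
/-- A shortest walk from `x` to `y` with fewest edges (the empty list if `y` is unreachable). -/
noncomputable def short (G : WDigraph V) (x y : V) : List (V × V) :=
  if h : ∃ l, (IsWalkFrom G x y l ∧ walkWeight G l = G.dist x y) ∧
      ∀ l', IsWalkFrom G x y l' ∧ walkWeight G l' = G.dist x y → l.length ≤ l'.length
  then h.choose else []

lemma short_spec (hG : G.Nonneg) {x y : V} (h : G.Reachable x y) :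
    (IsWalkFrom G x y (short G x y) ∧ walkWeight G (short G x y) = G.dist x y) ∧
      ∀ l', IsWalkFrom G x y l' ∧ walkWeight G l' = G.dist x y →
        (short G x y).length ≤ l'.length := by
  have hex := exists_shortest_min_length hG h
  rw [short, dif_pos hex]
  exact hex.choose_spec

lemma short_subset (x y : V) : ∀ e ∈ short G x y, e ∈ G.edges := by
  rw [short]
  split_ifs with h
  · exact h.choose_spec.1.1.mem_edges
  · simp

/-- The first edge, in both orientations, of the chosen shortest walk from `x` to `y`. -/
noncomputable def firstEdge (G : WDigraph V) (x y : V) : Finset (V × V) :=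
  (short G x y).head?.toFinset ∪ (short G x y).head?.toFinset.image Prod.swap

lemma card_firstEdge (x y : V) : (firstEdge G x y).card ≤ 2 := by
  have h : (short G x y).head?.toFinset.card ≤ 1 := by
    rw [Option.card_toFinset]; cases (short G x y).head? <;> simp
  have := Finset.card_union_le (short G x y).head?.toFinset
    ((short G x y).head?.toFinset.image Prod.swap)
  have h' := Finset.card_image_le (s := (short G x y).head?.toFinset) (f := Prod.swap)
  rw [firstEdge]
  omega

lemma firstEdge_swap (x y : V) : ∀ e ∈ firstEdge G x y, e.swap ∈ firstEdge G x y := by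
  intro e he
  rw [firstEdge, Finset.mem_union, Finset.mem_image] at he ⊢
  rcases he with he | ⟨e', he', rfl⟩
  · exact Or.inr ⟨e, he, rfl⟩
  · exact Or.inl (by simpa using he')

lemma firstEdge_subset (hS : G.Symmetric) (x y : V) : firstEdge G x y ⊆ G.edges := by
  have h1 : ∀ e ∈ (short G x y).head?.toFinset, e ∈ G.edges := by
    intro e he
    rw [Option.mem_toFinset] at he
    exact short_subset x y e (List.mem_of_mem_head? he)
  intro e he
  rw [firstEdge, Finset.mem_union, Finset.mem_image] at he
  rcases he with he | ⟨e', he', rfl⟩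
  · exact h1 e he
  · exact (hS e' (h1 e' he')).1

/-- If `F` contains the first edges of the walks from `v` to the points of its bunch, for all `v`,
then it contains a shortest walk from `v` to each such point: the next vertex on
a shortest walk from `v` to `u` again has `u` in its bunch. -/
lemma exists_walk_in_tree [Fintype V] (hG : G.Nonneg) (A A' : Finset V) (F : Finset (V × V))
    (hF : ∀ v, ∀ u ∈ bunch G.dist A A' v, firstEdge G v u ⊆ F) (n : ℕ) :
    ∀ v, ∀ u ∈ bunch G.dist A A' v, G.Reachable v u → (short G v u).length ≤ n →
      ∃ l, IsWalkFrom G v u l ∧ walkWeight G l = G.dist v u ∧ ∀ e ∈ l, e ∈ F := by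
  induction n with
  | zero =>
    intro v u hu hr hn
    have hs := (short_spec hG hr).1
    have : short G v u = [] := List.length_eq_zero_iff.mp (Nat.le_zero.mp hn)
    rw [this] at hs
    exact ⟨[], hs.1, hs.2, by simp⟩
  | succ n ih =>
    intro v u hu hr hn
    obtain ⟨⟨hw, hd⟩, hmin⟩ := short_spec hG hr
    have hFe := hF v u hu
    rw [firstEdge] at hFe
    rcases hl : short G v u with _ | ⟨e, l⟩
    · rw [hl] at hw hd
      exact ⟨[], hw, hd, by simp⟩
    rw [hl] at hw hd hn hFe
    obtain ⟨he, rfl, hw'⟩ := hw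
    rw [walkWeight_cons hG] at hd
    have hr' : G.Reachable e.2 u := ⟨l, hw'⟩
    have hge : ∀ a, G.dist e.1 a ≤ ENNReal.ofReal (G.w e) + G.dist e.2 a := by
      intro a
      by_cases ht : G.dist e.2 a = ⊤
      · simp [ht]
      obtain ⟨l', hl', hd'⟩ := exists_shortest hG (reachable_of_dist_ne_top ht)
      rw [← hd', ← walkWeight_cons hG]
      exact dist_le_walkWeight ⟨he, rfl, hl'⟩
    have hopt : walkWeight G l = G.dist e.2 u := by
      refine le_antisymm ?_ (dist_le_walkWeight hw')
      have := hge u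
      rw [← hd] at this
      exact (ENNReal.add_le_add_iff_left ENNReal.ofReal_ne_top).mp this
    have hu' : u ∈ bunch G.dist A A' e.2 := by
      rw [bunch, Finset.mem_filter] at hu ⊢
      refine ⟨hu.1, fun a ha => ?_⟩
      have h1 := (hu.2 a ha).trans_le (hge a)
      rw [← hd, hopt] at h1
      exact lt_of_add_lt_add_left h1
    have hlen : (short G e.2 u).length ≤ n := by
      have := (short_spec hG hr').2 l ⟨hw', hopt⟩
      simp only [List.length_cons] at hn
      omega
    obtain ⟨l', hl', hd', hF'⟩ := ih e.2 u hu' hr' hlen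
    refine ⟨e :: l', ⟨he, rfl, hl'⟩, ?_, ?_⟩
    · rw [walkWeight_cons hG, hd', ← hopt, hd]
    · intro e' he'
      rcases List.mem_cons.mp he' with rfl | he'
      · exact hFe (Finset.mem_union_left _ (by simp))
      · exact hF' e' he'

end Trees

/-! ### Few missing edges suffice -/

section Hops

variable {V : Type} [DecidableEq V] {G : WDigraph V}

/-- `Seg G D n x y W`: there is a walk of weight at most `W` from `x` to `y` which consists of
`n + 1` segments of weight at most `D` each, joined by `n` single edges. -/
def Seg (G : WDigraph V) (D : ℝ) : ℕ → V → V → ℝ → Prop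
  | 0, x, y, W => Within G x y W ∧ W ≤ D
  | n + 1, x, y, W => ∃ u v W₁ W₂, Within G x u W₁ ∧ W₁ ≤ D ∧ (u, v) ∈ G.edges ∧
      Seg G D n v y W₂ ∧ W₁ + G.w (u, v) + W₂ ≤ W

lemma Seg.within {D : ℝ} {n : ℕ} {x y : V} {W : ℝ} (h : Seg G D n x y W) : Within G x y W := by
  induction n generalizing x W with
  | zero => exact h.1
  | succ n ih =>
    obtain ⟨u, v, W₁, W₂, h1, _, h3, h4, h5⟩ := h
    exact ((h1.trans (Within.edge h3)).trans (ih h4)).mono h5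

/-- Greedy segmentation: a segment is closed only when the next edge would make it heavier than
`D`, so `n` closed segments together with the following edges weigh more than `n * D`. -/
lemma exists_seg (hG : G.Nonneg) {D : ℝ} (hD : 0 ≤ D) {y : V} (l : List (V × V)) :
    ∀ {u : V}, IsWalkFrom G u y l → ∀ {x : V} {W₁ : ℝ}, Within G x u W₁ → W₁ ≤ D →
      ∃ n : ℕ, (n = 0 ∨ n * D < W₁ + (l.map G.w).sum) ∧
        Seg G D n x y (W₁ + (l.map G.w).sum) := by
  induction l with
  | nil =>
    intro u hu x W₁ h hW
    cases hu
    exact ⟨0, Or.inl rfl, by simpa [Seg] using ⟨h, hW⟩⟩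
  | cons e l ih =>
    intro u hu x W₁ h hW
    obtain ⟨he, rfl, hl⟩ := hu
    rw [List.map_cons, List.sum_cons, ← add_assoc]
    rcases le_or_gt (W₁ + G.w e) D with hle | hgt
    · exact ih hl (h.trans (Within.edge he)) hle
    · obtain ⟨n, hn, hs⟩ := ih hl (Within.refl e.2) hD
      rw [zero_add] at hn hs
      refine ⟨n + 1, Or.inr ?_, e.1, e.2, W₁, _, h, hW, he, hs, le_rfl⟩
      have h0 := sum_nonneg hG l
      push_cast
      rcases hn with rfl | hn
      · push_cast; linarith
      · linarith

variable {F : Finset (V × V)}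

/-- If every segment is either good (traversable with `h` missing edges at stretch `c`) or has
both endpoints near `Z`, then either the whole walk is good, or only the stretch from the first
endpoint `u` to the last endpoint `v` of the bad segments is left to be bridged. -/
lemma Seg.combine (hG : G.Nonneg) {D c : ℝ} (hc : 1 ≤ c) {h : ℕ} {Z : Finset V}
    (H : ∀ a b W, Within G a b W → W ≤ D → MissWithin G F h a b (c * W) ∨
      ((∃ z ∈ Z, MissWithin G F h a z (2 * D)) ∧ ∃ z ∈ Z, MissWithin G F h b z (2 * D)))
    {y : V} (n : ℕ) : ∀ {x : V} {W : ℝ}, Seg G D n x y W →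
      MissWithin G F ((h + 1) * n + h) x y (c * W) ∨
      ∃ u v W₁ W₂ W₃, W₁ + W₂ + W₃ ≤ W ∧ Within G x u W₁ ∧ MissWithin G F ((h + 1) * n) x u (c * W₁) ∧
        Within G u v W₂ ∧ MissWithin G F ((h + 1) * n) v y (c * W₃) ∧
        (∃ z ∈ Z, MissWithin G F h u z (2 * D)) ∧ ∃ z ∈ Z, MissWithin G F h v z (2 * D) := by
  induction n with
  | zero =>
    intro x W hs
    rcases H x y W hs.1 hs.2 with hgood | ⟨h1, h2⟩
    · exact Or.inl (by simpa using hgood)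
    · refine Or.inr ⟨x, y, 0, W, 0, by simp, Within.refl x, ?_, hs.1, ?_, h1, h2⟩
      · simpa using MissWithin.refl x
      · simpa using MissWithin.refl y
  | succ n ih =>
    rintro x W ⟨a, b, W₁, W₂, hxa, hW₁, hab, hs, hW⟩
    have hw : 0 ≤ G.w (a, b) := hG _
    have hcw : G.w (a, b) ≤ c * G.w (a, b) := le_mul_of_one_le_left hw hc
    have hcW : c * (W₁ + G.w (a, b) + W₂) ≤ c * W := mul_le_mul_of_nonneg_left hW (by linarith)
    rcases H x a W₁ hxa hW₁ with hgood | ⟨h1, h2⟩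
    · have hpre : MissWithin G F (h + 1) x b (c * (W₁ + G.w (a, b))) :=
        (hgood.trans (MissWithin.edge hab)).mono le_rfl (by rw [mul_add]; simpa using hcw)
      rcases ih hs with hrest | ⟨u, v, U₁, U₂, U₃, hU, k0, k1, k2, k3, k4, k5⟩
      · refine Or.inl ((hpre.trans hrest).mono (by ring_nf; omega) ?_)
        linarith
      · refine Or.inr ⟨u, v, W₁ + G.w (a, b) + U₁, U₂, U₃, by linarith,
          (hxa.trans (Within.edge hab)).trans k0,
          (hpre.trans k1).mono (by ring_nf; omega) (by linarith), k2,
          k3.mono (by ring_nf; omega) le_rfl, k4, k5⟩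
    · rcases ih hs with hrest | ⟨u, v, U₁, U₂, U₃, hU, k0, k1, k2, k3, k4, k5⟩
      · refine Or.inr ⟨x, a, 0, W₁, G.w (a, b) + W₂, by linarith, Within.refl x,
          (MissWithin.refl x).mono (Nat.zero_le _) (by simp), hxa,
          ((MissWithin.edge hab).trans hrest).mono (by ring_nf; omega) (by linarith), h1, h2⟩
      · exact Or.inr ⟨x, v, 0, W₁ + G.w (a, b) + (U₁ + U₂), U₃, by linarith, Within.refl x,
          (MissWithin.refl x).mono (Nat.zero_le _) (by simp),
          (hxa.trans (Within.edge hab)).trans (k0.trans k2),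
          k3.mono (by ring_nf; omega) le_rfl, h1, k5⟩

/-- Bound on the number of missing edges after `i` levels of the hierarchy. -/
def hopBound (N : ℕ) : ℕ → ℕ
  | 0 => 0
  | i + 1 => 2 * (hopBound N i + 1) * (N + 1)

/-- The inductive heart of the hopset argument. At level `i`, either a walk of weight `W` can be
traversed at stretch `1 + 8 i / N`, or its start is within `2 W` of `A (i + 1)`, in both cases
with a bounded number of missing edges. -/
lemma miss_or_near (hS : G.Symmetric) (hG : G.Nonneg) (hF : ∀ e ∈ F, e.swap ∈ F)
    (A : ℕ → Finset V) (hA0 : ∀ v, v ∈ A 0)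
    (key : ∀ i v W, ∀ p ∈ A i, Within G v p W →
      MissWithin G F 0 v p W ∨ ∃ a ∈ A (i + 1), MissWithin G F 0 v a W)
    (N : ℕ) (i : ℕ) (hi : 8 * (i + 1) ≤ N) : ∀ x y W, Within G x y W →
      MissWithin G F (hopBound N i) x y ((1 + 8 * i / N) * W) ∨
      ∃ z ∈ A (i + 1), MissWithin G F (hopBound N i) x z (2 * W) := by
  induction i with
  | zero =>
    intro x y W hW
    have hW0 := hW.nonneg hG
    rcases key 0 x W y (hA0 y) hW with h | ⟨a, ha, h⟩
    · exact Or.inl (by simpa [hopBound] using h)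
    · exact Or.inr ⟨a, ha, h.mono le_rfl (by linarith)⟩
  | succ i ih =>
    intro x y W hW
    have ih := ih (by omega)
    have hW0 := hW.nonneg hG
    have hN : (0 : ℝ) < N := by exact_mod_cast (by omega : 0 < N)
    have hiN : (8 * (i + 2) : ℝ) ≤ N := by exact_mod_cast hi
    set c : ℝ := 1 + 8 * i / N with hc
    set D : ℝ := W / N with hD
    have hND : N * D = W := by rw [hD]; field_simp
    have hD0 : 0 ≤ D := by positivity
    have hc1 : 1 ≤ c := by rw [hc, le_add_iff_nonneg_right]; positivity
    have hcW : (1 + 8 * ((i + 1 : ℕ) : ℝ) / N) * W = c * W + 8 * D := by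
      rw [hc, hD]; push_cast; field_simp; ring
    have hc2 : c * W + 6 * D ≤ 2 * W := by
      have : c * W + 8 * D = W + 8 * (i + 1) * D := by rw [hc, hD]; field_simp; ring
      have h2 : (8 * (i + 2) : ℝ) * D ≤ N * D := mul_le_mul_of_nonneg_right hiN hD0
      rw [hND] at h2
      linarith
    have H : ∀ a b U, Within G a b U → U ≤ D → MissWithin G F (hopBound N i) a b (c * U) ∨
      ((∃ z ∈ A (i + 1), MissWithin G F (hopBound N i) a z (2 * D)) ∧
        ∃ z ∈ A (i + 1), MissWithin G F (hopBound N i) b z (2 * D)) := by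
      intro a b U hU hUD
      rcases ih a b U hU with h | ⟨z, hz, h⟩
      · exact Or.inl h
      rcases ih b a U (hU.symm hS) with h' | ⟨z', hz', h'⟩
      · exact Or.inl (h'.symm hS hF)
      · exact Or.inr ⟨⟨z, hz, h.mono le_rfl (by linarith)⟩,
          ⟨z', hz', h'.mono le_rfl (by linarith)⟩⟩
    obtain ⟨l, hl, hlW⟩ := hW
    obtain ⟨n, hn, hs⟩ := exists_seg hG hD0 l hl (Within.refl x) hD0
    rw [zero_add] at hn hs
    have hnN : n ≤ N := by
      rcases hn with rfl | hn
      · exact Nat.zero_le _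
      · have h1 : (n : ℝ) * D < N * D := by rw [hND]; linarith
        exact_mod_cast (lt_of_mul_lt_mul_right h1 hD0).le
    have hb : (hopBound N i + 1) * n ≤ (hopBound N i + 1) * N := Nat.mul_le_mul_left _ hnN
    have hcl : c * (l.map G.w).sum ≤ c * W := mul_le_mul_of_nonneg_left hlW (by linarith)
    have hstep : hopBound N (i + 1) =
        2 * ((hopBound N i + 1) * N) + 2 * hopBound N i + 2 := by
      rw [hopBound]; ring
    rcases hs.combine hG hc1 H with hgood |
      ⟨u, v, W₁, W₂, W₃, hsum, -, k1, k2, k3, ⟨zu, hzu, k4⟩, ⟨zv, hzv, k5⟩⟩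
    · exact Or.inl (hgood.mono (by omega) (by rw [hcW]; linarith))
    · have hW₂ := k2.nonneg hG
      have hW₃ : 0 ≤ c * W₃ := k3.within.nonneg hG
      have hcW₂ : W₂ ≤ c * W₂ := le_mul_of_one_le_left hW₂ hc1
      have hcs : c * (W₁ + W₂ + W₃) ≤ c * W :=
        mul_le_mul_of_nonneg_left (hsum.trans hlW) (by linarith)
      have hz : Within G zu zv (2 * D + W₂ + 2 * D) :=
        ((k4.within.symm hS).trans k2).trans k5.within
      rcases key (i + 1) zu _ zv hzv hz with hnear | ⟨a, ha, hnear⟩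
      · refine Or.inl (((((k1.trans k4).trans hnear).trans (k5.symm hS hF)).trans k3).mono
          (by omega) ?_)
        rw [hcW]
        linarith
      · exact Or.inr ⟨a, ha, ((k1.trans k4).trans hnear).mono (by omega) (by linarith)⟩

/-- Near-exact pairwise preservers: at stretch `1 + 8 κ / N`, all pairs of `P` are preserved by
the trees of the clusters together with boundedly many additional edges per pair. -/
lemma exists_preserver [Fintype V] (hS : G.Symmetric) (hG : G.Nonneg) (κ N m : ℕ)
    (hN : 8 * (κ + 1) ≤ N) (hm : 1 ≤ m) (L : ℝ) (hL : Real.log (Fintype.card V) + 1 ≤ L)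
    (hκ : Fintype.card V * (L / m) ^ κ < 1) (P : Finset (V × V)) :
    ∃ E ⊆ G.edges, (∀ e ∈ E, (e.2, e.1) ∈ E) ∧
      E.card ≤ 2 * κ * Fintype.card V * m + 2 * hopBound N κ * P.card ∧
      ∀ p ∈ P, ∀ W, Within G p.1 p.2 W → Within (G.sub E) p.1 p.2 ((1 + 8 * κ / N) * W) := by
  classical
  obtain ⟨A, hA0, hAsub, hAb, hAκ⟩ := exists_hierarchy G.dist Finset.univ m hm L hL κ
    (by rwa [Finset.card_univ])
  have hAmono : Antitone A := antitone_nat_of_succ_le hAsub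
  have hAempty : ∀ i, κ ≤ i → A i = ∅ := fun i hi =>
    Finset.subset_empty.mp (hAκ ▸ hAmono hi)
  set F : Finset (V × V) := (Finset.range κ).biUnion fun i => Finset.univ.biUnion fun v =>
    (bunch G.dist (A i) (A (i + 1)) v).biUnion fun u => firstEdge G v u with hFdef
  have hFsub : F ⊆ G.edges := by
    intro e he
    simp only [hFdef, Finset.mem_biUnion] at he
    obtain ⟨_, _, _, _, _, _, h⟩ := he
    exact firstEdge_subset hS _ _ h
  have hFswap : ∀ e ∈ F, e.swap ∈ F := by
    intro e he
    simp only [hFdef, Finset.mem_biUnion] at he ⊢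
    obtain ⟨i, hi, v, hv, u, hu, h⟩ := he
    exact ⟨i, hi, v, hv, u, hu, firstEdge_swap _ _ _ h⟩
  have hFcard : F.card ≤ 2 * κ * Fintype.card V * m := by
    have h1 : ∀ i v, ((bunch G.dist (A i) (A (i + 1)) v).biUnion
        fun u => firstEdge G v u).card ≤ m * 2 := fun i v =>
      (Finset.card_biUnion_le_card_mul _ _ 2 fun u _ => card_firstEdge _ _).trans
        (Nat.mul_le_mul_right _ (hAb i v))
    have h2 := Finset.card_biUnion_le_card_mul (Finset.range κ) (fun i =>
      Finset.univ.biUnion fun v => (bunch G.dist (A i) (A (i + 1)) v).biUnion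
        fun u => firstEdge G v u) (Fintype.card V * (m * 2)) fun i _ => by
          rw [← Finset.card_univ]
          exact Finset.card_biUnion_le_card_mul _ _ _ fun v _ => h1 i v
    rw [Finset.card_range] at h2
    exact h2.trans_eq (by ring)
  -- From a point of `A i`, one reaches either it or a no farther point of `A (i + 1)` inside `F`.
  have key0 : ∀ i v W, ∀ p ∈ A i, Within G v p W →
      MissWithin G F 0 v p W ∨ ∃ a ∈ A (i + 1), Within G v a W := by
    intro i v W p hp hW
    by_cases hb : p ∈ bunch G.dist (A i) (A (i + 1)) v
    · left
      have hi : i < κ := by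
        by_contra hi
        rw [hAempty i (by omega)] at hp
        simp at hp
      obtain ⟨l, h1, h2, h3⟩ := exists_walk_in_tree hG (A i) (A (i + 1)) F
        (fun v u hu e he => by
          simp only [hFdef, Finset.mem_biUnion]
          exact ⟨i, Finset.mem_range.mpr hi, v, Finset.mem_univ v, u, hu, he⟩) _ v p hb
        hW.reachable le_rfl
      refine ⟨l, h1, ?_, ?_⟩
      · have := hW.dist_le
        rw [← h2, walkWeight] at this
        exact (ENNReal.ofReal_le_ofReal_iff (hW.nonneg hG)).mp this
      · rw [Nat.le_zero, List.countP_eq_zero]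
        intro e he
        simpa using h3 e he
    · right
      rw [bunch, Finset.mem_filter] at hb
      push Not at hb
      obtain ⟨a, ha, hle⟩ := hb hp
      exact ⟨a, ha, hW.of_dist_le hG hle⟩
  have key1 : ∀ j i, κ ≤ i + j → ∀ v W, ∀ p ∈ A i, Within G v p W →
      ∃ a ∈ A i, MissWithin G F 0 v a W := by
    intro j
    induction j with
    | zero =>
      intro i hi v W p hp
      rw [hAempty i (by omega)] at hp
      simp at hp
    | succ j ih =>
      intro i hi v W p hp hW
      rcases key0 i v W p hp hW with h | ⟨a, ha, h⟩
      · exact ⟨p, hp, h⟩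
      · obtain ⟨a', ha', h'⟩ := ih (i + 1) (by omega) v W a ha h
        exact ⟨a', hAsub i ha', h'⟩
  have key : ∀ i v W, ∀ p ∈ A i, Within G v p W →
      MissWithin G F 0 v p W ∨ ∃ a ∈ A (i + 1), MissWithin G F 0 v a W := by
    intro i v W p hp hW
    rcases key0 i v W p hp hW with h | ⟨a, ha, h⟩
    · exact Or.inl h
    · exact Or.inr (key1 κ (i + 1) (by omega) v W a ha h)
  have main : ∀ x y W, Within G x y W →
      MissWithin G F (hopBound N κ) x y ((1 + 8 * κ / N) * W) := by
    intro x y W hW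
    rcases miss_or_near hS hG hFswap A (fun v => hA0 ▸ Finset.mem_univ v) key N κ hN x y W hW
      with h | ⟨z, hz, _⟩
    · exact h
    · rw [hAempty (κ + 1) (by omega)] at hz
      simp at hz
  have hpick : ∀ p : V × V, ∃ l : List (V × V), (∀ e ∈ l, e ∈ G.edges) ∧
      l.countP (fun e => decide (e ∉ F)) ≤ hopBound N κ ∧
      ∀ W, Within G p.1 p.2 W → IsWalkFrom G p.1 p.2 l ∧
        (l.map G.w).sum ≤ (1 + 8 * κ / N) * W := by
    intro p
    by_cases hr : G.Reachable p.1 p.2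
    · obtain ⟨l0, hl0, hd0⟩ := exists_shortest hG hr
      obtain ⟨l, h1, h2, h3⟩ := main p.1 p.2 _ ⟨l0, hl0, le_rfl⟩
      refine ⟨l, h1.mem_edges, h3, fun W hW => ⟨h1, h2.trans ?_⟩⟩
      have := hW.dist_le
      rw [← hd0, walkWeight, ENNReal.ofReal_le_ofReal_iff (hW.nonneg hG)] at this
      gcongr
    · exact ⟨[], by simp, by simp, fun W hW => absurd hW.reachable hr⟩
  choose path hp1 hp2 hp3 using hpick
  set X : V × V → Finset (V × V) := fun p =>
    ((path p).filter (fun e => decide (e ∉ F))).toFinset ∪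
      ((path p).filter (fun e => decide (e ∉ F))).toFinset.image Prod.swap with hX
  have hXcard : ∀ p, (X p).card ≤ 2 * hopBound N κ := by
    intro p
    have h1 : ((path p).filter (fun e => decide (e ∉ F))).toFinset.card ≤ hopBound N κ := by
      refine (List.toFinset_card_le _).trans ?_
      rw [← List.countP_eq_length_filter]
      exact hp2 p
    have h2 := Finset.card_image_le
      (s := ((path p).filter (fun e => decide (e ∉ F))).toFinset) (f := Prod.swap)
    have h3 := Finset.card_union_le ((path p).filter (fun e => decide (e ∉ F))).toFinset
      (((path p).filter (fun e => decide (e ∉ F))).toFinset.image Prod.swap)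
    simp only [hX]
    omega
  refine ⟨F ∪ P.biUnion X, ?_, ?_, ?_, ?_⟩
  · refine Finset.union_subset hFsub (Finset.biUnion_subset.mpr fun p _ => ?_)
    intro e he
    simp only [hX, Finset.mem_union, Finset.mem_image, List.mem_toFinset, List.mem_filter] at he
    rcases he with he | ⟨e', he', rfl⟩
    · exact hp1 p e he.1
    · exact (hS e' (hp1 p e' he'.1)).1
  · intro e he
    rcases Finset.mem_union.mp he with he | he
    · exact Finset.mem_union_left _ (hFswap e he)
    · refine Finset.mem_union_right _ ?_
      obtain ⟨p, hp, he⟩ := Finset.mem_biUnion.mp he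
      refine Finset.mem_biUnion.mpr ⟨p, hp, ?_⟩
      simp only [hX, Finset.mem_union, Finset.mem_image] at he ⊢
      rcases he with he | ⟨e', he', rfl⟩
      · exact Or.inr ⟨e, he, rfl⟩
      · exact Or.inl (by simpa using he')
  · have h1 := Finset.card_union_le F (P.biUnion X)
    have h2 := Finset.card_biUnion_le_card_mul P X _ fun p _ => hXcard p
    rw [mul_comm] at h2
    omega
  · intro p hp W hW
    obtain ⟨h1, h2⟩ := hp3 p W hW
    refine ⟨path p, h1.of_mem fun e he => ?_, h2⟩
    by_cases hF : e ∈ F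
    · exact Finset.mem_union_left _ hF
    · refine Finset.mem_union_right _ (Finset.mem_biUnion.mpr ⟨p, hp, ?_⟩)
      refine Finset.mem_union_left _ ?_
      simp [he, hF]

end Hops

/-! ### Routing through the sources' bunches -/

section Routing

variable {V : Type} [DecidableEq V] [Fintype V] {G : WDigraph V}

/-- A small set `P` of pairs for which every `(s, v) ∈ S × V` is either itself in `P` or joined by a
two-step `P`-path of stretch `4 r - 1 = 4 k - 5`, where `k = r + 1`. The level-zero clusters of the sources are
bounded, so `s` may be paired with its whole cluster; a vertex `v` outside of it has its first
pivot within `dist s v`, which improves the stretch `4 k - 3` of plain bunch routing to `4 k - 5`. -/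
lemma exists_pairs (hS : G.Symmetric) (hG : G.Nonneg) (S : Finset V) (r m J : ℕ) (hm : 1 ≤ m)
    (L t c : ℝ) (hL : Real.log (Fintype.card V) + 1 ≤ L) (ht : 1 ≤ t)
    (hc : 4 * Fintype.card V / t ≤ c) (hJ : Fintype.card V < 2 ^ J)
    (hr : J * (L * t) * (L / m) ^ r < 1) :
    ∃ P : Finset (V × V),
      (P.card : ℝ) ≤ S.card * c + r * Fintype.card V + r * (S.card * m) ∧
      ∀ s ∈ S, ∀ v W, Within G s v W → (s, v) ∈ P ∨ ∃ p U U', (s, p) ∈ P ∧ (p, v) ∈ P ∧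
        Within G s p U ∧ Within G p v U' ∧ U + U' ≤ (4 * r - 1) * W := by
  classical
  have hlog : 0 ≤ Real.log (Fintype.card V) := Real.log_natCast_nonneg _
  have hL0 : 0 ≤ L := by linarith
  obtain ⟨B, hBc, hB⟩ := exists_centres G.dist L t c ht hL hc J S
    ((Finset.card_le_univ S).trans_lt hJ)
  obtain ⟨A, hA0, hAsub, hAb, hAr⟩ := exists_hierarchy G.dist B m hm L hL r
    (lt_of_le_of_lt (mul_le_mul_of_nonneg_right hBc (by positivity)) hr)
  have hpiv : ∀ i v, ∃ p, ∀ a ∈ A i, p ∈ A i ∧ G.dist v p ≤ G.dist v a := by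
    intro i v
    rcases (A i).eq_empty_or_nonempty with h | h
    · exact ⟨v, by simp [h]⟩
    · obtain ⟨p, hp, hmin⟩ := Finset.exists_min_image (A i) (G.dist v) h
      exact ⟨p, fun a ha => ⟨hp, hmin a ha⟩⟩
  choose piv hpiv using hpiv
  set P₁ : Finset (V × V) := S.biUnion fun s => (cluster G.dist B s).image fun v => (s, v) with hP₁
  set P₂ : Finset (V × V) := (Finset.range r).biUnion fun i =>
    Finset.univ.image fun v => (piv i v, v) with hP₂
  set P₃ : Finset (V × V) := (Finset.range r).biUnion fun i =>
    S.biUnion fun s => (bunch G.dist (A i) (A (i + 1)) s).image fun u => (s, u) with hP₃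
  have c₁ : (P₁.card : ℝ) ≤ S.card * c := by
    calc (P₁.card : ℝ) ≤ ∑ s ∈ S, (((cluster G.dist B s).image fun v => (s, v)).card : ℝ) := by
          exact_mod_cast Finset.card_biUnion_le
      _ ≤ ∑ s ∈ S, c := Finset.sum_le_sum fun s hs =>
          le_trans (by exact_mod_cast Finset.card_image_le) (hB s hs)
      _ = S.card * c := by rw [Finset.sum_const, nsmul_eq_mul]
  have c₂ : P₂.card ≤ r * Fintype.card V := by
    have := Finset.card_biUnion_le_card_mul (Finset.range r)
      (fun i => Finset.univ.image fun v => (piv i v, v)) (Fintype.card V)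
      fun i _ => Finset.card_image_le
    rwa [Finset.card_range] at this
  have c₃ : P₃.card ≤ r * (S.card * m) := by
    have := Finset.card_biUnion_le_card_mul (Finset.range r)
      (fun i => S.biUnion fun s => (bunch G.dist (A i) (A (i + 1)) s).image fun u => (s, u))
      (S.card * m) fun i _ => Finset.card_biUnion_le_card_mul _ _ _ fun s _ =>
        Finset.card_image_le.trans (hAb i s)
    rwa [Finset.card_range] at this
  refine ⟨P₁ ∪ P₂ ∪ P₃, ?_, ?_⟩
  · have h1 := Finset.card_union_le (P₁ ∪ P₂) P₃
    have h2 := Finset.card_union_le P₁ P₂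
    have h3 : ((P₁ ∪ P₂ ∪ P₃).card : ℝ) ≤ P₁.card + P₂.card + P₃.card := by
      exact_mod_cast h1.trans (by omega)
    have c₂' : (P₂.card : ℝ) ≤ r * Fintype.card V := by exact_mod_cast c₂
    have c₃' : (P₃.card : ℝ) ≤ r * (S.card * m) := by exact_mod_cast c₃
    linarith
  intro s hs v W hW
  have hW0 := hW.nonneg hG
  by_cases hcl : v ∈ cluster G.dist B s
  · left
    simp only [Finset.mem_union, hP₁, Finset.mem_biUnion, Finset.mem_image]
    exact Or.inl (Or.inl ⟨s, hs, v, hcl, rfl⟩)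
  right
  have hstart : ∃ a ∈ A 0, Within G v a W := by
    rw [cluster, Finset.mem_filter] at hcl
    push Not at hcl
    obtain ⟨a, ha, hle⟩ := hcl (Finset.mem_univ v)
    exact ⟨a, hA0 ▸ ha, (hW.symm hS).of_dist_le hG hle⟩
  -- Climb the hierarchy as long as the pivot of `v` is not in the bunch of `s`.
  have climb : ∀ j i, i + j = r → (∃ a ∈ A i, Within G v a ((2 * i + 1) * W)) →
      ∃ i < r, piv i v ∈ bunch G.dist (A i) (A (i + 1)) s ∧
        Within G v (piv i v) ((2 * i + 1) * W) := by
    intro j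
    induction j with
    | zero =>
      rintro i hi ⟨a, ha, -⟩
      rw [add_zero] at hi
      rw [hi, hAr] at ha
      simp at ha
    | succ j ih =>
      rintro i hi ⟨a, ha, hva⟩
      obtain ⟨hp, hple⟩ := hpiv i v a ha
      have hvp := hva.of_dist_le hG hple
      by_cases hb : piv i v ∈ bunch G.dist (A i) (A (i + 1)) s
      · exact ⟨i, by omega, hb, hvp⟩
      · rw [bunch, Finset.mem_filter] at hb
        push Not at hb
        obtain ⟨a', ha', hle⟩ := hb hp
        have hsa := (hW.trans hvp).of_dist_le hG hle
        refine ih (i + 1) (by omega) ⟨a', ha', ((hW.symm hS).trans hsa).mono ?_⟩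
        push_cast
        linarith
  obtain ⟨a, ha, hva⟩ := hstart
  obtain ⟨i, hi, hb, hvp⟩ := climb r 0 (by simp) ⟨a, ha, by simpa using hva⟩
  refine ⟨piv i v, _, _, ?_, ?_, hW.trans hvp, hvp.symm hS, ?_⟩
  · refine Finset.mem_union_right _ ?_
    simp only [hP₃, Finset.mem_biUnion, Finset.mem_image]
    exact ⟨i, Finset.mem_range.mpr hi, s, hs, _, hb, rfl⟩
  · refine Finset.mem_union_left _ (Finset.mem_union_right _ ?_)
    simp only [hP₂, Finset.mem_biUnion, Finset.mem_image]
    exact ⟨i, Finset.mem_range.mpr hi, v, Finset.mem_univ v, rfl⟩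
  · have h1 : (i : ℝ) + 1 ≤ r := by exact_mod_cast hi
    nlinarith [mul_le_mul_of_nonneg_right h1 hW0]

end Routing

/-! ### Choice of parameters -/

/-- Powers of `n` eventually absorb the logarithms and the constants. -/
lemma eventually_params (η C ζ : ℝ) (hη : 0 < η) (hζ : 0 < ζ) :
    ∃ n0 : ℕ, ∀ n ≥ n0, 1 ≤ n ∧ 2 * Real.log n + 1 ≤ (n : ℝ) ^ η ∧ C ≤ (n : ℝ) ^ ζ := by
  have h1 : ∀ᶠ n : ℕ in Filter.atTop, 1 ≤ n := Filter.eventually_ge_atTop 1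
  have h3 : ∀ᶠ n : ℕ in Filter.atTop, C ≤ (n : ℝ) ^ ζ :=
    ((tendsto_rpow_atTop hζ).comp tendsto_natCast_atTop_atTop).eventually_ge_atTop C
  have h4 : ∀ᶠ n : ℕ in Filter.atTop, (2 : ℝ) ≤ (n : ℝ) ^ η :=
    ((tendsto_rpow_atTop hη).comp tendsto_natCast_atTop_atTop).eventually_ge_atTop 2
  have h2 : ∀ᶠ n : ℕ in Filter.atTop, ‖Real.log n‖ ≤ (1 / 4) * ‖(n : ℝ) ^ η‖ :=
    tendsto_natCast_atTop_atTop.eventually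
      ((isLittleO_log_rpow_atTop hη).bound (by norm_num : (0 : ℝ) < 1 / 4))
  obtain ⟨n0, hn0⟩ := Filter.eventually_atTop.mp (h1.and (h2.and (h3.and h4)))
  refine ⟨n0, fun n hn => ?_⟩
  obtain ⟨k1, k2, k3, k4⟩ := hn0 n hn
  rw [Real.norm_eq_abs, Real.norm_eq_abs, abs_of_nonneg (by positivity : (0 : ℝ) ≤ (n : ℝ) ^ η)]
    at k2
  refine ⟨k1, ?_, k3⟩
  have := le_abs_self (Real.log n)
  linarith

/-- If `M > x L` with `X ≤ x ^ r`, then `X (L / M) ^ r < 1`. -/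
lemma mul_div_pow_lt_one {X x L M : ℝ} {r : ℕ} (hr : r ≠ 0) (hx : 0 < x) (hL : 0 < L)
    (hX : X ≤ x ^ r) (hM : x * L < M) : X * (L / M) ^ r < 1 := by
  have hM0 : 0 < M := lt_trans (by positivity) hM
  calc X * (L / M) ^ r ≤ x ^ r * (L / M) ^ r :=
        mul_le_mul_of_nonneg_right hX (by positivity)
    _ = (x * L / M) ^ r := by rw [← mul_pow]; ring
    _ < 1 := pow_lt_one₀ (by positivity) ((div_lt_one hM0).mpr hM) hr

/-- Arithmetic of the final edge count. -/
lemma size_bound {n σ x y L κ h r m m' P E : ℝ} (hn : 0 ≤ n) (hσ : 0 ≤ σ) (hx : 0 ≤ x)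
    (hy : 1 ≤ y) (hL : 1 ≤ L) (hκ : 0 ≤ κ) (hh : 0 ≤ h) (hr : 0 ≤ r)
    (hm : m ≤ 2 * (x * L ^ 4)) (hm' : m' ≤ 2 * (y * L))
    (hP : P ≤ σ * (4 * x) + r * n + r * (σ * m))
    (hE : E ≤ 2 * κ * n * m' + 2 * h * P) :
    E ≤ (4 * κ + 2 * h * (2 * r + 4)) * (L ^ 4 * y * (n + σ * x)) := by
  have hL41 : 1 ≤ L ^ 4 := one_le_pow₀ hL
  have hLL4 : L ≤ L ^ 4 := le_self_pow₀ hL (by norm_num)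
  have hL0 : 0 ≤ L := by linarith
  have hy0 : 0 ≤ y := by linarith
  set Q : ℝ := n + σ * x with hQ
  have hσx : 0 ≤ σ * x := by positivity
  have hQ0 : 0 ≤ Q := by positivity
  have hnQ : n ≤ Q := by linarith
  have hσQ : σ * x ≤ Q := by linarith
  have hP' : P ≤ (2 * r + 4) * (L ^ 4 * Q) := by
    have h2 : r * (σ * m) ≤ r * (σ * (2 * (x * L ^ 4))) := by gcongr
    have h3 : r * n ≤ r * (L ^ 4 * (2 * n)) := by
      refine mul_le_mul_of_nonneg_left ?_ hr
      have := mul_le_mul_of_nonneg_right hL41 (by positivity : 0 ≤ 2 * n)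
      linarith
    have h4 : σ * (4 * x) ≤ 4 * (L ^ 4 * Q) := by
      have := mul_le_mul hL41 hσQ hσx (by positivity)
      linarith
    have h5 : r * (L ^ 4 * (2 * n)) + r * (σ * (2 * (x * L ^ 4))) = 2 * r * (L ^ 4 * Q) := by
      rw [hQ]; ring
    linarith
  have hyQ : L ^ 4 * Q ≤ L ^ 4 * y * Q :=
    mul_le_mul_of_nonneg_right (le_mul_of_one_le_right (by positivity) hy) hQ0
  have hm'' : m' ≤ 2 * (y * L ^ 4) := hm'.trans (by gcongr)
  have h1 : 2 * κ * n * m' ≤ 2 * κ * Q * (2 * (y * L ^ 4)) :=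
    (mul_le_mul_of_nonneg_left hm'' (by positivity)).trans (by gcongr)
  have h2 : 2 * h * P ≤ 2 * h * ((2 * r + 4) * (L ^ 4 * y * Q)) :=
    mul_le_mul_of_nonneg_left (hP'.trans (mul_le_mul_of_nonneg_left hyQ (by positivity)))
      (by positivity)
  linarith [add_le_add h1 h2]

end Hopsets

open Hopsets in
/-- For every integer `k ≥ 2`, `ε > 0` and `δ > 0`, for all large
enough `n`, every `n`-vertex undirected graph with nonnegative polynomially bounded
weights and every `S ⊆ V` with `|S| = σ` admits an `S`-sourcewise `(4k−5+ε)`-spanner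
with at most `n^δ·(n + σ·n^{1/k})` edges. -/
theorem stmt_13 (k : ℕ) (hk : 2 ≤ k) (ε δ : ℝ) (hε : 0 < ε) (hδ : 0 < δ) (q : ℕ) :
    ∃ n0 : ℕ, ∀ n ≥ n0, ∀ G : WDigraph (Fin n),
      G.Symmetric → G.Nonneg → G.PolyBounded q →
      ∀ S : Finset (Fin n),
        ∃ Estar ⊆ G.edges, (∀ e ∈ Estar, (e.2, e.1) ∈ Estar) ∧
          (Estar.card : ℝ) ≤ (n : ℝ) ^ δ * ((n : ℝ) + (S.card : ℝ) * (n : ℝ) ^ (1 / (k : ℝ))) ∧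
          ∀ s ∈ S, ∀ v, (G.sub Estar).dist s v ≤
            ENNReal.ofReal (4 * (k : ℝ) - 5 + ε) * G.dist s v := by
  classical
  -- `r` is the number of levels above the centres; `η` is the exponent absorbing logarithms.
  obtain ⟨r, rfl⟩ : ∃ r, k = r + 1 := ⟨k - 1, by omega⟩
  have hr : 1 ≤ r := by omega
  have hrR : (1 : ℝ) ≤ r := by exact_mod_cast hr
  obtain ⟨κ, hκ⟩ := exists_nat_gt (4 / δ)
  have hκ0 : (0 : ℝ) < κ := lt_trans (by positivity) hκ
  have hκδ : 1 / (κ : ℝ) ≤ δ / 4 := by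
    rw [div_lt_iff₀ hδ] at hκ
    rw [div_le_div_iff₀ hκ0 (by norm_num)]
    linarith
  have hκne : κ ≠ 0 := by rintro rfl; simp at hκ0
  obtain ⟨N, hN⟩ := exists_nat_gt (max (8 * (κ + 1) : ℝ) (8 * κ * (4 * r - 1) / ε))
  have hN1 : 8 * (κ + 1) ≤ N := by
    exact_mod_cast ((le_max_left _ _).trans_lt hN).le
  have hN2 : 8 * κ * (4 * r - 1) / ε < N := (le_max_right _ _).trans_lt hN
  have hN0 : (0 : ℝ) < N := by exact_mod_cast (by omega : 0 < N)
  set h : ℕ := hopBound N κ with hh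
  obtain ⟨n0, hn0⟩ := eventually_params (δ / 16) (4 * κ + 2 * h * (2 * r + 4)) (δ / 2)
    (by positivity) (by positivity)
  refine ⟨n0, fun n hn G hS hG _ S => ?_⟩
  obtain ⟨hn1, hlog, hC⟩ := hn0 n hn
  have hnR : (1 : ℝ) ≤ n := by exact_mod_cast hn1
  have hnpos : (0 : ℝ) < n := by linarith
  have hlog0 : 0 ≤ Real.log n := Real.log_natCast_nonneg _
  set L : ℝ := (n : ℝ) ^ (δ / 16) with hL
  have hL1 : 1 ≤ L := by linarith
  have hL0 : 0 < L := by linarith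
  set x : ℝ := (n : ℝ) ^ (1 / ((r + 1 : ℕ) : ℝ)) with hx
  set y : ℝ := (n : ℝ) ^ (1 / (κ : ℝ)) with hy
  have hx1 : 1 ≤ x := Real.one_le_rpow hnR (by positivity)
  have hy1 : 1 ≤ y := Real.one_le_rpow hnR (by positivity)
  have hxpow : x ^ (r + 1) = n := by
    rw [hx, one_div]; exact Real.rpow_inv_natCast_pow hnpos.le (by omega)
  have hypow : y ^ κ = n := by
    rw [hy, one_div]; exact Real.rpow_inv_natCast_pow hnpos.le hκne
  have hL41 : 1 ≤ L ^ 4 := one_le_pow₀ hL1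
  -- A routing hierarchy over `t = x ^ r = n ^ (1 - 1 / k)` centres.
  set m : ℕ := ⌊x * L ^ 3 * L⌋₊ + 1 with hm
  have hmlt : x * L ^ 3 * L < m := by rw [hm]; push_cast; exact Nat.lt_floor_add_one _
  have hmle : (m : ℝ) ≤ 2 * (x * L ^ 4) := by
    have h1 := Nat.floor_le (a := x * L ^ 3 * L) (by positivity)
    have h2 : 1 ≤ x * L ^ 4 := one_le_mul_of_one_le_of_one_le hx1 hL41
    rw [hm]; push_cast
    have h3 : x * L ^ 3 * L = x * L ^ 4 := by ring
    linarith
  set J : ℕ := Nat.log 2 n + 1 with hJ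
  have hJL : (J : ℝ) ≤ L := by
    have h1 : (Nat.log 2 n : ℝ) ≤ Real.logb 2 n := Real.natLog_le_logb _ _
    have h2 : Real.logb 2 n ≤ 2 * Real.log n := by
      rw [Real.logb, div_le_iff₀ (Real.log_pos (by norm_num))]
      have := Real.log_two_gt_d9
      nlinarith
    rw [hJ]; push_cast
    linarith
  obtain ⟨P, hPc, hP⟩ := exists_pairs hS hG S r m J (by omega) L (x ^ r) (4 * x)
    (by rw [Fintype.card_fin]; linarith) (one_le_pow₀ hx1)
    (by rw [Fintype.card_fin, ← hxpow, pow_succ]; field_simp; rfl)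
    (by rw [Fintype.card_fin]; exact Nat.lt_pow_succ_log_self (by norm_num) n)
    (by
      refine mul_div_pow_lt_one (x := x * L ^ 3) (by omega) (by positivity) hL0 ?_ hmlt
      have h1 : (L ^ 3) ^ 1 ≤ (L ^ 3) ^ r := pow_le_pow_right₀ (one_le_pow₀ hL1) hr
      have h2 : L ^ 2 ≤ L ^ 3 := pow_le_pow_right₀ hL1 (by norm_num)
      calc (J : ℝ) * (L * x ^ r) ≤ L * (L * x ^ r) := by gcongr
        _ = x ^ r * L ^ 2 := by ring
        _ ≤ x ^ r * (L ^ 3) ^ r := by gcongr; linarith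
        _ = (x * L ^ 3) ^ r := by rw [mul_pow])
  -- The pairs are preserved near-exactly by a hierarchy with `κ` levels.
  set m' : ℕ := ⌊y * L⌋₊ + 1 with hm'
  have hmlt' : y * L < m' := by rw [hm']; push_cast; exact Nat.lt_floor_add_one _
  have hmle' : (m' : ℝ) ≤ 2 * (y * L) := by
    have h1 := Nat.floor_le (a := y * L) (by positivity)
    have h2 : 1 ≤ y * L := one_le_mul_of_one_le_of_one_le hy1 hL1
    rw [hm']; push_cast
    linarith
  obtain ⟨E, hEG, hEs, hEc, hE⟩ := exists_preserver hS hG κ N m' hN1 (by omega) L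
    (by rw [Fintype.card_fin]; linarith)
    (by
      rw [Fintype.card_fin]
      exact mul_div_pow_lt_one hκne (by linarith) hL0 hypow.ge hmlt') P
  rw [Fintype.card_fin] at hPc hEc
  refine ⟨E, hEG, hEs, ?_, ?_⟩
  · set Q : ℝ := (n : ℝ) + S.card * x with hQ
    have hQ0 : 0 ≤ Q := by positivity
    have hEc' : (E.card : ℝ) ≤ 2 * κ * n * m' + 2 * h * P.card := by exact_mod_cast hEc
    have hA : (E.card : ℝ) ≤ (4 * κ + 2 * h * (2 * r + 4)) * (L ^ 4 * y * Q) :=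
      size_bound hnpos.le (Nat.cast_nonneg _) (by linarith) hy1 hL1 hκ0.le (Nat.cast_nonneg _)
        (Nat.cast_nonneg _) hmle hmle' hPc hEc'
    have hLy : L ^ 4 * y ≤ (n : ℝ) ^ (δ / 2) := by
      have h1 : L ^ 4 = (n : ℝ) ^ (δ / 4) := by
        rw [hL, ← Real.rpow_natCast, ← Real.rpow_mul hnpos.le]
        congr 1; push_cast; ring
      have h2 : y ≤ (n : ℝ) ^ (δ / 4) := Real.rpow_le_rpow_of_exponent_le hnR hκδ
      calc L ^ 4 * y ≤ (n : ℝ) ^ (δ / 4) * (n : ℝ) ^ (δ / 4) := by rw [h1]; gcongr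
        _ = (n : ℝ) ^ (δ / 2) := by rw [← Real.rpow_add hnpos]; congr 1; ring
    calc (E.card : ℝ) ≤ _ := hA
      _ ≤ (n : ℝ) ^ (δ / 2) * ((n : ℝ) ^ (δ / 2) * Q) := by gcongr
      _ = (n : ℝ) ^ δ * Q := by
          rw [← mul_assoc, ← Real.rpow_add hnpos]; congr 2; ring
  · intro s hs v
    have hpos : (0 : ℝ) < 4 * ((r + 1 : ℕ) : ℝ) - 5 + ε := by push_cast; linarith
    by_cases htop : G.dist s v = ⊤
    · rw [htop, ENNReal.mul_top (by simpa using hpos)]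
      exact le_top
    set W : ℝ := (G.dist s v).toReal with hW
    have hW0 : 0 ≤ W := ENNReal.toReal_nonneg
    have hdW : G.dist s v = ENNReal.ofReal W := (ENNReal.ofReal_toReal htop).symm
    have hwithin : Within G s v W := within_of_dist_le hG hW0 hdW.le
    have hc0 : (0 : ℝ) ≤ 1 + 8 * κ / N := by positivity
    -- The stretches multiply, and `N` was chosen so that the product is at most `4 k - 5 + ε`.
    have hstretch : (1 + 8 * κ / N) * (4 * r - 1) ≤ 4 * ((r + 1 : ℕ) : ℝ) - 5 + ε := by
      have h1 : 8 * κ / N * (4 * r - 1) ≤ ε := by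
        rw [div_lt_iff₀ hε] at hN2
        rw [div_mul_eq_mul_div, div_le_iff₀ hN0]
        linarith
      push_cast
      linarith
    have hfin : Within (G.sub E) s v ((1 + 8 * κ / N) * ((4 * r - 1) * W)) := by
      rcases hP s hs v W hwithin with hsv | ⟨p, U, U', hsp, hpv, h1, h2, hU⟩
      · refine (hE _ hsv W hwithin).mono (mul_le_mul_of_nonneg_left ?_ hc0)
        exact le_mul_of_one_le_left hW0 (by linarith)
      · refine ((hE _ hsp U h1).trans (hE _ hpv U' h2)).mono ?_
        rw [← mul_add]
        exact mul_le_mul_of_nonneg_left hU hc0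
    refine hfin.dist_le.trans ?_
    rw [hdW, ← ENNReal.ofReal_mul hpos.le, ← mul_assoc]
    exact ENNReal.ofReal_le_ofReal (mul_le_mul_of_nonneg_right hstretch hW0)
end

section
/- There exists a constant d > 0 such that for every integer k ≥ 2, every ε ∈ (0,1), and every integer β with β < (d/(ε·(k−1)))^{k−1}, there exist arbitrarily large n and n-vertex unweighted undirected graphs G such that every (β,ε)-hopset for G has more than n^{1+1/(2^k−1)}/2 edges. -/
/-!
The graph is built recursively from *gadgets*. A gadget has many pairs of ports at distance `D`, and
for each pair a potential `P` on the vertices which rises by `D + E` from the first port to the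
second, although it rises by at most `1 + lam` along each edge. A shortcut `(a, b)` is *bad* for a
pair if `|P a - P b|` exceeds the length of some walk from `a` to `b` by more than `lam`; each
shortcut is bad for at most `kap` pairs. If a set `H` of shortcuts contains no bad one for some pair,
every edge of `G ∪ H` raises the potential of that pair by at most its weight plus `lam`, so that a
walk of at most `β` hops between the two ports has weight at least `D + E - β * lam`. If
`β * lam + ε * D < E`, this exceeds `(1 + ε) * D`. Hence a hopset has at least `|Q| / kap` edges, where
`Q` is the set of pairs (`card_le_of_hopset`).

The base gadget (`exists_base`) is a layered graph with `2 * K` steps. Its layers are copies of `Γ²`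
for a finite abelian group `Γ`, and the steps move the two coordinates alternately by elements of a
`K`-convex set, given by points of a paraboloid (`exists_kconvex`). The pairs are the ends of the
*straight* walks, which use one label in all even steps and another one in all odd steps. By
convexity, a straight walk is the only upward walk between two of its positions, and it is determined
by two of its positions which are at least two layers apart. The potential is the height, increased by
one outside the cone of the starting position and by `i / (2 * K)` at the `i`-th position of the
straight walk.

In the recursion (`exists_step`), the inner positions of an outer layered graph are replaced by copies
of the inner gadget, alternately upside down, and the outer step labels are the labels of the inner
ports. A straight walk then passes through `2 * K - 1` copies of one inner pair. Its potential is the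
height plus a correction which increases by the inner excess `E` in each of these copies, is `0` in
the rest of the cone of the start, and is maximal outside of the cone. So that the corrections on the
copies and on the outer edges need not agree, a path of length `(2 * K - 1) * E` is attached to every
vertex of a copy; the correction is interpolated along these paths with slope one in the direction in
which the height increases as well. A shortcut inside a copy is bad only for pairs for which it is bad
in the inner gadget; a shortcut between consecutive copies fixes the port through which it passes, so
that it is bad for at most `2 * kap` pairs with the loss `2 * lam` (`stay_next`); a longer shortcut
fixes the whole walk. Walks that leave the copies of the straight walk are harmless, since there the
potential agrees with one-Lipschitz functions which bound it from above and from below (`sandwich`).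

After `t` steps, `E = (2 * K - 1) ^ t`, `lam = 2 ^ t / (2 * K)`, `kap = 2 ^ t`, and `D` is at most
`6 * K * (t + 1) * E`. With `t = k - 2` and `K` close to `1 / (12 * ε * (k - 1))`, this gives
`β * lam + ε * D < E` for `β < (1 / (48 * ε * (k - 1))) ^ (k - 1)`. Labelling with sets of size `q ^ 6`
at the base leads to `n ≤ q ^ (11 * (2 ^ k - 2))` vertices and, up to constants, to `n * q ^ 12` pairs
(`exists_level`), which is more than `n ^ (1 + 1 / (2 ^ k - 1))` for large `q`.
-/

open scoped ENNReal

namespace HopsetLB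

/-! ### Walks and one-Lipschitz functions -/

/-- `Reach r n x y`: there is a walk with exactly `n` edges from `x` to `y` in the undirected graph
generated by the (not necessarily symmetric) relation `r`. -/
inductive Reach {V : Type} (r : V → V → Prop) : ℕ → V → V → Prop
  | refl (x : V) : Reach r 0 x x
  | step {n : ℕ} {x y z : V} : Reach r n x y → (r y z ∨ r z y) → Reach r (n + 1) x z

section Walks

variable {V : Type} {r : V → V → Prop}

theorem Reach.trans {n m : ℕ} {x y z : V} (h : Reach r n x y) (h' : Reach r m y z) :
    Reach r (n + m) x z := by
  induction h' with
  | refl => exact h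
  | step _ e ih => exact (ih h).step e

theorem Reach.single {x y : V} (h : r x y ∨ r y x) : Reach r 1 x y := (Reach.refl x).step h

theorem Reach.symm {n : ℕ} {x y : V} (h : Reach r n x y) : Reach r n y x := by
  induction h with
  | refl => exact Reach.refl _
  | @step n x y z _ e ih =>
    have := (Reach.single (r := r) (x := z) (y := y) e.symm).trans ih
    rwa [add_comm] at this

theorem Reach.mono {r' : V → V → Prop} (hr : ∀ x y, r x y → r' x y) {n : ℕ} {x y : V}
    (h : Reach r n x y) : Reach r' n x y := by
  induction h with
  | refl => exact Reach.refl _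
  | step _ e ih => exact ih.step (e.imp (hr _ _) (hr _ _))

theorem Reach.map {W : Type} {s : W → W → Prop} (F : V → W) (hr : ∀ x y, r x y → s (F x) (F y))
    {n : ℕ} {x y : V} (h : Reach r n x y) : Reach s n (F x) (F y) := by
  induction h with
  | refl => exact Reach.refl _
  | step _ e ih => exact ih.step (e.imp (hr _ _) (hr _ _))

theorem Reach.lip {F : V → ℝ} (hF : ∀ x y, r x y → |F x - F y| ≤ 1) {n : ℕ} {x y : V}
    (h : Reach r n x y) : |F x - F y| ≤ n := by
  induction h with
  | refl => simp
  | @step n x y z _ e ih =>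
    have h1 : |F y - F z| ≤ 1 := by
      rcases e with e | e
      · exact hF _ _ e
      · rw [abs_sub_comm]; exact hF _ _ e
    have := abs_sub_le (F x) (F y) (F z)
    push_cast
    linarith

/-- A walk either stays inside a set of vertices or can be split at a vertex outside it. -/
theorem Reach.stay_or_leave (R : V → Prop) {n : ℕ} {x y : V} (h : Reach r n x y) :
    Reach (fun u v => r u v ∧ R u ∧ R v) n x y ∨
      ∃ z n₁ n₂, ¬ R z ∧ n₁ + n₂ = n ∧ Reach r n₁ x z ∧ Reach r n₂ z y := by
  induction h with
  | refl => exact Or.inl (Reach.refl _)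
  | @step n x y z hxy e ih =>
    rcases ih with ih | ⟨u, n₁, n₂, hu, hn, h1, h2⟩
    · by_cases hy : R y
      · by_cases hz : R z
        · exact Or.inl (ih.step (e.imp (fun e => ⟨e, hy, hz⟩) (fun e => ⟨e, hz, hy⟩)))
        · exact Or.inr ⟨z, n + 1, 0, hz, rfl, hxy.step e, Reach.refl _⟩
      · exact Or.inr ⟨y, n, 1, hy, rfl, hxy, Reach.single e⟩
    · exact Or.inr ⟨u, n₁, n₂ + 1, hu, by omega, h1, h2.step e⟩

/-- A walk from inside a set of vertices to its complement crosses the boundary. -/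
theorem Reach.cross (P : V → Prop) {n : ℕ} {x y : V} (h : Reach r n x y) (hx : P x)
    (hy : ¬ P y) : ∃ u v n₁ n₂, P u ∧ ¬ P v ∧ (r u v ∨ r v u) ∧ n₁ + 1 + n₂ = n ∧
      Reach r n₁ x u ∧ Reach r n₂ v y := by
  induction h with
  | refl => exact absurd hx hy
  | @step n x y z hxy e ih =>
    by_cases hPy : P y
    · exact ⟨y, z, n, 0, hPy, hy, e, rfl, hxy, Reach.refl _⟩
    · obtain ⟨u, v, n₁, n₂, hu, hv, huv, hn, h1, h2⟩ := ih hx hPy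
      exact ⟨u, v, n₁, n₂ + 1, hu, hv, huv, by omega, h1, h2.step e⟩

end Walks

/-! ### Convex labellings of finite abelian groups -/

/-- `φ` maps labels to a `K`-convex subset of the group `Γ`: a sum of at most `K` labels which is a
multiple of a single label has all its terms equal to that label. -/
def KConvex {I Γ : Type} [AddCommGroup Γ] (K : ℕ) (φ : I → Γ) : Prop :=
  ∀ (J : Finset ℕ) (m : ℕ → I) (x : I), J.card ≤ K →
    ∑ j ∈ J, φ (m j) = J.card • φ x → ∀ j ∈ J, m j = x

/-- Points of a box, lifted to a paraboloid whose coordinates are taken modulo numbers too large for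
sums of `K` points to wrap around, form a `K`-convex set. -/
theorem exists_kconvex (K q r : ℕ) {I : Type} [Fintype I] (hI : Fintype.card I ≤ q ^ r) :
    ∃ (Γ : Type) (_ : AddCommGroup Γ) (_ : Fintype Γ) (φ : I → Γ), KConvex K φ ∧
      Fintype.card Γ = (K * q + 1) ^ r * (K * r * q ^ 2 + 1) := by
  classical
  obtain ⟨emb⟩ : Nonempty (I ↪ (Fin r → Fin q)) := by
    apply Function.Embedding.nonempty_of_card_le
    simpa using hI
  refine ⟨(Fin r → ZMod (K * q + 1)) × ZMod (K * r * q ^ 2 + 1), inferInstance, inferInstance,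
    fun x => (fun t => ((emb x t : ℕ) : ZMod _), ((∑ t, (emb x t : ℕ) ^ 2 : ℕ) : ZMod _)),
    ?_, ?_⟩
  · intro J m x hJ hsum
    have h1 : ∀ t, ∑ j ∈ J, (emb (m j) t : ℕ) = J.card * (emb x t : ℕ) := by
      intro t
      have h := congrFun (congrArg Prod.fst hsum) t
      rw [Prod.fst_sum] at h
      simp only [Finset.sum_apply, Prod.smul_fst, Pi.smul_apply] at h
      rw [nsmul_eq_mul] at h
      have h' : ((∑ j ∈ J, (emb (m j) t : ℕ) : ℕ) : ZMod (K * q + 1)) =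
          ((J.card * (emb x t : ℕ) : ℕ) : ZMod (K * q + 1)) := by
        push_cast; exact h
      rw [ZMod.natCast_eq_natCast_iff'] at h'
      rw [Nat.mod_eq_of_lt, Nat.mod_eq_of_lt] at h'
      · exact h'
      · have := Nat.mul_le_mul hJ (emb x t).2.le
        omega
      · have : ∑ j ∈ J, (emb (m j) t : ℕ) ≤ J.card * q := by
          rw [← smul_eq_mul]
          exact Finset.sum_le_card_nsmul _ _ _ (fun j _ => (emb (m j) t).2.le)
        have := Nat.mul_le_mul_right q hJ
        omega
    have hsq : ∀ y, ∑ t, (emb y t : ℕ) ^ 2 ≤ r * q ^ 2 := by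
      intro y
      have := Finset.sum_le_card_nsmul Finset.univ (fun t => (emb y t : ℕ) ^ 2) (q ^ 2)
        (fun t _ => Nat.pow_le_pow_left (emb y t).2.le 2)
      simpa using this
    have h2 : ∑ j ∈ J, ∑ t, (emb (m j) t : ℕ) ^ 2 = J.card * ∑ t, (emb x t : ℕ) ^ 2 := by
      have h := congrArg Prod.snd hsum
      rw [Prod.snd_sum] at h
      simp only [Prod.smul_snd] at h
      rw [nsmul_eq_mul, ← Nat.cast_sum, ← Nat.cast_mul, ZMod.natCast_eq_natCast_iff'] at h
      rw [Nat.mod_eq_of_lt, Nat.mod_eq_of_lt] at h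
      · exact h
      · have := Nat.mul_le_mul hJ (hsq x)
        rw [mul_assoc]; omega
      · have h3 : ∑ j ∈ J, ∑ t, (emb (m j) t : ℕ) ^ 2 ≤ J.card * (r * q ^ 2) := by
          rw [← smul_eq_mul]
          exact Finset.sum_le_card_nsmul _ _ _ (fun j _ => hsq (m j))
        have := Nat.mul_le_mul_right (r * q ^ 2) hJ
        rw [mul_assoc]; omega
    -- the second moment of the `m j` about `x` vanishes
    have h3 : ∑ j ∈ J, ∑ t, ((emb (m j) t : ℝ) - (emb x t : ℝ)) ^ 2 = 0 := by
      have e1 : ∀ t, ∑ j ∈ J, (emb (m j) t : ℝ) = J.card * (emb x t : ℝ) := by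
        intro t; exact_mod_cast h1 t
      have e2 : ∑ j ∈ J, ∑ t, (emb (m j) t : ℝ) ^ 2 = J.card * ∑ t, (emb x t : ℝ) ^ 2 := by
        exact_mod_cast h2
      have e3 : ∑ j ∈ J, ∑ t, ((emb (m j) t : ℝ) - (emb x t : ℝ)) ^ 2 =
          ∑ j ∈ J, ∑ t, (emb (m j) t : ℝ) ^ 2 -
            2 * ∑ t, (emb x t : ℝ) * ∑ j ∈ J, (emb (m j) t : ℝ) +
            J.card * ∑ t, (emb x t : ℝ) ^ 2 := by
        simp only [sub_sq, Finset.sum_add_distrib, Finset.sum_sub_distrib, Finset.sum_const,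
          nsmul_eq_mul]
        rw [Finset.sum_comm (s := J) (f := fun j t => 2 * (emb (m j) t : ℝ) * (emb x t : ℝ))]
        simp only [Finset.mul_sum]
        congr 2
        refine Finset.sum_congr rfl fun t _ => Finset.sum_congr rfl fun j _ => by ring
      rw [e3, e2]
      simp only [e1]
      have : ∑ t, (emb x t : ℝ) * (J.card * (emb x t : ℝ)) = J.card * ∑ t, (emb x t : ℝ) ^ 2 := by
        rw [Finset.mul_sum]; exact Finset.sum_congr rfl fun t _ => by ring
      rw [this]; ring
    intro j hj
    apply emb.injective
    have h4 := (Finset.sum_eq_zero_iff_of_nonneg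
      (fun j _ => Finset.sum_nonneg fun t _ => sq_nonneg _)).1 h3 j hj
    ext t
    have h5 := (Finset.sum_eq_zero_iff_of_nonneg (fun t _ => sq_nonneg _)).1 h4 t
      (Finset.mem_univ t)
    have h6 : (emb (m j) t : ℝ) = (emb x t : ℝ) := by
      have := pow_eq_zero_iff (two_ne_zero) |>.1 h5
      linarith
    exact_mod_cast h6
  · simp [ZMod.card]

/-! ### Straight walks in the outer layered graph -/

section Outer

variable {I Γ : Type} [AddCommGroup Γ]

/-- The displacement of the `i`-th step with label `x`: the two coordinates are moved alternately,
according to the parity of `i`. -/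
def ostep (φ : I → Γ) (i : ℕ) (x : I) : Bool → Γ := Pi.single i.bodd (φ x)

/-- The `i`-th position of the straight walk from `v` whose even steps carry the label `l false` and
whose odd steps carry the label `l true`. -/
def pos (φ : I → Γ) (l : Bool → I) (v : Bool → Γ) (i : ℕ) : Bool → Γ :=
  v + ∑ j ∈ Finset.range i, ostep φ j (l j.bodd)

/-- `w` in layer `i` can be reached from `v` in layer `0` by upward steps with arbitrary labels. -/
def Cone (φ : I → Γ) (v : Bool → Γ) (i : ℕ) (w : Bool → Γ) : Prop :=
  ∃ m : ℕ → I, w = v + ∑ j ∈ Finset.range i, ostep φ j (m j)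

variable {φ : I → Γ} {K : ℕ}

theorem pos_zero (l : Bool → I) (v : Bool → Γ) : pos φ l v 0 = v := by simp [pos]

theorem pos_succ (l : Bool → I) (v : Bool → Γ) (i : ℕ) :
    pos φ l v (i + 1) = pos φ l v i + ostep φ i (l i.bodd) := by
  simp [pos, Finset.sum_range_succ, add_assoc]

theorem cone_pos (l : Bool → I) (v : Bool → Γ) (i : ℕ) : Cone φ v i (pos φ l v i) :=
  ⟨fun j => l j.bodd, rfl⟩

theorem Cone.succ {v w : Bool → Γ} {i : ℕ} (h : Cone φ v i w) (x : I) :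
    Cone φ v (i + 1) (w + ostep φ i x) := by
  obtain ⟨m, rfl⟩ := h
  refine ⟨fun j => if j = i then x else m j, ?_⟩
  rw [Finset.sum_range_succ, add_assoc]
  simp only [if_true]
  congr 2
  refine Finset.sum_congr rfl fun j hj => ?_
  rw [if_neg (Finset.mem_range.1 hj).ne]

theorem ostep_sum_apply (s : Finset ℕ) (m : ℕ → I) (b : Bool) :
    (∑ j ∈ s, ostep φ j (m j)) b = ∑ j ∈ s.filter (fun j => j.bodd = b), φ (m j) := by
  rw [Finset.sum_apply, Finset.sum_filter]
  refine Finset.sum_congr rfl fun j _ => ?_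
  unfold ostep
  by_cases h : j.bodd = b
  · subst h; simp
  · rw [if_neg h, Pi.single_eq_of_ne (Ne.symm h)]

theorem card_bodd (K : ℕ) (b : Bool) :
    ((Finset.range (2 * K)).filter (fun j => j.bodd = b)).card = K := by
  induction K with
  | zero => simp
  | succ K ih =>
    rw [show 2 * (K + 1) = 2 * K + 1 + 1 by ring, Finset.range_add_one, Finset.range_add_one,
      Finset.filter_insert, Finset.filter_insert]
    have h0 : (2 * K).bodd = false := by simp
    have h1 : (2 * K + 1).bodd = true := by simp
    rw [h0, h1]
    cases b <;> simp [ih]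

theorem card_bodd_le {s : Finset ℕ} (hs : ∀ j ∈ s, j < 2 * K) (b : Bool) :
    (s.filter (fun j => j.bodd = b)).card ≤ K := by
  rw [← card_bodd K b]
  exact Finset.card_le_card (Finset.filter_subset_filter _
    (fun j hj => Finset.mem_range.2 (hs j hj)))

/-- An upward walk between two positions of a straight walk is that straight walk. -/
theorem cone_unique (hφ : KConvex K φ) {l : Bool → I} {v : Bool → Γ} {i : ℕ} (hi : i ≤ 2 * K)
    {m : ℕ → I} (h : v + ∑ j ∈ Finset.range i, ostep φ j (m j) = pos φ l v i) :
    ∀ j < i, m j = l j.bodd := by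
  intro j hj
  have h1 := congrFun (add_left_cancel h) j.bodd
  rw [ostep_sum_apply, ostep_sum_apply] at h1
  refine hφ ((Finset.range i).filter fun k => k.bodd = j.bodd) m (l j.bodd)
    (card_bodd_le (fun k hk => ?_) _) ?_ j ?_
  · have := Finset.mem_range.1 hk; omega
  · rw [h1, ← Finset.sum_const]
    refine Finset.sum_congr rfl fun k hk => ?_
    rw [(Finset.mem_filter.1 hk).2]
  · simp [hj]

/-- The only step from the cone of `v` to a position of a straight walk from `v` is a step of that
straight walk. -/
theorem cone_step (hφ : KConvex K φ) {l : Bool → I} {v w : Bool → Γ} {i : ℕ} (hi : i < 2 * K)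
    {x : I} (hw : Cone φ v i w) (h : w + ostep φ i x = pos φ l v (i + 1)) : x = l i.bodd := by
  obtain ⟨m, rfl⟩ := hw
  have := cone_unique hφ (m := fun j => if j = i then x else m j) (i := i + 1) hi (l := l) (v := v)
    (by
      rw [← h, Finset.sum_range_succ, add_assoc]
      simp only [if_true]
      congr 2
      refine Finset.sum_congr rfl fun j hj => ?_
      rw [if_neg (Finset.mem_range.1 hj).ne]) i (Nat.lt_succ_self i)
  simpa using this

theorem ostep_inj (hφ : KConvex K φ) (hK : 1 ≤ K) {i : ℕ} {x y : I}
    (h : ostep φ i x = ostep φ i y) : x = y := by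
  have h1 : φ x = φ y := by
    have := congrFun h i.bodd
    simpa [ostep] using this
  exact hφ {0} (fun _ => x) y (by simpa using hK) (by simp [h1]) 0 (by simp)

theorem pos_start {l : Bool → I} {v v' : Bool → Γ} {i : ℕ} (h : pos φ l v i = pos φ l v' i) :
    v = v' := add_right_cancel h

/-- Two straight walks with the same positions in layers `i` and `i'` have the same labels, provided
there is a step of each parity between these layers. -/
theorem pos_far (hφ : KConvex K φ) {l l' : Bool → I} {v v' : Bool → Γ} {i i' : ℕ}
    (hii : i + 2 ≤ i') (hi : i' ≤ 2 * K) (h : pos φ l v i = pos φ l' v' i)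
    (h' : pos φ l v i' = pos φ l' v' i') : l = l' := by
  have key : ∀ (l : Bool → I) (v : Bool → Γ), pos φ l v i' =
      pos φ l v i + ∑ j ∈ Finset.Ico i i', ostep φ j (l j.bodd) := by
    intro l v
    rw [pos, pos, add_assoc, Finset.sum_range_add_sum_Ico _ (by omega)]
  rw [key, key l', h] at h'
  have h1 := add_left_cancel h'
  funext b
  have h2 := congrFun h1 b
  rw [ostep_sum_apply, ostep_sum_apply] at h2
  have e : ∀ l : Bool → I, ∑ j ∈ (Finset.Ico i i').filter (fun j => j.bodd = b), φ (l j.bodd) =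
      ((Finset.Ico i i').filter (fun j => j.bodd = b)).card • φ (l b) := by
    intro l
    rw [← Finset.sum_const]
    exact Finset.sum_congr rfl fun k hk => by rw [(Finset.mem_filter.1 hk).2]
  obtain ⟨j, hj⟩ : ∃ j, j ∈ (Finset.Ico i i').filter (fun j => j.bodd = b) := by
    by_cases hb : i.bodd = b
    · exact ⟨i, by simp [hb]; omega⟩
    · refine ⟨i + 1, ?_⟩
      simp only [Finset.mem_filter, Finset.mem_Ico, Nat.bodd_succ]
      refine ⟨by omega, ?_⟩
      cases b <;> cases hh : i.bodd <;> simp_all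
  refine hφ _ (fun _ => l b) (l' b) (card_bodd_le (fun k hk => ?_) b) ?_ j hj
  · have := (Finset.mem_Ico.1 hk).2; omega
  · rw [← e l', ← h2, e l, Finset.sum_const]

end Outer

/-! ### Gadgets -/

/-- A pair of vertices is bad for a potential `P` if the potential difference exceeds the length of
some walk between them by more than `lam`. -/
def Bad {V : Type} (r : V → V → Prop) (lam : ℝ) (P : V → ℝ) (a b : V) : Prop :=
  ∃ n, Reach r n a b ∧ n + lam < |P a - P b|

theorem Bad.symm {V : Type} {r : V → V → Prop} {lam : ℝ} {P : V → ℝ} {a b : V}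
    (h : Bad r lam P a b) : Bad r lam P b a := by
  obtain ⟨n, h1, h2⟩ := h
  exact ⟨n, h1.symm, by rwa [abs_sub_comm]⟩

/-- A graph with many pairs of ports at distance `D`, such that every pair has a potential which
rises by `D + E` between its two ports, although it rises by at most `1 + lam` along each edge, and
although only few pairs have to be given up for any fixed shortcut `(a, b)` to be useless.
The graph is undirected, generated by the relation `r`. -/
structure Gadget (D E : ℕ) (lam : ℝ) (kap : ℕ) where
  /-- vertices -/
  V : Type
  /-- labels of the ports -/
  I : Type
  /-- indices of the port pairs -/
  Q : Type
  [fV : Fintype V]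
  [fI : Fintype I]
  [fQ : Fintype Q]
  /-- an arbitrary vertex -/
  base : V
  r : V → V → Prop
  port : Bool → I → V
  port_inj : ∀ b x b' x', port b x = port b' x' → b = b' ∧ x = x'
  /-- a one-Lipschitz function, certifying that the two sides of ports are at distance `D` -/
  f : V → ℝ
  f_lip : ∀ a b, r a b → |f a - f b| ≤ 1
  f_false : ∀ x, f (port false x) = 0
  f_true : ∀ x, f (port true x) = D
  /-- the two ports of a pair -/
  lab : Q → Bool → I
  lab_inj : Function.Injective lab
  pot : Q → V → ℝ
  f_le_pot : ∀ q a, f a ≤ pot q a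
  pot_le : ∀ q a, pot q a ≤ f a + E
  pot_false : ∀ q, pot q (port false (lab q false)) = 0
  pot_true : ∀ q, pot q (port true (lab q true)) = D + E
  pot_lip : ∀ q a b, r a b → |pot q a - pot q b| ≤ 1 + lam
  reach : ∀ q, Reach r D (port false (lab q false)) (port true (lab q true))
  /-- a shortcut between `a` and `b` affects at most `kap` pairs -/
  kill : ∀ a b, {q | Bad r lam (pot q) a b}.ncard ≤ kap

attribute [instance] Gadget.fV Gadget.fI Gadget.fQ

/-- A function squeezed between one-Lipschitz functions which agree at `y` behaves like a
one-Lipschitz function at `y`. -/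
theorem sandwich {V : Type} {r : V → V → Prop} {lo P hi : V → ℝ}
    (hlo : ∀ x y, r x y → |lo x - lo y| ≤ 1) (hhi : ∀ x y, r x y → |hi x - hi y| ≤ 1)
    (h1 : ∀ x, lo x ≤ P x) (h2 : ∀ x, P x ≤ hi x) {x y : V} {n : ℕ} (h : Reach r n x y)
    (hy : lo y = hi y) : |P x - P y| ≤ n := by
  have a1 := abs_le.1 (h.lip hlo)
  have a2 := abs_le.1 (h.lip hhi)
  have := h1 x; have := h2 x; have := h1 y; have := h2 y
  rw [abs_le]; constructor <;> linarith

/-! ### The base gadget -/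

section Base

variable {I Γ : Type} [AddCommGroup Γ] {φ : I → Γ} {K : ℕ}

/-- The edges of the layered graph with positions in `Γ²` and step labels in `I`. -/
inductive BEdge (φ : I → Γ) (L : ℕ) : ℕ × (Bool → Γ) → ℕ × (Bool → Γ) → Prop
  | out {i : ℕ} (w : Bool → Γ) (x : I) (hi : i < L) : BEdge φ L (i, w) (i + 1, w + ostep φ i x)

open Classical in
/-- The height in the layered graph, raised by one outside the cone of `v`, and by `p i` at the
`i`-th position of the straight walk from `v` with labels `l`. -/
noncomputable def bfun (φ : I → Γ) (l : Bool → I) (v : Bool → Γ) (p : ℕ → ℝ) (X : ℕ × (Bool → Γ)) :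
    ℝ :=
  X.1 + if X.2 = pos φ l v X.1 then p X.1 else if Cone φ v X.1 X.2 then 0 else 1

theorem bfun_lip (hφ : KConvex K φ) (l : Bool → I) (v : Bool → Γ) (p : ℕ → ℝ) (mu : ℝ)
    (hmu : 0 ≤ mu) (hp : ∀ i, 0 ≤ p i ∧ p i ≤ 1) (hp' : ∀ i, p (i + 1) ≤ p i + mu)
    {X Y : ℕ × (Bool → Γ)} (h : BEdge φ (2 * K) X Y) :
    |bfun φ l v p X - bfun φ l v p Y| ≤ 1 + mu := by
  obtain ⟨w, x, hi⟩ := h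
  rename_i i
  have h0 := hp i; have h1 := hp (i + 1); have h2 := hp' i
  unfold bfun
  simp only
  push_cast
  rw [abs_le]
  by_cases hc : Cone φ v i w
  · have hc' := hc.succ x
    rw [if_pos hc, if_pos hc']
    by_cases hw : w = pos φ l v i
    · rw [if_pos hw]; split_ifs <;> constructor <;> linarith
    · have : ¬ w + ostep φ i x = pos φ l v (i + 1) := by
        intro e
        have hx := cone_step hφ hi hc e
        rw [pos_succ, hx] at e
        exact hw (add_right_cancel e)
      rw [if_neg hw, if_neg this]; constructor <;> linarith
  · have hw : w ≠ pos φ l v i := by rintro rfl; exact hc (cone_pos _ _ _)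
    rw [if_neg hw, if_neg hc]
    split_ifs <;> constructor <;> linarith

theorem bedge_reach (l : Bool → I) (v : Bool → Γ) (L i : ℕ) (hi : i ≤ L) :
    Reach (BEdge φ L) i (0, v) (i, pos φ l v i) := by
  induction i with
  | zero => rw [pos_zero]; exact Reach.refl _
  | succ i ih =>
    refine (ih (by omega)).step (Or.inl ?_)
    rw [pos_succ]
    exact BEdge.out _ _ (by omega)

end Base

/-- The layered graph as a gadget: the port pairs are the ends of the straight walks, and a shortcut
between layers that are at least two apart is contained in at most one straight walk. -/
theorem exists_base {K : ℕ} (hK : 1 ≤ K) {I Γ : Type} [Fintype I] [Fintype Γ] [AddCommGroup Γ]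
    {φ : I → Γ} (hφ : KConvex K φ) :
    ∃ G : Gadget (2 * K) 1 (1 / (2 * K : ℕ)) 1, Fintype.card G.I = Fintype.card Γ ^ 2 ∧
      Fintype.card G.V = (2 * K + 1) * Fintype.card Γ ^ 2 ∧
      Fintype.card G.Q = Fintype.card Γ ^ 2 * Fintype.card I ^ 2 := by
  classical
  have hK' : (1 : ℝ) ≤ K := by exact_mod_cast hK
  let tr : Fin (2 * K + 1) × (Bool → Γ) → ℕ × (Bool → Γ) := fun X => (X.1, X.2)
  let gp : ℕ → ℝ := fun i => min (i / (2 * K : ℕ)) 1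
  have hgp : ∀ i, 0 ≤ gp i ∧ gp i ≤ 1 := fun i =>
    ⟨le_min (by positivity) zero_le_one, min_le_right _ _⟩
  have hgp' : ∀ i, gp (i + 1) ≤ gp i + 1 / (2 * K : ℕ) := by
    intro i
    have h0 : (0 : ℝ) ≤ 1 / (2 * K : ℕ) := by positivity
    have : ((i + 1 : ℕ) : ℝ) / (2 * K : ℕ) = i / (2 * K : ℕ) + 1 / (2 * K : ℕ) := by
      push_cast; ring
    simp only [gp]
    rw [this, ← min_add_add_right]
    exact min_le_min le_rfl (by linarith)
  have hgpi : ∀ i, i ≤ 2 * K → gp i = i / (2 * K : ℕ) := by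
    intro i hi
    apply min_eq_left
    rw [div_le_one (by positivity)]
    exact_mod_cast hi
  have hK2 : ((2 * K : ℕ) : ℝ) / (2 * K : ℕ) = 1 := div_self (by positivity)
  have hlo : ∀ l v, ∀ X Y, BEdge φ (2 * K) (tr X) (tr Y) →
      |bfun φ l v (fun _ => 0) (tr X) - bfun φ l v (fun _ => 0) (tr Y)| ≤ 1 := fun l v X Y h => by
    simpa using bfun_lip hφ l v (fun _ => 0) 0 le_rfl (by simp) (by simp) h
  have hhi : ∀ l v, ∀ X Y, BEdge φ (2 * K) (tr X) (tr Y) →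
      |bfun φ l v (fun _ => 1) (tr X) - bfun φ l v (fun _ => 1) (tr Y)| ≤ 1 := fun l v X Y h => by
    simpa using bfun_lip hφ l v (fun _ => 1) 0 le_rfl (by simp) (by simp) h
  have hf : ∀ X Y, BEdge φ (2 * K) (tr X) (tr Y) → |((X.1 : ℕ) : ℝ) - ((Y.1 : ℕ) : ℝ)| ≤ 1 := by
    rintro ⟨i, w⟩ ⟨i', w'⟩ h
    simp only [tr] at h
    generalize (i : ℕ) = a at *
    generalize (i' : ℕ) = b at *
    cases h
    push_cast; simp
  refine ⟨{ V := Fin (2 * K + 1) × (Bool → Γ)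
            I := Bool → Γ
            Q := (Bool → Γ) × (Bool → I)
            base := 0
            r := fun X Y => BEdge φ (2 * K) (tr X) (tr Y)
            port := fun b w => (if b then Fin.last _ else 0, w)
            port_inj := ?_
            f := fun X => ((X.1 : ℕ) : ℝ)
            f_lip := hf
            f_false := by simp
            f_true := by simp
            lab := fun p b => if b then pos φ p.2 p.1 (2 * K) else p.1
            lab_inj := ?_
            pot := fun p X => bfun φ p.2 p.1 gp (tr X)
            f_le_pot := ?_
            pot_le := ?_
            pot_false := ?_
            pot_true := ?_
            pot_lip := fun p X Y h => bfun_lip hφ _ _ gp _ (by positivity) hgp hgp' h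
            reach := ?_
            kill := ?_ }, ?_, ?_, ?_⟩
  · intro b x b' x' h
    have h0 : (Fin.last (2 * K)) ≠ 0 := by
      intro h; have := congrArg Fin.val h; simp at this; omega
    simp only [Prod.mk.injEq] at h
    refine ⟨?_, h.2⟩
    cases b <;> cases b' <;> simp_all
  · rintro ⟨v, l⟩ ⟨v', l'⟩ h
    have h1 : v = v' := congrFun h false
    have h2 : pos φ l v (2 * K) = pos φ l' v' (2 * K) := congrFun h true
    subst h1
    rw [pos_far hφ (i := 0) (by omega) le_rfl (by simp [pos_zero]) h2]
  · intro q X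
    have := hgp X.1
    unfold bfun
    simp only [tr]
    split_ifs <;> linarith
  · intro q X
    have := hgp X.1
    unfold bfun
    simp only [tr]
    push_cast
    split_ifs <;> linarith
  · intro q
    simp [bfun, tr, pos_zero, hgpi]
  · intro q
    have := hgpi (2 * K) le_rfl
    rw [hK2] at this
    simp [bfun, tr, this]
  · intro q
    let F : ℕ × (Bool → Γ) → Fin (2 * K + 1) × (Bool → Γ) := fun X =>
      (⟨min X.1 (2 * K), by omega⟩, X.2)
    have := (bedge_reach (φ := φ) q.2 q.1 (2 * K) (2 * K) le_rfl).map
      (s := fun X Y => BEdge φ (2 * K) (tr X) (tr Y)) F ?_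
    · convert this using 1
      · simp [F]
      · simp [F, Fin.last]
    · rintro X Y ⟨w, x, hi⟩
      simp only [tr, F]
      rw [min_eq_left hi.le, min_eq_left (by omega)]
      exact BEdge.out _ _ hi
  · rintro ⟨i, w⟩ ⟨i', w'⟩
    -- a bad pair consists of two vertices on the straight walk, at least two layers apart
    have key : ∀ p ∈ {q : (Bool → Γ) × (Bool → I) | Bad (fun X Y => BEdge φ (2 * K) (tr X) (tr Y))
        (1 / (2 * K : ℕ)) (fun X => bfun φ q.2 q.1 gp (tr X)) (i, w) (i', w')},
        w = pos φ p.2 p.1 i ∧ w' = pos φ p.2 p.1 i' ∧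
          ((i : ℕ) + 2 ≤ i' ∨ (i' : ℕ) + 2 ≤ i) := by
      rintro ⟨v, l⟩ ⟨n, hn, hlt⟩
      have hlam : (0 : ℝ) ≤ 1 / (2 * K : ℕ) := by positivity
      have s1 : ∀ X : Fin (2 * K + 1) × (Bool → Γ),
          bfun φ l v (fun _ => 0) (tr X) ≤ bfun φ l v gp (tr X) := fun X => by
        have := hgp X.1
        unfold bfun; simp only [tr]; split_ifs <;> linarith
      have s2 : ∀ X : Fin (2 * K + 1) × (Bool → Γ),
          bfun φ l v gp (tr X) ≤ bfun φ l v (fun _ => 1) (tr X) := fun X => by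
        have := hgp X.1
        unfold bfun; simp only [tr]; split_ifs <;> linarith
      have s3 : ∀ X : Fin (2 * K + 1) × (Bool → Γ), X.2 ≠ pos φ l v X.1 →
          bfun φ l v (fun _ => 0) (tr X) = bfun φ l v (fun _ => 1) (tr X) := fun X hX => by
        unfold bfun; simp only [tr]; rw [if_neg hX, if_neg hX]
      have hw : w = pos φ l v i := by
        by_contra hw
        have := sandwich (hlo l v) (hhi l v) s1 s2 hn.symm (s3 _ hw)
        rw [abs_sub_comm] at this
        simp only at hlt
        linarith
      have hw' : w' = pos φ l v i' := by
        by_contra hw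
        have := sandwich (hlo l v) (hhi l v) s1 s2 hn (s3 _ hw)
        simp only at hlt
        linarith
      refine ⟨hw, hw', ?_⟩
      by_contra hfar
      have hnn := hn.lip hf
      have e1 : bfun φ l v gp (tr (i, w)) = i + (i : ℕ) / (2 * K : ℕ) := by
        have := hgpi i (by omega)
        simp [bfun, tr, hw, this]
      have e2 : bfun φ l v gp (tr (i', w')) = i' + (i' : ℕ) / (2 * K : ℕ) := by
        have := hgpi i' (by omega)
        simp [bfun, tr, hw', this]
      simp only at hlt hnn
      rw [e1, e2] at hlt
      have e3 : ((i : ℕ) : ℝ) + (i : ℕ) / (2 * K : ℕ) - (i' + (i' : ℕ) / (2 * K : ℕ)) =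
        ((i : ℕ) - (i' : ℕ)) * (1 + 1 / (2 * K : ℕ)) := by ring
      have e4 : |((i : ℕ) : ℝ) - (i' : ℕ)| ≤ 1 := by
        rw [abs_le]
        constructor
        · have : (i' : ℕ) ≤ i + 1 := by omega
          have : ((i' : ℕ) : ℝ) ≤ (i : ℕ) + 1 := by exact_mod_cast this
          linarith
        · have : (i : ℕ) ≤ i' + 1 := by omega
          have : ((i : ℕ) : ℝ) ≤ (i' : ℕ) + 1 := by exact_mod_cast this
          linarith
      rw [e3, abs_mul, abs_of_nonneg (by linarith : (0 : ℝ) ≤ 1 + 1 / (2 * K : ℕ))] at hlt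
      nlinarith
    rw [Set.ncard_le_one_iff]
    rintro ⟨v, l⟩ ⟨v', l'⟩ hp hp'
    obtain ⟨a1, a2, a3⟩ := key _ hp
    obtain ⟨b1, b2, -⟩ := key _ hp'
    simp only at a1 a2 b1 b2
    have hl : l = l' := by
      rcases a3 with a3 | a3
      · exact pos_far hφ a3 (by omega) (a1.symm.trans b1) (a2.symm.trans b2)
      · exact pos_far hφ a3 (by omega) (a2.symm.trans b2) (a1.symm.trans b1)
    subst hl
    rw [pos_start (a1.symm.trans b1)]
  · simp
  · simp
  · simp

/-! ### The recursive gadget: its graph and one-Lipschitz functions on it -/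

section Clamp

/-- The point of the interval `[e - t, e + t]` closest to `c`. -/
noncomputable def clamp (c e t : ℝ) : ℝ := max (e - t) (min (e + t) c)

theorem clamp_zero (c e : ℝ) : clamp c e 0 = e := by
  unfold clamp
  rw [sub_zero, add_zero]
  exact max_eq_left (min_le_left _ _)

theorem clamp_far {c e t : ℝ} (h : |c - e| ≤ t) : clamp c e t = c := by
  have := abs_le.1 h
  unfold clamp
  rw [min_eq_right (by linarith), max_eq_right (by linarith)]

theorem clamp_mono {c c' e e' t : ℝ} (hc : c ≤ c') (he : e ≤ e') : clamp c e t ≤ clamp c' e' t :=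
  max_le_max (by linarith) (min_le_min (by linarith) hc)

theorem clamp_const {c t : ℝ} (ht : 0 ≤ t) : clamp c c t = c := clamp_far (by simpa using ht)

theorem clamp_step_top {c e t : ℝ} (h : e ≤ c) (ht : 0 ≤ t) :
    clamp c e t ≤ clamp c e (t + 1) ∧ clamp c e (t + 1) ≤ clamp c e t + 1 := by
  unfold clamp
  rw [max_eq_right (le_min (by linarith) (by linarith)),
    max_eq_right (le_min (by linarith) (by linarith)), ← min_add_add_right]
  exact ⟨min_le_min (by linarith) le_rfl, min_le_min (by linarith) (by linarith)⟩

theorem clamp_step_bot {c e t : ℝ} (h : c ≤ e) (ht : 0 ≤ t) :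
    clamp c e (t + 1) ≤ clamp c e t ∧ clamp c e t ≤ clamp c e (t + 1) + 1 := by
  unfold clamp
  rw [min_eq_right (by linarith), min_eq_right (by linarith), ← max_add_add_right]
  exact ⟨max_le_max (by linarith) le_rfl, max_le_max (by linarith) (by linarith)⟩

end Clamp

section Rec

variable {D E kap : ℕ} {lam : ℝ} (G : Gadget D E lam kap)

open Classical in
/-- The side and the label of a port. -/
noncomputable def Gadget.kind (a : G.V) : Option (Bool × G.I) :=
  if h : ∃ p : Bool × G.I, a = G.port p.1 p.2 then some h.choose else none

theorem Gadget.kind_port (b : Bool) (x : G.I) : G.kind (G.port b x) = some (b, x) := by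
  have h : ∃ p : Bool × G.I, G.port b x = G.port p.1 p.2 := ⟨(b, x), rfl⟩
  unfold Gadget.kind
  rw [dif_pos h]
  have := G.port_inj _ _ _ _ h.choose_spec
  congr 1
  exact Prod.ext this.1.symm this.2.symm

theorem Gadget.kind_some {a : G.V} {b : Bool} {x : G.I} (h : G.kind a = some (b, x)) :
    a = G.port b x := by
  unfold Gadget.kind at h
  split_ifs at h with h'
  have := h'.choose_spec
  rw [Option.some.inj h] at this
  exact this

variable {Γ : Type} [AddCommGroup Γ] (φ : G.I → Γ) (K len : ℕ)

/-- The recursive graph: every position `w` of every layer `i` of a layered graph is replaced by a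
copy of the inner gadget, with a pendant path of length `len` attached to each of its vertices. The
step with label `x` from layer `i` connects the far ends of the paths attached to the `x`-ports of
side `i.bodd` of two copies; thus layers are alternately entered at either side. In the two end
layers the copies are replaced by stars: all pendant paths start at the base vertex. The tuple
`(i, w, a, j)` is the `j`-th vertex of the path attached to the vertex `a` of the copy at `w` in
layer `i`. -/
inductive REdge : ℕ × (Bool → Γ) × G.V × ℕ → ℕ × (Bool → Γ) × G.V × ℕ → Prop
  | core {i : ℕ} (w : Bool → Γ) {a b : G.V} (h0 : 0 < i) (hL : i < 2 * K) (h : G.r a b) :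
      REdge (i, w, a, 0) (i, w, b, 0)
  | pend {i : ℕ} (w : Bool → Γ) (a : G.V) {j : ℕ} (hi : i ≤ 2 * K) (hj : j < len) :
      REdge (i, w, if (i = 0 ∨ i = 2 * K) ∧ j = 0 then G.base else a, j) (i, w, a, j + 1)
  | out {i : ℕ} (w : Bool → Γ) (x : G.I) (hi : i < 2 * K) :
      REdge (i, w, G.port i.bodd x, len) (i + 1, w + ostep φ i x, G.port i.bodd x, len)

/-- The height inside a copy in layer `i`, between `0` at the ports where the layer is entered and
`D` at the ports where it is left. -/
noncomputable def lay (i : ℕ) (a : G.V) : ℝ :=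
  if i = 0 then D else if i = 2 * K then 0 else if i.bodd then G.f a else D - G.f a

/-- The direction of the path attached to `a`: upward at the ports where layer `i` is left and
downward at the ports where it is entered. -/
noncomputable def sgn (i : ℕ) (a : G.V) : ℝ :=
  match G.kind a with
  | none => 0
  | some (b, _) => if b = i.bodd then 1 else -1

/-- A height correction which is `c` on the copies and `e` on the outer edges. It is interpolated
along the pendant paths: starting from `c`, it stays constant as long as possible and then
approaches `e` with slope one. The outer edges are indexed by their upper ends. -/
noncomputable def corr (c : ℕ → (Bool → Γ) → G.V → ℝ) (e : ℕ → (Bool → Γ) → G.I → ℝ)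
    (i : ℕ) (w : Bool → Γ) (a : G.V) (j : ℕ) : ℝ :=
  match G.kind a with
  | none => c i w a
  | some (b, x) =>
    clamp (c i w a) (if b = i.bodd then e (i + 1) (w + ostep φ i x) x else e i w x) (len - j)

/-- The height in the recursive graph, corrected by `corr`. -/
noncomputable def rfun (c : ℕ → (Bool → Γ) → G.V → ℝ) (e : ℕ → (Bool → Γ) → G.I → ℝ)
    (i : ℕ) (w : Bool → Γ) (a : G.V) (j : ℕ) : ℝ :=
  i * (2 * len + D + 1) - D + lay G K i a + sgn G i a * j + corr G φ len c e i w a j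

/-- Conditions under which the corrected height is `1 + mu`-Lipschitz. -/
structure Good (M mu : ℝ) (c : ℕ → (Bool → Γ) → G.V → ℝ) (e : ℕ → (Bool → Γ) → G.I → ℝ) :
    Prop where
  c_nonneg : ∀ i w a, i ≤ 2 * K → 0 ≤ c i w a
  c_le : ∀ i w a, i ≤ 2 * K → c i w a ≤ M
  e_nonneg : ∀ i w x, 0 ≤ e i w x
  e_le : ∀ i w x, e i w x ≤ M
  bot : ∀ i w x, i ≤ 2 * K → c i w (G.port (!i.bodd) x) ≤ e i w x
  top : ∀ i w x, i ≤ 2 * K → e (i + 1) (w + ostep φ i x) x ≤ c i w (G.port i.bodd x)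
  ends : ∀ i w a b, i = 0 ∨ i = 2 * K → c i w a = c i w b
  core : ∀ i w a b, 0 < i → i < 2 * K → G.r a b →
    |(lay G K i a + c i w a) - (lay G K i b + c i w b)| ≤ 1 + mu

variable {G φ K len} {M mu : ℝ} {c c' : ℕ → (Bool → Γ) → G.V → ℝ}
  {e e' : ℕ → (Bool → Γ) → G.I → ℝ}

theorem lay_lip {i : ℕ} {a b : G.V} (h : G.r a b) : |lay G K i a - lay G K i b| ≤ 1 := by
  have := G.f_lip _ _ h
  unfold lay
  split_ifs
  · simp
  · simp
  · exact this
  · rw [show (D : ℝ) - G.f a - (D - G.f b) = -(G.f a - G.f b) by ring, abs_neg]; exact this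

theorem lay_ends {i : ℕ} (h : i = 0 ∨ i = 2 * K) (a b : G.V) : lay G K i a = lay G K i b := by
  rcases h with h | h
  · simp [lay, h]
  · subst h; simp [lay]

theorem lay_top {i : ℕ} (hi : i < 2 * K) (x : G.I) : lay G K i (G.port i.bodd x) = D := by
  unfold lay
  rw [if_neg hi.ne]
  split_ifs with h0 h1
  · rfl
  · rw [h1]; exact G.f_true x
  · rw [Bool.eq_false_iff.2 h1, G.f_false]; simp

theorem lay_bot {i : ℕ} (h0 : i ≠ 0) (x : G.I) : lay G K i (G.port (!i.bodd) x) = 0 := by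
  unfold lay
  rw [if_neg h0]
  split_ifs with h1 h2
  · rfl
  · rw [h2]; exact G.f_false x
  · rw [Bool.eq_false_iff.2 h2, Bool.not_false, G.f_true]; simp

theorem sgn_top (i : ℕ) (x : G.I) : sgn G i (G.port i.bodd x) = 1 := by
  simp [sgn, G.kind_port]

theorem sgn_bot (i : ℕ) (x : G.I) : sgn G i (G.port (!i.bodd) x) = -1 := by
  simp [sgn, G.kind_port]

theorem Good.nonneg (h : Good G φ K M mu c e) : 0 ≤ M :=
  (h.c_nonneg 0 0 G.base (by omega)).trans (h.c_le 0 0 G.base (by omega))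

/-- On the copies the correction is `c`, provided that the pendant paths are long enough. -/
theorem corr_zero (h : Good G φ K M mu c e) (hM : M ≤ len) {i : ℕ} (hi : i ≤ 2 * K)
    (w : Bool → Γ) (a : G.V) : corr G φ len c e i w a 0 = c i w a := by
  unfold corr
  have h1 := h.c_nonneg i w a hi
  have h2 := h.c_le i w a hi
  split
  · rfl
  · rename_i b x _
    apply clamp_far
    have h3 := h.e_nonneg (i + 1) (w + ostep φ i x) x
    have h4 := h.e_le (i + 1) (w + ostep φ i x) x
    have h5 := h.e_nonneg i w x
    have h6 := h.e_le i w x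
    rw [abs_le]
    split_ifs <;> constructor <;> push_cast <;> linarith

theorem rfun_zero (h : Good G φ K M mu c e) (hM : M ≤ len) {i : ℕ} (hi : i ≤ 2 * K)
    (w : Bool → Γ) (a : G.V) :
    rfun G φ K len c e i w a 0 = i * (2 * len + D + 1) - D + (lay G K i a + c i w a) := by
  unfold rfun
  rw [corr_zero h hM hi]; push_cast; ring

theorem rfun_pend (h : Good G φ K M mu c e) {i : ℕ} (hi : i ≤ 2 * K) (w : Bool → Γ) (a : G.V)
    {j : ℕ} (hj : j < len) :
    |rfun G φ K len c e i w a j - rfun G φ K len c e i w a (j + 1)| ≤ 1 := by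
  have hj' : (j : ℝ) + 1 ≤ len := by exact_mod_cast hj
  have e1 : (len : ℝ) - j = (len - (j + 1 : ℕ)) + 1 := by push_cast; ring
  have e2 : (0 : ℝ) ≤ len - (j + 1 : ℕ) := by push_cast; linarith
  unfold rfun sgn corr
  rcases hk : G.kind a with _ | ⟨b, x⟩
  · simp
  · have ha := G.kind_some hk
    simp only
    rw [e1]
    by_cases hb : b = i.bodd
    · rw [if_pos hb, if_pos hb]
      have h1 := h.top i w x hi
      rw [← hb, ← ha] at h1
      have h2 := clamp_step_top h1 e2
      rw [abs_le]
      constructor <;> push_cast at * <;> linarith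
    · rw [if_neg hb, if_neg hb]
      have h1 := h.bot i w x hi
      have hb' : (!i.bodd) = b := by cases b <;> cases hh : i.bodd <;> simp_all
      rw [hb', ← ha] at h1
      have h2 := clamp_step_bot h1 e2
      rw [abs_le]
      constructor <;> push_cast at * <;> linarith

theorem rfun_path (h : Good G φ K M mu c e) {i : ℕ} (hi : i ≤ 2 * K) (w : Bool → Γ) (a : G.V)
    {j : ℕ} (n : ℕ) (hj : j + n ≤ len) :
    |rfun G φ K len c e i w a j - rfun G φ K len c e i w a (j + n)| ≤ n := by
  induction n with
  | zero => simp
  | succ n ih =>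
    have h1 := ih (by omega)
    have h2 := rfun_pend (len := len) h hi w a (j := j + n) (by omega)
    have := abs_sub_le (rfun G φ K len c e i w a j) (rfun G φ K len c e i w a (j + n))
      (rfun G φ K len c e i w a (j + (n + 1)))
    rw [add_assoc] at h2
    push_cast
    linarith

theorem rfun_ends (h : Good G φ K M mu c e) (hM : M ≤ len) {i : ℕ} (hi : i = 0 ∨ i = 2 * K)
    (w : Bool → Γ) (a b : G.V) :
    rfun G φ K len c e i w a 0 = rfun G φ K len c e i w b 0 := by
  rw [rfun_zero h hM (by omega), rfun_zero h hM (by omega), lay_ends hi a b, h.ends i w a b hi]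

theorem rfun_out {i : ℕ} (hi : i < 2 * K) (w : Bool → Γ) (x : G.I) :
    rfun G φ K len c e (i + 1) (w + ostep φ i x) (G.port i.bodd x) len -
      rfun G φ K len c e i w (G.port i.bodd x) len = 1 := by
  have h1 := lay_bot (G := G) (K := K) (i := i + 1) (by omega) x
  have h2 := sgn_bot (G := G) (i + 1) x
  have hb : (!(i + 1).bodd) = i.bodd := by simp
  rw [hb] at h1 h2
  unfold rfun
  rw [h1, h2, lay_top hi, sgn_top]
  unfold corr
  rw [G.kind_port]
  simp only [sub_self, clamp_zero]
  rw [if_neg (by simp)]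
  simp
  ring

theorem rfun_lip (h : Good G φ K M mu c e) (hM : M ≤ len) (hmu : 0 ≤ mu)
    {X Y : ℕ × (Bool → Γ) × G.V × ℕ} (hXY : REdge G φ K len X Y) :
    |rfun G φ K len c e X.1 X.2.1 X.2.2.1 X.2.2.2 -
      rfun G φ K len c e Y.1 Y.2.1 Y.2.2.1 Y.2.2.2| ≤ 1 + mu := by
  cases hXY with
  | @core i w a b h0 hL hab =>
    simp only
    rw [rfun_zero h hM hL.le, rfun_zero h hM hL.le]
    have := h.core i w a b h0 hL hab
    rwa [add_sub_add_left_eq_sub]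
  | @pend i w a j hi hj =>
    have h1 := rfun_pend h hi w a hj
    simp only
    split_ifs with hc
    · obtain ⟨hc, rfl⟩ := hc
      rw [rfun_ends h hM hc w G.base a]
      linarith
    · linarith
  | @out i w x hi =>
    have := rfun_out (φ := φ) (c := c) (e := e) (len := len) hi w x
    simp only
    rw [abs_sub_comm, this]
    simpa using hmu

theorem rfun_mono {i : ℕ} {w : Bool → Γ} (hc : ∀ a, c i w a ≤ c' i w a)
    (he : ∀ i w x, e i w x ≤ e' i w x) (a : G.V) (j : ℕ) :
    rfun G φ K len c e i w a j ≤ rfun G φ K len c' e' i w a j := by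
  unfold rfun
  have : corr G φ len c e i w a j ≤ corr G φ len c' e' i w a j := by
    unfold corr
    split
    · exact hc a
    · refine clamp_mono (hc a) ?_
      split_ifs <;> exact he _ _ _
  linarith

/-! ### Corrections given by straight walks -/

variable (φ) in
open Classical in
/-- A correction of the copies which is `0` in the cone of `v` and `M` outside of it, except for
given values along a straight walk from `v`. -/
noncomputable def pathC (l : Bool → G.I) (v : Bool → Γ) (M : ℝ) (pc : ℕ → G.V → ℝ) (i : ℕ)
    (w : Bool → Γ) (a : G.V) : ℝ :=
  if w = pos φ l v i then pc i a else if Cone φ v i w then 0 else M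

variable (φ) in
open Classical in
/-- The correction of the outer edges corresponding to `pathC`; the value on the edge with label `x`
and upper end `w` in layer `i` is determined by its lower end. -/
noncomputable def pathE (l : Bool → G.I) (v : Bool → Γ) (M : ℝ) (pv : ℕ → ℝ) (i : ℕ)
    (w : Bool → Γ) (x : G.I) : ℝ :=
  if i = 0 then M else if w = pos φ l v i ∧ x = l (i - 1).bodd then pv i else
    if Cone φ v (i - 1) (w - ostep φ (i - 1) x) then 0 else M

theorem good_path (hφ : KConvex K φ) (l : Bool → G.I) (v : Bool → Γ) (hM : 0 ≤ M) (hmu : 0 ≤ mu)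
    {pc : ℕ → G.V → ℝ} {pv : ℕ → ℝ} (hpc : ∀ i a, i ≤ 2 * K → 0 ≤ pc i a ∧ pc i a ≤ M)
    (hpv : ∀ i, i ≠ 0 → 0 ≤ pv i ∧ pv i ≤ M)
    (hbot : ∀ i, i ≠ 0 → i ≤ 2 * K → pc i (G.port (!i.bodd) (l !i.bodd)) ≤ pv i)
    (htop : ∀ i, i ≤ 2 * K → pv (i + 1) ≤ pc i (G.port i.bodd (l i.bodd)))
    (hends : ∀ i a b, i = 0 ∨ i = 2 * K → pc i a = pc i b)
    (hcore : ∀ i a b, 0 < i → i < 2 * K → G.r a b →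
      |(lay G K i a + pc i a) - (lay G K i b + pc i b)| ≤ 1 + mu) :
    Good G φ K M mu (pathC φ l v M pc) (pathE φ l v M pv) where
  c_nonneg i w a hi := by
    unfold pathC; split_ifs
    exacts [(hpc i a hi).1, le_rfl, hM]
  c_le i w a hi := by
    unfold pathC; split_ifs
    exacts [(hpc i a hi).2, hM, le_rfl]
  e_nonneg i w x := by
    unfold pathE; split_ifs with h
    exacts [hM, (hpv i h).1, le_rfl, hM]
  e_le i w x := by
    unfold pathE; split_ifs with h
    exacts [le_rfl, (hpv i h).2, hM, le_rfl]
  bot i w x hi := by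
    have hle : ∀ a, pathC φ l v M pc i w a ≤ M := by
      intro a; unfold pathC; split_ifs
      exacts [(hpc i a hi).2, hM, le_rfl]
    unfold pathE
    split_ifs with h0 h1 h2
    · exact hle _
    · obtain ⟨i, rfl⟩ := Nat.exists_eq_succ_of_ne_zero h0
      have := hbot _ h0 hi
      simp only [Nat.succ_eq_add_one, Nat.bodd_succ, Bool.not_not, add_tsub_cancel_right] at *
      unfold pathC
      rw [if_pos h1.1, h1.2]
      exact this
    · -- the copy lies in the cone, and not on the walk, since the cone is left by no other edge
      obtain ⟨i, rfl⟩ := Nat.exists_eq_succ_of_ne_zero h0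
      simp only [Nat.succ_eq_add_one, add_tsub_cancel_right] at h1 h2 hi ⊢
      have h3 := h2.succ x
      rw [sub_add_cancel] at h3
      unfold pathC
      rw [if_neg, if_pos h3]
      intro hw
      exact h1 ⟨hw, cone_step hφ (by omega) h2 (by rw [sub_add_cancel, hw])⟩
    · exact hle _
  top i w x hi := by
    have h0 : ∀ a, 0 ≤ pathC φ l v M pc i w a := by
      intro a; unfold pathC; split_ifs
      exacts [(hpc i a hi).1, le_rfl, hM]
    unfold pathE
    rw [if_neg (by omega), add_tsub_cancel_right, add_sub_cancel_right]
    split_ifs with h1 h2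
    · obtain ⟨h1, rfl⟩ := h1
      rw [pos_succ] at h1
      have := htop i hi
      unfold pathC
      rwa [if_pos (add_right_cancel h1)]
    · exact h0 _
    · unfold pathC
      rw [if_neg, if_neg h2]
      rintro rfl
      exact h2 (cone_pos _ _ _)
  ends i w a b hi := by
    unfold pathC; split_ifs
    exacts [hends i a b hi, rfl, rfl]
  core i w a b h0 hL hab := by
    have := lay_lip (K := K) (i := i) hab
    unfold pathC; split_ifs
    · exact hcore i a b h0 hL hab
    · rw [add_sub_add_right_eq_sub]; linarith
    · rw [add_sub_add_right_eq_sub]; linarith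

/-- Away from the walk, the corrected height does not depend on the values along the walk. -/
theorem rfun_off {l : Bool → G.I} {v : Bool → Γ} {pc pc' : ℕ → G.V → ℝ} {pv pv' : ℕ → ℝ} {i : ℕ}
    {w : Bool → Γ} (hw : w ≠ pos φ l v i) (a : G.V) (j : ℕ) :
    rfun G φ K len (pathC φ l v M pc) (pathE φ l v M pv) i w a j =
      rfun G φ K len (pathC φ l v M pc') (pathE φ l v M pv') i w a j := by
  have h1 : pathC φ l v M pc i w = pathC φ l v M pc' i w := by
    funext a; unfold pathC; rw [if_neg hw, if_neg hw]
  have h2 : pathE φ l v M pv i w = pathE φ l v M pv' i w := by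
    funext x; unfold pathE
    have : ¬ (w = pos φ l v i ∧ x = l (i - 1).bodd) := fun h => hw h.1
    simp only [if_neg this]
  have h3 : ∀ x, pathE φ l v M pv (i + 1) (w + ostep φ i x) x =
      pathE φ l v M pv' (i + 1) (w + ostep φ i x) x := by
    intro x
    have : ¬ (w + ostep φ i x = pos φ l v (i + 1) ∧ x = l (i + 1 - 1).bodd) := by
      rintro ⟨h, rfl⟩
      rw [pos_succ] at h
      exact hw (add_right_cancel h)
    unfold pathE
    rw [if_neg this, if_neg this]
  unfold rfun corr
  simp only [h1, h2, h3]

end Rec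

/-! ### Walks along the copies of a straight walk -/

section Stay

variable {D E kap : ℕ} {lam : ℝ} {G : Gadget D E lam kap} {Γ : Type} [AddCommGroup Γ]
  {φ : G.I → Γ} {K len : ℕ}

variable (G φ K len) in
/-- Edges of the recursive graph between copies on the straight walk from `v` with labels `l`. -/
def Stay (l : Bool → G.I) (v : Bool → Γ) (X Y : ℕ × (Bool → Γ) × G.V × ℕ) : Prop :=
  REdge G φ K len X Y ∧ X.2.1 = pos φ l v X.1 ∧ Y.2.1 = pos φ l v Y.1

variable (G K len) in
/-- Edges inside a single copy in layer `i` of the recursive graph, including pendant paths. -/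
inductive CEdge (i : ℕ) : G.V × ℕ → G.V × ℕ → Prop
  | core {a b : G.V} (h0 : 0 < i) (hL : i < 2 * K) (h : G.r a b) : CEdge i (a, 0) (b, 0)
  | pend (a : G.V) {j : ℕ} (hj : j < len) :
      CEdge i (if (i = 0 ∨ i = 2 * K) ∧ j = 0 then G.base else a, j) (a, j + 1)

variable (len) in
/-- The projection of the copies on a straight walk to the one in layer `i`. -/
def prj (l : Bool → G.I) (i : ℕ) (X : ℕ × (Bool → Γ) × G.V × ℕ) : G.V × ℕ :=
  if X.1 = i then X.2.2 else
    if X.1 < i then (G.port (!i.bodd) (l !i.bodd), len) else (G.port i.bodd (l i.bodd), len)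

theorem stay_out (hφ : KConvex K φ) (hK : 1 ≤ K) {l : Bool → G.I} {v w : Bool → Γ} {i : ℕ} {x : G.I}
    (h1 : w = pos φ l v i) (h2 : w + ostep φ i x = pos φ l v (i + 1)) : x = l i.bodd := by
  rw [pos_succ, h1] at h2
  exact ostep_inj hφ hK (add_left_cancel h2)

theorem prj_edge (hφ : KConvex K φ) (hK : 1 ≤ K) {l : Bool → G.I} {v : Bool → Γ} (i₀ : ℕ)
    {X Y : ℕ × (Bool → Γ) × G.V × ℕ} (h : Stay G φ K len l v X Y) :
    prj len l i₀ X = prj len l i₀ Y ∨ CEdge G K len i₀ (prj len l i₀ X) (prj len l i₀ Y) := by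
  obtain ⟨h, h1, h2⟩ := h
  cases h with
  | @core i w a b h0 hL hab =>
    by_cases hi : i = i₀
    · subst hi
      right
      simp only [prj, if_true]
      exact CEdge.core h0 hL hab
    · left
      simp only [prj, if_neg hi]
  | @pend i w a j hi hj =>
    by_cases hi : i = i₀
    · subst hi
      right
      simp only [prj, if_true]
      exact CEdge.pend a hj
    · left
      simp only [prj, if_neg hi]
  | @out i w x hi =>
    left
    simp only at h1 h2
    have hx := stay_out hφ hK h1 h2
    subst hx
    simp only [prj]
    rcases lt_trichotomy i i₀ with h | h | h
    · rw [if_neg h.ne, if_pos h]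
      by_cases h' : i + 1 = i₀
      · subst h'
        simp
      · rw [if_neg h', if_pos (by omega)]
    · subst h
      simp
    · rw [if_neg h.ne', if_neg h.not_gt, if_neg (by omega), if_neg (by omega)]

variable (G K) in
/-- What is known about a position `Y` in a copy reached from `(a, j)` in at most `n` steps: it lies
on the same pendant path, or it was reached by passing through the interior of the copy. -/
def CState (i : ℕ) (a : G.V) (j n : ℕ) (Y : G.V × ℕ) : Prop :=
  (Y.1 = a ∧ j ≤ Y.2 + n ∧ Y.2 ≤ j + n) ∨
    ∃ m, ((i = 0 ∨ i = 2 * K) ∨ Reach G.r m a Y.1) ∧ m + j + Y.2 ≤ n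

theorem CState.succ {i : ℕ} {a : G.V} {j n : ℕ} {Y : G.V × ℕ} (h : CState G K i a j n Y) :
    CState G K i a j (n + 1) Y := by
  rcases h with ⟨h1, h2, h3⟩ | ⟨m, h1, h2⟩
  · exact Or.inl ⟨h1, by omega, by omega⟩
  · exact Or.inr ⟨m, h1, by omega⟩

theorem CState.step {i : ℕ} {a : G.V} {j n : ℕ} {Y Z : G.V × ℕ} (h : CState G K i a j n Y)
    (e : CEdge G K len i Y Z ∨ CEdge G K len i Z Y) : CState G K i a j (n + 1) Z := by
  have hcore : ∀ b b', (G.r b b' ∨ G.r b' b) → CState G K i a j n (b, 0) →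
      CState G K i a j (n + 1) (b', 0) := by
    rintro b b' hb (⟨h1, h2, h3⟩ | ⟨m, h1, h2⟩)
    · simp only at h1 h2 h3
      subst h1
      exact Or.inr ⟨1, Or.inr (Reach.single hb), by simp only; omega⟩
    · simp only at h1 h2
      exact Or.inr ⟨m + 1, h1.imp_right fun h => h.step hb, by simp only; omega⟩
  rcases e with e | e
  · cases e with
    | core h0 hL hab => exact hcore _ _ (Or.inl hab) h
    | @pend b j' hj =>
      rcases h with ⟨h1, h2, h3⟩ | ⟨m, h1, h2⟩
      · simp only at h1 h2 h3
        split_ifs at h1 with hc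
        · exact Or.inr ⟨0, Or.inl hc.1, by simp only; omega⟩
        · exact Or.inl ⟨h1, by simp only; omega, by simp only; omega⟩
      · simp only at h1 h2
        refine Or.inr ⟨m, ?_, by simp only; omega⟩
        split_ifs at h1 with hc
        · exact Or.inl hc.1
        · exact h1
  · cases e with
    | core h0 hL hab => exact hcore _ _ (Or.inr hab) h
    | @pend b j' hj =>
      rcases h with ⟨h1, h2, h3⟩ | ⟨m, h1, h2⟩
      · simp only at h1 h2 h3
        by_cases hc : (i = 0 ∨ i = 2 * K) ∧ j' = 0
        · exact Or.inr ⟨0, Or.inl hc.1, by simp only; omega⟩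
        · rw [if_neg hc]
          exact Or.inl ⟨h1, by simp only; omega, by simp only; omega⟩
      · simp only at h1 h2
        refine Or.inr ⟨m, ?_, by simp only; omega⟩
        split_ifs with hc
        · exact Or.inl hc.1
        · exact h1

theorem stay_state (hφ : KConvex K φ) (hK : 1 ≤ K) {l : Bool → G.I} {v : Bool → Γ}
    {i : ℕ} {w : Bool → Γ} {a : G.V} {j n : ℕ} {Y : ℕ × (Bool → Γ) × G.V × ℕ}
    (h : Reach (Stay G φ K len l v) n (i, w, a, j) Y) :
    CState G K i a j n (prj len l i Y) := by
  generalize hX : (i, w, a, j) = X at h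
  induction h with
  | refl => subst hX; exact Or.inl (by simp [prj])
  | step _ e ih =>
    rcases e with e | e
    · rcases prj_edge hφ hK i e with h | h
      · rw [← h]; exact (ih hX).succ
      · exact (ih hX).step (Or.inl h)
    · rcases prj_edge hφ hK i e with h | h
      · rw [h]; exact (ih hX).succ
      · exact (ih hX).step (Or.inr h)

variable {M mu nu : ℝ} {c : ℕ → (Bool → Γ) → G.V → ℝ} {e : ℕ → (Bool → Γ) → G.I → ℝ}

/-- Walks between two vertices of the same copy which never leave the straight walk. -/
theorem stay_same (hφ : KConvex K φ) (hK : 1 ≤ K) (hM : M ≤ len) (hG : Good G φ K M mu c e)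
    (hnu : 0 ≤ nu) {l : Bool → G.I} {v : Bool → Γ} {i : ℕ} (hi : i ≤ 2 * K) {w : Bool → Γ}
    {a b : G.V} {j j' n : ℕ} (hj : j ≤ len) (hj' : j' ≤ len)
    (h : Reach (Stay G φ K len l v) n (i, w, a, j) (i, w, b, j'))
    (hab : 0 < i → i < 2 * K → ∀ m, Reach G.r m a b →
      |(lay G K i a + c i w a) - (lay G K i b + c i w b)| ≤ m + nu) :
    |rfun G φ K len c e i w a j - rfun G φ K len c e i w b j'| ≤ n + nu := by
  rcases stay_state hφ hK h with ⟨h1, h2, h3⟩ | ⟨m, h1, h2⟩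
  · simp only [prj, if_true] at h1 h2 h3
    subst h1
    rcases le_total j j' with hle | hle
    · obtain ⟨t, rfl⟩ := Nat.exists_eq_add_of_le hle
      have := rfun_path hG hi w b t hj'
      have ht : (t : ℝ) ≤ n := by exact_mod_cast (by omega : t ≤ n)
      linarith
    · obtain ⟨t, rfl⟩ := Nat.exists_eq_add_of_le hle
      have := rfun_path hG hi w b t hj
      have ht : (t : ℝ) ≤ n := by exact_mod_cast (by omega : t ≤ n)
      rw [abs_sub_comm]
      linarith
  · simp only [prj, if_true] at h1 h2
    have p1 := rfun_path (len := len) hG hi w a (j := 0) j (by omega)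
    have p2 := rfun_path (len := len) hG hi w b (j := 0) j' (by omega)
    have p3 : |rfun G φ K len c e i w a 0 - rfun G φ K len c e i w b 0| ≤ m + nu := by
      by_cases he : i = 0 ∨ i = 2 * K
      · rw [rfun_ends hG hM he w a b, sub_self, abs_zero]
        positivity
      · rw [rfun_zero hG hM hi, rfun_zero hG hM hi, add_sub_add_left_eq_sub]
        exact hab (by omega) (by omega) m (h1.resolve_left he)
    rw [zero_add] at p1 p2
    have hn : (m : ℝ) + j + j' ≤ n := by exact_mod_cast h2
    rw [abs_le] at *
    constructor <;> linarith [p1.1, p1.2, p2.1, p2.2, p3.1, p3.2]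

/-- Walks between copies in consecutive layers which never leave the straight walk. -/
theorem stay_next (hφ : KConvex K φ) (hK : 1 ≤ K) (hM : M ≤ len) (hG : Good G φ K M mu c e)
    (hnu : 0 ≤ nu) {l : Bool → G.I} {v : Bool → Γ} {i : ℕ} (hi : i < 2 * K) {w w' : Bool → Γ}
    {a b : G.V} {j j' n : ℕ} (hj : j ≤ len) (hj' : j' ≤ len) (hw : w = pos φ l v i)
    (hw' : w' = pos φ l v (i + 1))
    (h : Reach (Stay G φ K len l v) n (i, w, a, j) (i + 1, w', b, j'))
    (ha : 0 < i → i < 2 * K → ∀ m, Reach G.r m a (G.port i.bodd (l i.bodd)) →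
      |(lay G K i a + c i w a) - (lay G K i (G.port i.bodd (l i.bodd)) +
        c i w (G.port i.bodd (l i.bodd)))| ≤ m + nu)
    (hb : 0 < i + 1 → i + 1 < 2 * K → ∀ m, Reach G.r m (G.port i.bodd (l i.bodd)) b →
      |(lay G K (i + 1) (G.port i.bodd (l i.bodd)) + c (i + 1) w' (G.port i.bodd (l i.bodd))) -
        (lay G K (i + 1) b + c (i + 1) w' b)| ≤ m + nu) :
    |rfun G φ K len c e i w a j - rfun G φ K len c e (i + 1) w' b j'| ≤ n + 2 * nu := by
  obtain ⟨X, Y, n₁, n₂, hX, hY, hXY, hn, r1, r2⟩ := h.cross (fun X => X.1 ≤ i) (by simp) (by simp)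
  -- the boundary is crossed by the edge of the straight walk between the layers
  obtain ⟨hX', hY'⟩ : X = (i, w, G.port i.bodd (l i.bodd), len) ∧
      Y = (i + 1, w', G.port i.bodd (l i.bodd), len) := by
    rcases hXY with ⟨h, h1, h2⟩ | ⟨h, h1, h2⟩
    · cases h with
      | core => exact absurd hX hY
      | pend => exact absurd hX hY
      | @out i' u x hi' =>
        simp only at hX hY
        obtain rfl : i' = i := by omega
        simp only at h1 h2
        have hx := stay_out hφ hK h1 h2
        subst hx
        rw [h2, hw', h1, hw]
        exact ⟨rfl, rfl⟩
    · cases h with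
      | core => exact absurd hX hY
      | pend => exact absurd hX hY
      | @out i' u x hi' =>
        simp only at hX hY
        omega
  subst hX' hY'
  have q1 := stay_same hφ hK hM hG hnu hi.le hj le_rfl r1 ha
  have q2 := stay_same hφ hK hM hG hnu (by omega) le_rfl hj' r2 hb
  have q3 := rfun_out (φ := φ) (c := c) (e := e) (len := len) hi w (l i.bodd)
  rw [show w + ostep φ i (l i.bodd) = w' by rw [hw, hw', pos_succ]] at q3
  have hn' : (n₁ : ℝ) + 1 + n₂ = n := by exact_mod_cast hn
  rw [abs_le] at *
  constructor <;> linarith [q1.1, q1.2, q2.1, q2.2]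

end Stay

/-! ### The potentials of the recursive gadget -/

section Pot

variable {D E kap : ℕ} {lam : ℝ} (G : Gadget D E lam kap) {Γ : Type} [AddCommGroup Γ]
  {φ : G.I → Γ} (K : ℕ)

/-- Along a straight walk, the potential gains `E` over the height in each copy. -/
noncomputable def gain (p : G.Q) (i : ℕ) (a : G.V) : ℝ :=
  if i = 0 then 0 else if i = 2 * K then (2 * K - 1) * E else
    E * (i - 1) + if i.bodd then G.pot p a - G.f a else E - (G.pot p a - G.f a)

/-- The gain at the step into layer `i` of a straight walk. -/
noncomputable def egain (E K i : ℕ) : ℝ := E * (min (i : ℝ) (2 * K) - 1)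

variable {G K}

/-- The potential of the recursive gadget loses no more per edge than the inner one. -/
theorem good_gain (hφ : KConvex K φ) (hK : 1 ≤ K) (hlam : 0 ≤ lam) (p : G.Q) (v : Bool → Γ) :
    Good G φ K ((2 * K - 1) * E) lam (pathC φ (G.lab p) v ((2 * K - 1) * E) (gain G K p))
      (pathE φ (G.lab p) v ((2 * K - 1) * E) (egain E K)) := by
  have hK' : (1 : ℝ) ≤ K := by exact_mod_cast hK
  have hE : (0 : ℝ) ≤ E := by positivity
  have hM : (0 : ℝ) ≤ (2 * K - 1) * E := mul_nonneg (by linarith) hE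
  have hmin : ∀ i : ℕ, i ≤ 2 * K → min (i : ℝ) (2 * K) = i := fun i hi =>
    min_eq_left (by exact_mod_cast hi)
  refine good_path hφ _ _ hM hlam ?_ ?_ ?_ ?_ ?_ ?_
  · intro i a hi
    have h1 := G.f_le_pot p a
    have h2 := G.pot_le p a
    unfold gain
    split_ifs with h0 hL hb
    · exact ⟨le_rfl, hM⟩
    · exact ⟨hM, le_rfl⟩
    all_goals
      have h3 : (1 : ℝ) ≤ i := by exact_mod_cast Nat.one_le_iff_ne_zero.2 h0
      have h4 : (i : ℝ) + 1 ≤ 2 * K := by exact_mod_cast (by omega : i + 1 ≤ 2 * K)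
      constructor <;> nlinarith
  · intro i hi
    have h1 : (1 : ℝ) ≤ i := by exact_mod_cast Nat.one_le_iff_ne_zero.2 hi
    have h2 : 1 ≤ min (i : ℝ) (2 * K) := le_min h1 (by linarith)
    have h3 : min (i : ℝ) (2 * K) ≤ 2 * K := min_le_right _ _
    unfold egain
    constructor <;> nlinarith
  · intro i h0 hi
    unfold gain egain
    rw [hmin i hi, if_neg h0]
    split_ifs with hL hb
    · rw [hL]; push_cast; linarith
    · rw [hb, Bool.not_true, G.pot_false, G.f_false]; linarith
    · rw [Bool.eq_false_iff.2 hb, Bool.not_false, G.pot_true, G.f_true]; linarith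
  · intro i hi
    unfold gain egain
    split_ifs with h0 hL hb
    · subst h0
      rw [min_eq_left (by push_cast; linarith)]; push_cast; linarith
    · rw [min_eq_right (by subst hL; push_cast; linarith)]; linarith
    · rw [hmin _ (by omega), hb, G.pot_true, G.f_true]; push_cast; linarith
    · rw [hmin _ (by omega), Bool.eq_false_iff.2 hb, G.pot_false, G.f_false]; push_cast; linarith
  · intro i a b hi
    rcases hi with hi | hi
    · simp [gain, hi]
    · subst hi; simp [gain]
  · intro i a b h0 hL hab
    have := G.pot_lip p a b hab
    unfold gain lay
    rw [if_neg h0.ne', if_neg h0.ne', if_neg h0.ne', if_neg h0.ne', if_neg hL.ne, if_neg hL.ne,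
      if_neg hL.ne, if_neg hL.ne]
    rw [abs_le] at *
    split_ifs <;> constructor <;> linarith

/-- Constant values along the straight walk lead to one-Lipschitz functions. -/
theorem good_const (hφ : KConvex K φ) (l : Bool → G.I) (v : Bool → Γ) {M t : ℝ} (h0 : 0 ≤ t)
    (h1 : t ≤ M) :
    Good G φ K M 0 (pathC φ l v M (fun _ _ => t)) (pathE φ l v M (fun _ => t)) := by
  refine good_path hφ _ _ (h0.trans h1) le_rfl (fun _ _ _ => ⟨h0, h1⟩) (fun _ _ => ⟨h0, h1⟩)
    (fun _ _ _ => le_rfl) (fun _ _ => le_rfl) (fun _ _ _ _ => rfl) ?_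
  intro i a b _ _ hab
  rw [add_sub_add_right_eq_sub, add_zero]
  exact lay_lip hab

theorem pathC_mono {l : Bool → G.I} {v : Bool → Γ} {M : ℝ} {pc pc' : ℕ → G.V → ℝ} {i : ℕ}
    {w : Bool → Γ} {a : G.V} (h : pc i a ≤ pc' i a) :
    pathC φ l v M pc i w a ≤ pathC φ l v M pc' i w a := by
  unfold pathC; split_ifs
  exacts [h, le_rfl, le_rfl]

theorem pathE_mono {l : Bool → G.I} {v : Bool → Γ} {M : ℝ} {pv pv' : ℕ → ℝ} {i : ℕ}
    {w : Bool → Γ} {x : G.I} (h : i ≠ 0 → pv i ≤ pv' i) :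
    pathE φ l v M pv i w x ≤ pathE φ l v M pv' i w x := by
  unfold pathE; split_ifs with h0
  exacts [le_rfl, h h0, le_rfl, le_rfl]

/-- The height plus the gain is the potential of the inner gadget, up to sign and a constant. -/
theorem gain_core (p : G.Q) (v : Bool → Γ) {M : ℝ} {i : ℕ} (h0 : 0 < i) (hL : i < 2 * K)
    {w : Bool → Γ} (hw : w = pos φ (G.lab p) v i) {a b : G.V}
    (hab : ¬ Bad G.r lam (G.pot p) a b) (m : ℕ) (hm : Reach G.r m a b) :
    |(lay G K i a + pathC φ (G.lab p) v M (gain G K p) i w a) -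
      (lay G K i b + pathC φ (G.lab p) v M (gain G K p) i w b)| ≤ m + lam := by
  have h : |G.pot p a - G.pot p b| ≤ m + lam := by
    by_contra h
    exact hab ⟨m, hm, not_le.1 h⟩
  unfold pathC
  rw [if_pos hw, if_pos hw]
  unfold gain lay
  rw [if_neg h0.ne', if_neg h0.ne', if_neg h0.ne', if_neg h0.ne', if_neg hL.ne, if_neg hL.ne,
    if_neg hL.ne, if_neg hL.ne]
  rw [abs_le] at *
  split_ifs <;> constructor <;> linarith

end Pot

/-! ### The recursive gadget -/

section Step

variable {D E kap : ℕ} {lam : ℝ} (G : Gadget D E lam kap) {Γ : Type} [AddCommGroup Γ]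
  (φ : G.I → Γ) (K len : ℕ)

/-- The vertices of the recursive graph. -/
abbrev RVert (Γ : Type) : Type := Fin (2 * K + 1) × (Bool → Γ) × G.V × Fin (len + 1)

variable {G K len} in
/-- A vertex of the recursive graph with the bounds on its layer and on its position on the pendant
path forgotten. -/
def rtr (X : RVert G K len Γ) : ℕ × (Bool → Γ) × G.V × ℕ := (X.1, X.2.1, X.2.2.1, X.2.2.2)

/-- The potential of the recursive graph for a starting position and an inner pair of ports. -/
noncomputable def rpot (q : (Bool → Γ) × G.Q) (X : RVert G K len Γ) : ℝ :=
  rfun G φ K len (pathC φ (G.lab q.2) q.1 ((2 * K - 1) * E) (gain G K q.2))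
    (pathE φ (G.lab q.2) q.1 ((2 * K - 1) * E) (egain E K)) X.1 X.2.1 X.2.2.1 X.2.2.2

variable {G φ K len}

theorem rpot_lip (hφ : KConvex K φ) (hK : 1 ≤ K) (hlam : 0 ≤ lam)
    (hlen : ((2 * K - 1) * E : ℝ) ≤ len) (q : (Bool → Γ) × G.Q) {X Y : RVert G K len Γ}
    (h : REdge G φ K len (rtr X) (rtr Y)) :
    |rpot G φ K len q X - rpot G φ K len q Y| ≤ 1 + lam := by
  have := rfun_lip (good_gain hφ hK hlam q.2 q.1) hlen hlam h
  unfold rpot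
  exact this

/-- The walks witnessing that a pair is bad follow the straight walk: a walk leaving it visits a
vertex where two one-Lipschitz functions squeezing the potential agree. -/
theorem bad_stay (hφ : KConvex K φ) (hK : 1 ≤ K) (hlam : 0 ≤ lam)
    (hlen : ((2 * K - 1) * E : ℝ) ≤ len) {q : (Bool → Γ) × G.Q} {X Y : RVert G K len Γ}
    (h : Bad (fun X Y => REdge G φ K len (rtr X) (rtr Y)) (2 * lam) (rpot G φ K len q) X Y) :
    X.2.1 = pos φ (G.lab q.2) q.1 X.1 ∧ Y.2.1 = pos φ (G.lab q.2) q.1 Y.1 ∧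
      ∃ n : ℕ, Reach (Stay G φ K len (G.lab q.2) q.1) n (rtr X) (rtr Y) ∧
        n + 2 * lam < |rpot G φ K len q X - rpot G φ K len q Y| := by
  obtain ⟨n, hn, hlt⟩ := h
  have hK' : (1 : ℝ) ≤ K := by exact_mod_cast hK
  have hM : (0 : ℝ) ≤ (2 * K - 1) * E := mul_nonneg (by linarith) (by positivity)
  have hG := good_gain (φ := φ) hφ hK hlam q.2 q.1
  -- replacing the gain on the whole straight walk by the same value in `[0, (2 * K - 1) * E]` gives a
  -- one-Lipschitz function; the potential is squeezed between those of the two extreme values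
  let bnd : ℝ → RVert G K len Γ → ℝ := fun t X =>
    rfun G φ K len (pathC φ (G.lab q.2) q.1 ((2 * K - 1) * E) (fun _ _ => t))
      (pathE φ (G.lab q.2) q.1 ((2 * K - 1) * E) (fun _ => t)) X.1 X.2.1 X.2.2.1 X.2.2.2
  have hb : ∀ t, 0 ≤ t → t ≤ ((2 * K - 1) * E : ℝ) → ∀ X Y : RVert G K len Γ,
      REdge G φ K len (rtr X) (rtr Y) → |bnd t X - bnd t Y| ≤ 1 := by
    intro t h0 h1 X Y h
    have := rfun_lip (good_const hφ (G.lab q.2) q.1 h0 h1) hlen le_rfl h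
    rwa [add_zero] at this
  have hgain : ∀ (i : ℕ) a, i ≤ 2 * K →
      0 ≤ gain G K q.2 i a ∧ gain G K q.2 i a ≤ (2 * K - 1) * E := by
    intro i a hi
    have h1 := hG.c_nonneg i (pos φ (G.lab q.2) q.1 i) a hi
    have h2 := hG.c_le i (pos φ (G.lab q.2) q.1 i) a hi
    unfold pathC at h1 h2
    rw [if_pos rfl] at h1 h2
    exact ⟨h1, h2⟩
  have hegain : ∀ i : ℕ, i ≠ 0 → 0 ≤ egain E K i ∧ egain E K i ≤ (2 * K - 1) * E := by
    intro i hi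
    have h1 : (1 : ℝ) ≤ i := by exact_mod_cast Nat.one_le_iff_ne_zero.2 hi
    have h2 : 1 ≤ min (i : ℝ) (2 * K) := le_min h1 (by linarith)
    have h3 : min (i : ℝ) (2 * K) ≤ 2 * K := min_le_right _ _
    have hE : (0 : ℝ) ≤ E := by positivity
    unfold egain
    constructor <;> nlinarith
  have s1 : ∀ X, bnd 0 X ≤ rpot G φ K len q X := fun X =>
    rfun_mono (fun a => pathC_mono (hgain X.1 a (by omega)).1)
      (fun i w x => pathE_mono fun h => (hegain i h).1) _ _
  have s2 : ∀ X, rpot G φ K len q X ≤ bnd ((2 * K - 1) * E) X := fun X =>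
    rfun_mono (fun a => pathC_mono (hgain X.1 a (by omega)).2)
      (fun i w x => pathE_mono fun h => (hegain i h).2) _ _
  have off : ∀ (Z W : RVert G K len Γ) (m : ℕ),
      Reach (fun X Y : RVert G K len Γ => REdge G φ K len (rtr X) (rtr Y)) m W Z →
      Z.2.1 ≠ pos φ (G.lab q.2) q.1 Z.1 →
      |rpot G φ K len q W - rpot G φ K len q Z| ≤ m := fun Z W m hm hZ =>
    sandwich (hb 0 le_rfl hM) (hb _ hM le_rfl) s1 s2 hm (rfun_off hZ _ _)
  refine ⟨?_, ?_, n, ?_, hlt⟩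
  · by_contra hX
    have := off X Y n hn.symm hX
    rw [abs_sub_comm] at this
    linarith
  · by_contra hY
    have := off Y X n hn hY
    linarith
  · rcases hn.stay_or_leave (fun Z => Z.2.1 = pos φ (G.lab q.2) q.1 Z.1) with h | h
    · exact h.map rtr (fun _ _ h => h)
    · obtain ⟨Z, n₁, n₂, hZ, rfl, h1, h2⟩ := h
      have e1 := off Z X n₁ h1 hZ
      have e2 := off Z Y n₂ h2.symm hZ
      rw [abs_sub_comm] at e2
      have := abs_sub_le (rpot G φ K len q X) (rpot G φ K len q Z) (rpot G φ K len q Y)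
      push_cast at hlt
      linarith

/-- A shortcut inside a copy is only bad for pairs whose inner pair is killed by it; a shortcut
between consecutive layers determines the label of the step between them, and one of its two inner
parts kills the inner pair; a longer shortcut is contained in a single straight walk. -/
theorem rkill_le [Finite Γ] (hφ : KConvex K φ) (hK : 1 ≤ K) (hkap : 1 ≤ kap) (hlam : 0 ≤ lam)
    (hlen : ((2 * K - 1) * E : ℝ) ≤ len) (X Y : RVert G K len Γ) (hXY : X.1 ≤ Y.1) :
    {q | Bad (fun X Y => REdge G φ K len (rtr X) (rtr Y)) (2 * lam) (rpot G φ K len q) X Y}.ncard ≤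
      2 * kap := by
  classical
  set S := {q | Bad (fun X Y => REdge G φ K len (rtr X) (rtr Y)) (2 * lam)
    (rpot G φ K len q) X Y} with hS
  have key : ∀ q ∈ S, X.2.1 = pos φ (G.lab q.2) q.1 X.1 ∧ Y.2.1 = pos φ (G.lab q.2) q.1 Y.1 ∧
      ∃ n : ℕ, Reach (Stay G φ K len (G.lab q.2) q.1) n (rtr X) (rtr Y) ∧
        n + 2 * lam < |rpot G φ K len q X - rpot G φ K len q Y| := fun q hq =>
    bad_stay hφ hK hlam hlen hq
  -- the inner pair determines the starting position
  have hinj : Set.InjOn Prod.snd S := by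
    rintro ⟨v, p⟩ hq ⟨v', p'⟩ hq' h
    simp only at h
    subst h
    have hv : v = v' := pos_start ((key _ hq).1.symm.trans (key _ hq').1)
    rw [hv]
  rw [← hinj.ncard_image]
  have fin : ∀ T : Set G.Q, T.Finite := fun T => Set.toFinite T
  obtain ⟨⟨i, hi⟩, w, a, ⟨j, hj⟩⟩ := X
  obtain ⟨⟨i', hi'⟩, w', b, ⟨j', hj'⟩⟩ := Y
  simp only [rtr, Fin.mk_le_mk] at key hXY
  rcases (by omega : i' = i ∨ i' = i + 1 ∨ i + 2 ≤ i') with h | h | h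
  · subst h
    refine (Set.ncard_le_ncard (t := {p | Bad G.r lam (G.pot p) a b}) ?_ (fin _)).trans
      ((G.kill a b).trans (by omega))
    rintro _ ⟨⟨v, p⟩, hq, rfl⟩
    obtain ⟨h1, h2, n, hn, hlt⟩ := key _ hq
    simp only at h1 h2 hn
    by_contra hp
    rw [← h1] at h2
    subst h2
    have := stay_same hφ hK hlen (good_gain hφ hK hlam p v) hlam (by omega) (by omega) (by omega)
      hn (fun h0 hL => gain_core p v h0 hL h1 hp)
    simp only [rpot] at hlt
    linarith
  · subst h
    rcases S.eq_empty_or_nonempty with h | ⟨⟨v₀, p₀⟩, hq₀⟩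
    · rw [h]; simp
    · obtain ⟨h1₀, h2₀, -⟩ := key _ hq₀
      simp only at h1₀ h2₀
      set P := G.port i.bodd (G.lab p₀ i.bodd) with hP
      refine (Set.ncard_le_ncard (t := {p | Bad G.r lam (G.pot p) a P} ∪
        {p | Bad G.r lam (G.pot p) P b}) ?_ (fin _)).trans ((Set.ncard_union_le _ _).trans
          ((add_le_add (G.kill a P) (G.kill P b)).trans (by omega)))
      rintro _ ⟨⟨v, p⟩, hq, rfl⟩
      obtain ⟨h1, h2, n, hn, hlt⟩ := key _ hq
      simp only at h1 h2 hn
      have hlab : G.lab p i.bodd = G.lab p₀ i.bodd := by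
        apply stay_out (l := G.lab p₀) (w := w) (v := v₀) hφ hK h1₀
        rw [← h2₀, h2, pos_succ, h1]
      rw [← hlab] at hP
      by_contra hp
      simp only [Set.mem_union, Set.mem_ofPred_eq, not_or] at hp
      have := stay_next hφ hK hlen (good_gain hφ hK hlam p v) hlam (by omega) (by omega) (by omega)
        h1 h2 hn (fun h0 hL => gain_core p v h0 hL h1 (by rw [← hP]; exact hp.1))
        (fun h0 hL => gain_core p v h0 hL h2 (by rw [← hP]; exact hp.2))
      simp only [rpot] at hlt
      linarith
  · refine le_trans ?_ (by omega : 1 ≤ 2 * kap)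
    rw [Set.ncard_le_one_iff (fin _)]
    rintro _ _ ⟨⟨v, p⟩, hq, rfl⟩ ⟨⟨v', p'⟩, hq', rfl⟩
    obtain ⟨h1, h2, -⟩ := key _ hq
    obtain ⟨h1', h2', -⟩ := key _ hq'
    exact G.lab_inj (pos_far hφ h (by omega) (h1.symm.trans h1') (h2.symm.trans h2'))

theorem rkill [Finite Γ] (hφ : KConvex K φ) (hK : 1 ≤ K) (hkap : 1 ≤ kap) (hlam : 0 ≤ lam)
    (hlen : ((2 * K - 1) * E : ℝ) ≤ len) (X Y : RVert G K len Γ) :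
    {q | Bad (fun X Y => REdge G φ K len (rtr X) (rtr Y)) (2 * lam) (rpot G φ K len q) X Y}.ncard ≤
      2 * kap := by
  rcases le_total X.1 Y.1 with h | h
  · exact rkill_le hφ hK hkap hlam hlen X Y h
  · have := rkill_le hφ hK hkap hlam hlen Y X h
    convert this using 2
    ext q
    exact ⟨Bad.symm, Bad.symm⟩

/-- Each pendant path starts at its copy, and in the end layers at the centre of the star. -/
theorem pend_reach {i j : ℕ} (w : Bool → Γ) (a : G.V) (hi : i ≤ 2 * K) (hj : j ≤ len)
    (h0 : 0 < j) : Reach (REdge G φ K len) j (i, w, if i = 0 ∨ i = 2 * K then G.base else a, 0)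
      (i, w, a, j) := by
  induction j with
  | zero => omega
  | succ j ih =>
    have e := REdge.pend (φ := φ) w a hi hj
    by_cases hj0 : j = 0
    · subst hj0
      simp only [and_true] at e
      exact Reach.single (Or.inl e)
    · simp only [hj0, and_false, if_false] at e
      exact (ih (by omega) (by omega)).step (Or.inl e)

/-- The walk from the start of the recursive graph to the upper end of the step out of layer `i`,
traversing the inner gadgets along the pair `p`. -/
theorem path_reach (hlen : 0 < len) (p : G.Q) (v : Bool → Γ) (i : ℕ) (hi : i < 2 * K) :
    Reach (REdge G φ K len) (len + 1 + i * (2 * len + D + 1)) (0, v, G.base, 0)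
      (i + 1, pos φ (G.lab p) v (i + 1), G.port i.bodd (G.lab p i.bodd), len) := by
  have hout : ∀ i, i < 2 * K → Reach (REdge G φ K len) 1
      (i, pos φ (G.lab p) v i, G.port i.bodd (G.lab p i.bodd), len)
      (i + 1, pos φ (G.lab p) v (i + 1), G.port i.bodd (G.lab p i.bodd), len) := by
    intro i hi
    have := REdge.out (len := len) (φ := φ) (pos φ (G.lab p) v i) (G.lab p i.bodd) hi
    rw [← pos_succ] at this
    exact Reach.single (Or.inl this)
  induction i with
  | zero =>
    have h1 := pend_reach (φ := φ) (i := 0) v (G.port (Nat.bodd 0) (G.lab p (Nat.bodd 0)))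
      (Nat.zero_le (2 * K)) (le_refl len) hlen
    have h2 := hout 0 hi
    rw [pos_zero] at h2
    simpa using h1.trans h2
  | succ i ih =>
    have h1 := ih (by omega)
    have hne : ¬ (i + 1 = 0 ∨ i + 1 = 2 * K) := by omega
    have h2 := (pend_reach (K := K) (φ := φ) (i := i + 1) (pos φ (G.lab p) v (i + 1))
      (G.port i.bodd (G.lab p i.bodd)) (by omega) (le_refl len) hlen).symm
    have h4 := pend_reach (K := K) (φ := φ) (i := i + 1) (pos φ (G.lab p) v (i + 1))
      (G.port (i + 1).bodd (G.lab p (i + 1).bodd)) (by omega) (le_refl len) hlen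
    rw [if_neg hne] at h2 h4
    have h3 : Reach G.r D (G.port i.bodd (G.lab p i.bodd))
        (G.port (i + 1).bodd (G.lab p (i + 1).bodd)) := by
      have := G.reach p
      rw [Nat.bodd_succ]
      cases i.bodd
      · exact this
      · exact this.symm
    have h3' := h3.map (s := REdge G φ K len) (fun a => (i + 1, pos φ (G.lab p) v (i + 1), a, 0))
      (fun a b h => REdge.core _ (by omega) hi h)
    have h5 := hout (i + 1) hi
    have := (((h1.trans h2).trans h3').trans h4).trans h5
    convert this using 1
    ring

theorem good_zero : Good G φ K 0 0 (fun _ _ _ => 0) (fun _ _ _ => 0) where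
  c_nonneg _ _ _ _ := le_rfl
  c_le _ _ _ _ := le_rfl
  e_nonneg _ _ _ := le_rfl
  e_le _ _ _ := le_rfl
  bot _ _ _ _ := le_rfl
  top _ _ _ _ := le_rfl
  ends _ _ _ _ _ := rfl
  core i w a b _ _ h := by simpa using lay_lip h

theorem rfun_const {t : ℝ} (i : ℕ) (w : Bool → Γ) (a : G.V) {j : ℕ} (hj : j ≤ len) :
    rfun G φ K len (fun _ _ _ => t) (fun _ _ _ => t) i w a j =
      rfun G φ K len (fun _ _ _ => 0) (fun _ _ _ => 0) i w a j + t := by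
  have hj' : (0 : ℝ) ≤ len - j := by
    have : (j : ℝ) ≤ len := by exact_mod_cast hj
    linarith
  have : ∀ t : ℝ, corr G φ len (fun _ _ _ => t) (fun _ _ _ => t) i w a j = t := by
    intro t
    unfold corr
    split
    · rfl
    · simp only [ite_self]; exact clamp_const hj'
  unfold rfun
  rw [this, this]; ring

end Step

/-- One step of the recursion: the loss `lam` per edge and the number of affected pairs are doubled,
while `E` is multiplied by `2 * K - 1`, the number of inner gadgets on a straight walk. The pendant
paths have length `(2 * K - 1) * E`, the largest possible difference between two corrections. -/
theorem exists_step {D E kap K : ℕ} {lam : ℝ} (G : Gadget D E lam kap) {Γ : Type} [AddCommGroup Γ]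
    [Fintype Γ] {φ : G.I → Γ} (hφ : KConvex K φ) (hK : 1 ≤ K) (hE : 1 ≤ E) (hkap : 1 ≤ kap)
    (hlam : 0 ≤ lam) :
    ∃ G' : Gadget (2 * K * (2 * ((2 * K - 1) * E) + 1) + (2 * K - 1) * D) ((2 * K - 1) * E)
        (2 * lam) (2 * kap),
      Fintype.card G'.I = Fintype.card Γ ^ 2 ∧
      Fintype.card G'.V =
        (2 * K + 1) * (Fintype.card Γ ^ 2 * (Fintype.card G.V * ((2 * K - 1) * E + 1))) ∧
      Fintype.card G'.Q = Fintype.card Γ ^ 2 * Fintype.card G.Q := by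
  classical
  obtain ⟨len, hlen⟩ : ∃ len, len = (2 * K - 1) * E := ⟨_, rfl⟩
  have hlen0 : 0 < len := by
    rw [hlen]; exact Nat.mul_pos (by omega) hE
  have hcast : (len : ℝ) = (2 * K - 1) * E := by
    rw [hlen]; push_cast [Nat.cast_sub (by omega : 1 ≤ 2 * K)]; ring
  have hD : ((2 * K * (2 * len + 1) + (2 * K - 1) * D : ℕ) : ℝ) =
      (2 * K) * (2 * len + D + 1) - D := by
    push_cast [Nat.cast_sub (by omega : 1 ≤ 2 * K)]; ring
  rw [← hlen]
  have hgood := fun p v => good_gain (φ := φ) hφ hK hlam p v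
  refine ⟨{ V := RVert G K len Γ
            I := Bool → Γ
            Q := (Bool → Γ) × G.Q
            base := (0, 0, G.base, 0)
            r := fun X Y => REdge G φ K len (rtr X) (rtr Y)
            port := fun b w => (if b then Fin.last _ else 0, w, G.base, 0)
            port_inj := ?_
            f := fun X => rfun G φ K len (fun _ _ _ => 0) (fun _ _ _ => 0) X.1 X.2.1 X.2.2.1 X.2.2.2
            f_lip := ?_
            f_false := ?_
            f_true := ?_
            lab := fun p b => if b then pos φ (G.lab p.2) p.1 (2 * K) else p.1
            lab_inj := ?_
            pot := rpot G φ K len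
            f_le_pot := ?_
            pot_le := ?_
            pot_false := ?_
            pot_true := ?_
            pot_lip := ?_
            reach := ?_
            kill := rkill hφ hK hkap hlam hcast.ge }, ?_, ?_, ?_⟩
  · intro b x b' x' h
    have h0 : (Fin.last (2 * K)) ≠ 0 := by
      intro h; have := congrArg Fin.val h; simp at this; omega
    simp only [Prod.mk.injEq] at h
    refine ⟨?_, h.2.1⟩
    cases b <;> cases b' <;> simp_all
  · intro X Y h
    have := rfun_lip good_zero (by positivity) le_rfl h
    rwa [add_zero] at this
  · intro x
    simp only [Bool.false_eq_true, if_false, Fin.val_zero]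
    rw [rfun_zero good_zero (by positivity) (by omega)]
    simp [lay]
  · intro x
    simp only [if_true, Fin.val_last, Fin.val_zero]
    rw [rfun_zero good_zero (by positivity) le_rfl, hD]
    have : ¬ 2 * K = 0 := by omega
    simp only [lay, if_neg this, if_true]
    push_cast; ring
  · rintro ⟨v, p⟩ ⟨v', p'⟩ h
    have h1 : v = v' := congrFun h false
    have h2 : pos φ (G.lab p) v (2 * K) = pos φ (G.lab p') v' (2 * K) := congrFun h true
    subst h1
    rw [G.lab_inj (pos_far hφ (i := 0) (by omega) le_rfl (by simp [pos_zero]) h2)]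
  · intro q X
    exact rfun_mono (fun a => (hgood q.2 q.1).c_nonneg _ _ _ (by omega))
      (fun i w x => (hgood q.2 q.1).e_nonneg _ _ _) _ _
  · intro q X
    have hj : (X.2.2.2 : ℕ) ≤ len := Nat.lt_succ_iff.1 X.2.2.2.2
    rw [hcast, ← rfun_const _ _ _ hj]
    exact rfun_mono (fun a => (hgood q.2 q.1).c_le _ _ _ (by omega))
      (fun i w x => (hgood q.2 q.1).e_le _ _ _) _ _
  · intro q
    simp only [rpot, Bool.false_eq_true, if_false, Fin.val_zero]
    rw [rfun_zero (hgood q.2 q.1) hcast.ge (by omega)]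
    simp [lay, pathC, gain, pos_zero]
  · intro q
    simp only [rpot, if_true, Fin.val_last, Fin.val_zero]
    rw [rfun_zero (hgood q.2 q.1) hcast.ge le_rfl, hD, hcast]
    have : ¬ 2 * K = 0 := by omega
    simp only [lay, pathC, gain, if_neg this, if_true]
    push_cast; ring
  · intro q X Y h
    have := rpot_lip hφ hK hlam hcast.ge q h
    linarith
  · intro q
    let F : ℕ × (Bool → Γ) × G.V × ℕ → RVert G K len Γ := fun X =>
      (⟨min X.1 (2 * K), by omega⟩, X.2.1, X.2.2.1, ⟨min X.2.2.2 len, by omega⟩)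
    have h1 := path_reach (K := K) (φ := φ) hlen0 q.2 q.1 (2 * K - 1) (by omega)
    rw [Nat.sub_add_cancel (by omega : 1 ≤ 2 * K)] at h1
    have h2 := (pend_reach (K := K) (φ := φ) (i := 2 * K) (pos φ (G.lab q.2) q.1 (2 * K))
      (G.port (2 * K - 1).bodd (G.lab q.2 (2 * K - 1).bodd)) le_rfl le_rfl hlen0).symm
    rw [if_pos (Or.inr rfl)] at h2
    have := (h1.trans h2).map (s := fun X Y => REdge G φ K len (rtr X) (rtr Y)) F ?_
    · convert this using 1
      · zify [(by omega : 1 ≤ 2 * K)]; ring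
      · simp [F]
      · simp [F, Fin.last]
    · intro X Y h
      have hFX : ∀ X, X.1 ≤ 2 * K → X.2.2.2 ≤ len → rtr (F X) = X := by
        intro X h1 h2
        simp only [rtr, F, min_eq_left h1, min_eq_left h2]
      have hb : (X.1 ≤ 2 * K ∧ X.2.2.2 ≤ len) ∧ (Y.1 ≤ 2 * K ∧ Y.2.2.2 ≤ len) := by
        cases h <;> simp only <;> omega
      rw [hFX X hb.1.1 hb.1.2, hFX Y hb.2.1 hb.2.2]
      exact h
  · simp
  · simp [RVert]
  · simp

/-! ### Sizes of the gadgets -/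

theorem exists_card_bound (K r M : ℕ) :
    ∃ q₀, ∀ q, q₀ ≤ q → 1 ≤ q →
      M * ((K * q + 1) ^ r * (K * r * q ^ 2 + 1)) ^ 2 ≤ q ^ (2 * r + 5) := by
  refine ⟨M * ((K + 1) ^ r * (K * r + 1)) ^ 2, fun q hq hq1 => ?_⟩
  have h1 : K * q + 1 ≤ (K + 1) * q := by nlinarith
  have h2 : K * r * q ^ 2 + 1 ≤ (K * r + 1) * q ^ 2 := by
    have := Nat.one_le_pow 2 q hq1; nlinarith
  calc M * ((K * q + 1) ^ r * (K * r * q ^ 2 + 1)) ^ 2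
      ≤ M * (((K + 1) * q) ^ r * ((K * r + 1) * q ^ 2)) ^ 2 := by gcongr
    _ = (M * ((K + 1) ^ r * (K * r + 1)) ^ 2) * q ^ (2 * r + 4) := by rw [mul_pow (K + 1) q r]; ring
    _ ≤ q * q ^ (2 * r + 4) := by gcongr
    _ = q ^ (2 * r + 5) := by ring

/-- Gadgets after `t` steps of the recursion. If `n` is the number of vertices, there are about
`n * q ^ 12` port pairs, where `n ≤ q ^ (11 * (2 ^ (t + 2) - 2))`: one factor `q` pays for the
constants. -/
theorem exists_level {K : ℕ} (hK : 1 ≤ K) (t : ℕ) :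
    ∃ D A q₀ : ℕ, D ≤ 6 * K * (t + 1) * (2 * K - 1) ^ t ∧
      ∀ (E : ℕ) (lam : ℝ) (kap : ℕ), E = (2 * K - 1) ^ t → lam = 2 ^ t / (2 * K : ℕ) →
        kap = 2 ^ t → ∀ q, q₀ ≤ q → 1 ≤ q → ∃ G : Gadget D E lam kap,
          (∀ a, a + 5 = 11 * 2 ^ (t + 1) → Fintype.card G.I ≤ q ^ a) ∧
          (∀ a, a + 22 = 11 * 2 ^ (t + 2) → Fintype.card G.V ≤ q ^ a) ∧
          q ≤ Fintype.card G.V ∧ Fintype.card G.V * q ^ 12 ≤ A * Fintype.card G.Q := by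
  induction t with
  | zero =>
    obtain ⟨q₀, h0⟩ := exists_card_bound K 6 (2 * K + 1)
    refine ⟨2 * K, 2 * K + 1, q₀, by simp; omega, ?_⟩
    rintro E lam kap rfl rfl rfl q hq hq1
    obtain ⟨Γ, _, _, φ, hφ, hc⟩ := exists_kconvex K q 6 (I := Fin 6 → Fin q) (by simp)
    obtain ⟨G, hI, hV, hQ⟩ := exists_base hK hφ
    have h1 := h0 q hq hq1
    rw [← hc] at h1
    rw [pow_zero, pow_zero, pow_zero]
    refine ⟨G, fun a ha => ?_, fun a ha => ?_, ?_, ?_⟩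
    · obtain rfl : a = 17 := by norm_num at ha; omega
      rw [hI]; exact (Nat.le_mul_of_pos_left _ (by omega)).trans h1
    · obtain rfl : a = 22 := by norm_num at ha; omega
      rw [hV]
      exact h1.trans (Nat.pow_le_pow_right hq1 (by omega))
    · rw [hV]
      have h2 : q ≤ Fintype.card Γ := by
        rw [hc]
        calc q ≤ K * q + 1 := by nlinarith
          _ ≤ (K * q + 1) ^ 6 := Nat.le_self_pow (by omega) _
          _ ≤ _ := Nat.le_mul_of_pos_right _ (by omega)
      nlinarith
    · rw [hV, hQ]
      simp only [Fintype.card_pi, Fintype.card_fin, Finset.prod_const, Finset.card_univ]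
      apply le_of_eq; ring
  | succ t ih =>
    obtain ⟨D, A, q₁, hD, ih⟩ := ih
    obtain ⟨r, hr⟩ : ∃ r, r + 5 = 11 * 2 ^ (t + 1) :=
      ⟨11 * 2 ^ (t + 1) - 5, by have := Nat.one_le_two_pow (n := t + 1); omega⟩
    obtain ⟨s, hs⟩ : ∃ s, s + 22 = 11 * 2 ^ (t + 2) :=
      ⟨11 * 2 ^ (t + 2) - 22, by have := Nat.one_le_two_pow (n := t); rw [pow_add]; omega⟩
    obtain ⟨E₀, hE₀⟩ : ∃ E₀, E₀ = (2 * K - 1) ^ t := ⟨_, rfl⟩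
    have hE1 : 1 ≤ E₀ := by rw [hE₀]; exact Nat.one_le_pow _ _ (by omega)
    obtain ⟨len, hlen⟩ : ∃ len, len = (2 * K - 1) * E₀ := ⟨_, rfl⟩
    obtain ⟨q₂, h0⟩ := exists_card_bound K r ((2 * K + 1) * (len + 1))
    refine ⟨2 * K * (2 * len + 1) + (2 * K - 1) * D, (2 * K + 1) * (len + 1) * A, max q₁ q₂, ?_, ?_⟩
    · have h1 : 1 ≤ len := by rw [hlen]; exact Nat.mul_pos (by omega) hE1
      calc 2 * K * (2 * len + 1) + (2 * K - 1) * D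
          ≤ 2 * K * (2 * len + len) + (2 * K - 1) * (6 * K * (t + 1) * E₀) := by
            rw [← hE₀] at hD; gcongr
        _ = 6 * K * (t + 1 + 1) * ((2 * K - 1) * E₀) := by rw [hlen]; ring
        _ = _ := by rw [hE₀, ← pow_succ']
    rintro E lam kap hE hlam hkap q hq hq1
    obtain ⟨G, gI, gV, gq, gQ⟩ := ih E₀ _ _ hE₀ rfl rfl q (le_of_max_le_left hq) hq1
    obtain ⟨Γ, _, _, φ, hφ, hc⟩ := exists_kconvex K q r (gI r hr)
    obtain ⟨G', hI, hV, hQ⟩ := exists_step G hφ hK hE1 Nat.one_le_two_pow (by positivity)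
    have h1 := h0 q (le_of_max_le_right hq) hq1
    rw [← hc] at h1
    rw [pow_succ', ← hE₀] at hE
    rw [pow_succ', mul_div_assoc] at hlam
    rw [pow_succ'] at hkap
    subst hE hlam hkap
    rw [hlen]
    refine ⟨G', fun a ha => ?_, fun a ha => ?_, ?_, ?_⟩
    · obtain rfl : a = 2 * r + 5 := by rw [pow_succ'] at ha; omega
      rw [hI]
      exact (Nat.le_mul_of_pos_left _ (by positivity)).trans h1
    · rw [hV, ← hlen]
      calc _ = ((2 * K + 1) * (len + 1) * Fintype.card Γ ^ 2) * Fintype.card G.V := by ring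
        _ ≤ q ^ (2 * r + 5) * q ^ s := by gcongr; exact gV s hs
        _ = q ^ (2 * r + 5 + s) := by rw [← pow_add]
        _ ≤ q ^ a := by
          apply Nat.pow_le_pow_right hq1
          rw [show t + 1 + 2 = t + 1 + 1 + 1 from rfl, pow_succ', pow_succ'] at ha
          rw [show t + 2 = t + 1 + 1 from rfl, pow_succ'] at hs
          omega
    · rw [hV]
      have : 1 ≤ Fintype.card Γ := Fintype.card_pos_iff.2 ⟨0⟩
      calc q ≤ Fintype.card G.V := gq
        _ = 1 * (1 ^ 2 * (Fintype.card G.V * 1)) := by ring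
        _ ≤ _ := by gcongr <;> omega
    · rw [hV, hQ, ← hlen]
      calc _ = ((2 * K + 1) * (len + 1) * Fintype.card Γ ^ 2) * (Fintype.card G.V * q ^ 12) := by
            ring
        _ ≤ ((2 * K + 1) * (len + 1) * Fintype.card Γ ^ 2) * (A * Fintype.card G.Q) := by gcongr
        _ = _ := by ring

/-! ### Hopsets of gadgets -/

open Hopsets

section Hopset

variable {V : Type} {r : V → V → Prop}

theorem walk_append {l l' : List (V × V)} {G : WDigraph V} {u v x : V} (h : IsWalkFrom G u v l)
    (h' : IsWalkFrom G v x l') : IsWalkFrom G u x (l ++ l') := by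
  induction l generalizing u with
  | nil => obtain rfl : u = v := h; exact h'
  | cons e l ih => exact ⟨h.1, h.2.1, ih h.2.2⟩

theorem dist_ne_top [DecidableEq V] {H : Finset (V × V)} {β : ℕ} {ε : ℝ} {G : WDigraph V}
    (hH : IsHopset G β ε H) (hβ : 1 ≤ β) {e : V × V} (he : e ∈ H) :
    G.dist e.1 e.2 ≠ ⊤ := by
  refine ne_top_of_le_ne_top ?_ ((hH e.1 e.2).1.trans (iInf₂_le [e] ⟨⟨?_, rfl, rfl⟩, by simpa⟩))
  · exact ENNReal.ofReal_ne_top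
  · exact Finset.mem_union_right _ he

open Classical in
/-- The undirected unweighted graph generated by a relation, with both orientations of each edge. -/
noncomputable def ugraph [Fintype V] (r : V → V → Prop) : WDigraph V where
  edges := Finset.univ.filter fun e => r e.1 e.2 ∨ r e.2 e.1
  w := fun _ => 1

variable [Fintype V]

theorem mem_ugraph {e : V × V} : e ∈ (ugraph r).edges ↔ (r e.1 e.2 ∨ r e.2 e.1) := by
  simp [ugraph]

theorem ugraph_symmetric : (ugraph r).Symmetric := fun _ he =>
  ⟨mem_ugraph.2 (mem_ugraph.1 he).symm, rfl⟩

theorem ugraph_unweighted : (ugraph r).Unweighted := fun _ => rfl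

theorem walkWeight_ugraph (l : List (V × V)) :
    walkWeight (ugraph r) l = ENNReal.ofReal l.length := by
  have : l.map (ugraph r).w = List.replicate l.length 1 :=
    List.map_const' (b := (1 : ℝ)) (l := l)
  rw [walkWeight, this, List.sum_replicate, nsmul_eq_mul, mul_one]

theorem reach_of_walk {l : List (V × V)} {u v : V} (h : IsWalkFrom (ugraph r) u v l) :
    Reach r l.length u v := by
  induction l generalizing u with
  | nil => obtain rfl : u = v := h; exact Reach.refl _
  | cons e l ih =>
    obtain ⟨h1, rfl, h2⟩ := h
    have := (Reach.single (mem_ugraph.1 h1)).trans (ih h2)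
    rwa [add_comm] at this

theorem walk_of_reach {n : ℕ} {u v : V} (h : Reach r n u v) :
    ∃ l, IsWalkFrom (ugraph r) u v l ∧ l.length = n := by
  induction h with
  | refl x => exact ⟨[], rfl, rfl⟩
  | @step n x y z _ e ih =>
    obtain ⟨l, h1, h2⟩ := ih
    exact ⟨l ++ [(y, z)], walk_append h1 ⟨mem_ugraph.2 e, rfl, rfl⟩, by simp [h2]⟩

theorem dist_le_of_reach {n : ℕ} {u v : V} (h : Reach r n u v) :
    (ugraph r).dist u v ≤ ENNReal.ofReal n := by
  obtain ⟨l, h1, rfl⟩ := walk_of_reach h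
  rw [← walkWeight_ugraph (r := r)]
  exact iInf₂_le l h1

/-- Pairs which are not bad are shortcuts of weight at least their potential difference minus
`lam`. -/
theorem le_dist {lam : ℝ} {P : V → ℝ} {a b : V} (h : ¬ Bad r lam P a b) :
    ENNReal.ofReal (|P a - P b| - lam) ≤ (ugraph r).dist a b := by
  refine le_iInf₂ fun l hl => ?_
  rw [walkWeight_ugraph]
  apply ENNReal.ofReal_le_ofReal
  by_contra! hlt
  exact h ⟨_, reach_of_walk hl, by linarith⟩

variable [DecidableEq V] {H : Finset (V × V)} {β : ℕ} {ε lam : ℝ} {P : V → ℝ}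

/-- A potential for which no shortcut is bad bounds the lengths of walks with few edges. -/
theorem walk_gain (hH : IsHopset (ugraph r) β ε H) (hβ : 1 ≤ β)
    (hP : ∀ a b, r a b → |P a - P b| ≤ 1 + lam) (hB : ∀ e ∈ H, ¬ Bad r lam P e.1 e.2)
    {l : List (V × V)} {u v : V} (h : IsWalkFrom ((ugraph r).augment H) u v l) :
    |P u - P v| ≤ (l.map ((ugraph r).augment H).w).sum + l.length * lam := by
  induction l generalizing u with
  | nil => obtain rfl : u = v := h; simp
  | cons e l ih =>
    obtain ⟨h1, rfl, h2⟩ := h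
    have h3 := ih h2
    have h4 : |P e.1 - P e.2| ≤ ((ugraph r).augment H).w e + lam := by
      by_cases he : e ∈ H
      · have h5 : ((ugraph r).augment H).w e = ((ugraph r).dist e.1 e.2).toReal := if_pos he
        have h6 := (ENNReal.ofReal_le_iff_le_toReal (dist_ne_top hH hβ he)).1 (le_dist (hB e he))
        rw [h5]; linarith
      · have h5 : ((ugraph r).augment H).w e = 1 := if_neg he
        rw [h5]
        rcases mem_ugraph.1 ((Finset.mem_union.1 h1).resolve_right he) with h6 | h6
        · exact hP _ _ h6
        · rw [abs_sub_comm]; exact hP _ _ h6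
    have := abs_sub_le (P e.1) (P e.2) (P v)
    simp only [List.map_cons, List.sum_cons, List.length_cons]
    push_cast
    linarith

/-- A potential for which no shortcut is bad loses at most `lam` per hop. -/
theorem le_hopDist (hlam : 0 ≤ lam) (hH : IsHopset (ugraph r) β ε H) (hβ : 1 ≤ β)
    (hP : ∀ a b, r a b → |P a - P b| ≤ 1 + lam) (hB : ∀ e ∈ H, ¬ Bad r lam P e.1 e.2) (u v : V) :
    ENNReal.ofReal (|P u - P v| - β * lam) ≤ ((ugraph r).augment H).hopDist β u v := by
  refine le_iInf₂ fun l hl => ENNReal.ofReal_le_ofReal ?_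
  have h1 := walk_gain hH hβ hP hB hl.1
  have h2 : (l.length : ℝ) ≤ β := by exact_mod_cast hl.2
  nlinarith

end Hopset

/-- A hopset has to contain a bad shortcut for each of the pairs of ports, since otherwise walks of at
most `β` hops between the ports have weight at least `D + E - β * lam`, while the ports are at
distance `D`. -/
theorem card_le_of_hopset {D E kap β : ℕ} {lam ε : ℝ} (G : Gadget D E lam kap) {n : ℕ}
    (e : G.V ≃ Fin n) (hlam : 0 ≤ lam) (hε : 0 ≤ ε) (hβ : 1 ≤ β) (hE : β * lam + ε * D < E)
    {H : Finset (Fin n × Fin n)}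
    (hH : IsHopset (ugraph fun a b => G.r (e.symm a) (e.symm b)) β ε H) :
    Fintype.card G.Q ≤ H.card * kap := by
  classical
  have hback : ∀ {m a b}, Reach (fun a b => G.r (e.symm a) (e.symm b)) m a b →
      Reach G.r m (e.symm a) (e.symm b) := fun h => h.map e.symm fun _ _ h => h
  have key : ∀ q, ∃ x ∈ H, Bad G.r lam (G.pot q) (e.symm x.1) (e.symm x.2) := by
    intro q
    by_contra! hq
    have h1 := le_hopDist (P := fun a => G.pot q (e.symm a)) hlam hH hβ
      (fun a b h => G.pot_lip q _ _ h)
      (fun x hx ⟨m, h2, h3⟩ => hq x hx ⟨m, hback h2, h3⟩)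
      (e (G.port false (G.lab q false))) (e (G.port true (G.lab q true)))
    have h2 : Reach (fun a b => G.r (e.symm a) (e.symm b)) D (e (G.port false (G.lab q false)))
        (e (G.port true (G.lab q true))) := (G.reach q).map e fun _ _ h => by simpa using h
    have h3 := h1.trans ((hH _ _).2.trans (mul_le_mul_right (dist_le_of_reach h2) _))
    rw [← ENNReal.ofReal_mul (by linarith), ENNReal.ofReal_le_ofReal_iff (by positivity)] at h3
    simp only [Equiv.symm_apply_apply, G.pot_false, G.pot_true] at h3
    have h4 : |(0 : ℝ) - (D + E)| = D + E := by
      rw [zero_sub, abs_neg, abs_of_nonneg (by positivity)]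
    rw [h4] at h3
    linarith
  have hsub : (Finset.univ : Finset G.Q) ⊆ H.biUnion fun x =>
      Finset.univ.filter fun q => Bad G.r lam (G.pot q) (e.symm x.1) (e.symm x.2) := by
    intro q _
    obtain ⟨x, hx, h⟩ := key q
    simp only [Finset.mem_biUnion, Finset.mem_filter, Finset.mem_univ, true_and]
    exact ⟨x, hx, h⟩
  refine (Finset.card_le_card hsub).trans (Finset.card_biUnion_le_card_mul _ _ _ fun x _ => ?_)
  have := G.kill (e.symm x.1) (e.symm x.2)
  rwa [Set.ncard_eq_toFinset_card', Set.toFinset_ofPred] at this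

/-- Without hops nothing is reached, so a connected graph with two vertices has no hopset. -/
theorem no_hopset_zero {n : ℕ} (hn : 2 ≤ n) {ε : ℝ} {H : Finset (Fin n × Fin n)} :
    ¬ IsHopset (ugraph fun _ _ : Fin n => True) 0 ε H := by
  intro hH
  let u : Fin n := ⟨0, by omega⟩
  let v : Fin n := ⟨1, by omega⟩
  have h1 : ((ugraph fun _ _ : Fin n => True).augment H).hopDist 0 u v = ⊤ := by
    simp only [WDigraph.hopDist, iInf_eq_top]
    rintro l ⟨h, hl⟩
    obtain rfl : l = [] := List.length_eq_zero_iff.1 (Nat.le_zero.1 hl)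
    have : u = v := h
    simp [u, v] at this
  have h2 := (hH u v).2
  rw [h1, top_le_iff] at h2
  refine ENNReal.mul_ne_top ENNReal.ofReal_ne_top ?_ h2
  exact ne_top_of_le_ne_top ENNReal.ofReal_ne_top
    (dist_le_of_reach (Reach.single (Or.inl trivial)))

/-- The choice of `K`, as `⌊x⌋` with `x = 1 / (12 * ε * (t + 1))`. The constant `1 / 48` is chosen such
that `β < (x / 4) ^ (t + 1)`; then `1 ≤ β` implies `4 < x`. -/
theorem exists_K {t β : ℕ} {ε : ℝ} (hε : 0 < ε) (hβ : 1 ≤ β)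
    (h : (β : ℝ) < ((1 / 48) / (ε * (t + 1))) ^ (t + 1)) :
    ∃ K : ℕ, 1 ≤ K ∧ ε * (12 * K * (t + 1)) ≤ 1 ∧
      β * ((2 : ℝ) ^ t / (2 * K : ℕ)) < ((2 * K - 1) ^ t : ℕ) / 2 := by
  obtain ⟨x, hx⟩ : ∃ x : ℝ, x = 1 / (12 * (ε * (t + 1))) := ⟨_, rfl⟩
  have hpos : 0 < ε * (t + 1) := by positivity
  have hx4 : (1 / 48) / (ε * (t + 1)) = x / 4 := by rw [hx]; field_simp; norm_num
  have hx0 : 0 ≤ x := by rw [hx]; positivity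
  rw [hx4] at h
  have hx1 : 4 ≤ x := by
    by_contra! hlt
    have h1 : (x / 4) ^ (t + 1) ≤ 1 := pow_le_one₀ (by positivity) (by linarith)
    have h2 : (1 : ℝ) ≤ β := by exact_mod_cast hβ
    linarith
  have hK1 : 1 ≤ ⌊x⌋₊ := Nat.le_floor (by push_cast; linarith)
  refine ⟨⌊x⌋₊, hK1, ?_, ?_⟩
  · have h1 := Nat.floor_le hx0
    calc ε * (12 * ⌊x⌋₊ * (t + 1)) = ⌊x⌋₊ * (12 * (ε * (t + 1))) := by ring
      _ ≤ x * (12 * (ε * (t + 1))) := by gcongr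
      _ = 1 := by rw [hx]; field_simp
  · have h1 := Nat.lt_floor_add_one x
    generalize ⌊x⌋₊ = K at hK1 h1
    have hK : (1 : ℝ) ≤ K := by exact_mod_cast hK1
    rw [Nat.cast_pow, Nat.cast_sub (by omega : 1 ≤ 2 * K)]
    push_cast
    have h2 : (x / 4) ^ (t + 1) ≤ K * ((2 * K - 1) / 2) ^ t := by
      rw [pow_succ']
      gcongr <;> linarith
    have h3 : (β : ℝ) < K * ((2 * K - 1) / 2) ^ t := h.trans_le h2
    rw [div_pow, ← mul_div_assoc, lt_div_iff₀ (by positivity)] at h3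
    rw [← mul_div_assoc, div_lt_iff₀ (by positivity)]
    linarith

end HopsetLB

open Hopsets in
/-- There is a constant `d > 0` such that for every integer `k ≥ 2`,
every `ε ∈ (0,1)` and every hopbound `β < (d/(ε·(k−1)))^{k−1}`, there are arbitrarily
large `n` and `n`-vertex unweighted undirected graphs `G` for which every
`(β,ε)`-hopset has more than `n^{1+1/(2^k−1)}/2` edges. -/
theorem stmt_18 :
    ∃ d : ℝ, 0 < d ∧ ∀ k : ℕ, 2 ≤ k → ∀ ε : ℝ, ε ∈ Set.Ioo (0 : ℝ) 1 →
      ∀ β : ℕ, (β : ℝ) < (d / (ε * ((k : ℝ) - 1))) ^ (k - 1) →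
      ∀ N : ℕ, ∃ n ≥ N, ∃ G : WDigraph (Fin n), G.Symmetric ∧ G.Unweighted ∧
        ∀ H : Finset (Fin n × Fin n), IsHopset G β ε H →
          (n : ℝ) ^ (1 + 1 / (2 ^ k - 1 : ℝ)) / 2 < (H.card : ℝ) := by
  refine ⟨1 / 48, by norm_num, fun k hk ε hε β hβ N => ?_⟩
  obtain ⟨t, rfl⟩ : ∃ t, k = t + 2 := ⟨k - 2, by omega⟩
  rcases Nat.eq_zero_or_pos β with rfl | hβ1
  · exact ⟨max N 2, le_max_left _ _, _, HopsetLB.ugraph_symmetric, HopsetLB.ugraph_unweighted,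
      fun H hH => absurd hH (HopsetLB.no_hopset_zero (le_max_right _ _))⟩
  rw [show t + 2 - 1 = t + 1 by omega,
    show ((t + 2 : ℕ) : ℝ) - 1 = t + 1 by push_cast; ring] at hβ
  obtain ⟨K, hK, hKε, hKβ⟩ := HopsetLB.exists_K hε.1 hβ1 hβ
  obtain ⟨D, A, q₀, hD, hlev⟩ := HopsetLB.exists_level hK t
  obtain ⟨E, hE⟩ : ∃ E, E = (2 * K - 1) ^ t := ⟨_, rfl⟩
  rw [← hE] at hD hKβ
  -- the last term absorbs the constants in the bounds on the number of pairs
  obtain ⟨q, hq⟩ : ∃ q, q = max (max q₀ 1) (max N (A * 2 ^ t)) := ⟨_, rfl⟩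
  have hq1 : 1 ≤ q := by omega
  obtain ⟨G, -, gV, gq, gQ⟩ := hlev E _ _ hE rfl rfl q (by omega) hq1
  have e := Fintype.equivFin G.V
  refine ⟨Fintype.card G.V, by omega, HopsetLB.ugraph fun a b => G.r (e.symm a) (e.symm b),
    HopsetLB.ugraph_symmetric, HopsetLB.ugraph_unweighted, fun H hH => ?_⟩
  -- the excess `E` exceeds both the loss by hops and the allowed stretch, as each is below `E / 2`
  have hED : (β : ℝ) * ((2 : ℝ) ^ t / (2 * K : ℕ)) + ε * D < E := by
    have h1 : (D : ℝ) ≤ 6 * K * (t + 1) * E := by exact_mod_cast hD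
    have h2 : ε * D ≤ E / 2 := by
      calc ε * D ≤ ε * (6 * K * (t + 1) * E) := by have := hε.1; gcongr
        _ = ε * (12 * K * (t + 1)) * (E / 2) := by ring
        _ ≤ 1 * (E / 2) := by gcongr
        _ = E / 2 := one_mul _
    linarith
  have hcard := HopsetLB.card_le_of_hopset G e (by positivity) hε.1.le hβ1 hED hH
  clear hH
  generalize Fintype.card G.V = n at *
  have hn : n * q ^ 11 ≤ H.card := by
    have h1 : n * q ^ 11 * q ≤ H.card * q := by
      calc n * q ^ 11 * q = n * q ^ 12 := by ring
        _ ≤ A * Fintype.card G.Q := gQ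
        _ ≤ A * (H.card * 2 ^ t) := by gcongr
        _ = H.card * (A * 2 ^ t) := by ring
        _ ≤ H.card * q := by gcongr; omega
    exact Nat.le_of_mul_le_mul_right h1 hq1
  have hn0 : 0 < n := by omega
  have h2t : (1 : ℝ) < 2 ^ (t + 2) := one_lt_pow₀ (by norm_num) (by omega)
  have hroot : (n : ℝ) ^ (1 / (2 ^ (t + 2) - 1 : ℝ)) ≤ (q : ℝ) ^ 11 := by
    rw [one_div, Real.rpow_inv_le_iff_of_pos (by positivity) (by positivity) (by linarith)]
    have h1 := gV (11 * (2 ^ (t + 2) - 2)) (by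
      have := Nat.one_le_two_pow (n := t); rw [pow_add]; omega)
    have h2 : n ≤ (q ^ 11) ^ (2 ^ (t + 2) - 1) := by
      rw [← pow_mul]
      exact h1.trans (Nat.pow_le_pow_right hq1 (by omega))
    have h3 : ((2 : ℝ) ^ (t + 2) - 1) = ((2 ^ (t + 2) - 1 : ℕ) : ℝ) := by
      rw [Nat.cast_sub Nat.one_le_two_pow]; push_cast; ring
    rw [h3, Real.rpow_natCast]
    exact_mod_cast h2
  have hn' : (n : ℝ) * (q : ℝ) ^ 11 ≤ H.card := by exact_mod_cast hn
  have hpos : (0 : ℝ) < (n : ℝ) * (q : ℝ) ^ 11 := by positivity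
  rw [Real.rpow_add (by positivity), Real.rpow_one]
  have := mul_le_mul_of_nonneg_left hroot (Nat.cast_nonneg (α := ℝ) n)
  linarith
end
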